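/- Let n ≥ 2, m > 1 and δ > 1/2. There exists a constant C > 0 such that for every Schwartz function f(t,x) on ℝ^{1+n}, ‖⟨x⟩^{-δ} |D_x|^{m-1} Gf‖_{L²(ℝ^{1+n})} ≤ C ‖⟨x⟩^{δ} f‖_{L²(ℝ^{1+n})}, where Gf(t,x) = ∫₀ᵗ e^{i(t-s)p(D_x)} f(s,·)(x) ds. -/

import Mathlib

open MeasureTheory Real Complex RealInnerProductSpace

noncomputable section

/-- Fourier transform with convention `(2π)^(-n/2) ∫ e^(-ix·ξ) f(x) dx`. -/
def FT (n : ℕ) (f : EuclideanSpace ℝ (Fin n) → ℂ) (ξ : EuclideanSpace ℝ (Fin n)) : ℂ :=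
  ((2 * π) ^ (-(n : ℝ) / 2) : ℝ) •
    ∫ x : EuclideanSpace ℝ (Fin n), Complex.exp (-Complex.I * ((⟪x, ξ⟫ : ℝ) : ℂ)) * f x

/-- Inverse Fourier transform. -/
def IFT (n : ℕ) (F : EuclideanSpace ℝ (Fin n) → ℂ) (x : EuclideanSpace ℝ (Fin n)) : ℂ :=
  ((2 * π) ^ (-(n : ℝ) / 2) : ℝ) •
    ∫ ξ : EuclideanSpace ℝ (Fin n), Complex.exp (Complex.I * ((⟪x, ξ⟫ : ℝ) : ℂ)) * F ξ

/-- Fourier multiplier with symbol `q`: `q(D_x) f = IFT (q · FT f)`. -/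
def mult (n : ℕ) (q : EuclideanSpace ℝ (Fin n) → ℂ) (f : EuclideanSpace ℝ (Fin n) → ℂ) :
    EuclideanSpace ℝ (Fin n) → ℂ :=
  IFT n fun ξ => q ξ * FT n f ξ

section Plancherel

open FourierTransform SchwartzMap
open scoped ENNReal

variable {V : Type*} [NormedAddCommGroup V] [InnerProductSpace ℝ V] [FiniteDimensional ℝ V]
  [MeasurableSpace V] [BorelSpace V]

/-- The Fourier integral is self-adjoint on integrable functions. -/
theorem integral_fourier_mul_eq_of_integrable {f g : V → ℂ} (hf : Integrable f)
    (hg : Integrable g) : ∫ ξ, 𝓕 f ξ * g ξ = ∫ x, f x * 𝓕 g x := by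
  simpa using! VectorFourier.integral_fourierIntegral_smul_eq_flip (L := innerₗ V)
    Real.continuous_fourierChar continuous_inner hf hg

theorem continuous_fourier_of_integrable {f : V → ℂ} (hf : Integrable f) : Continuous (𝓕 f) :=
  VectorFourier.fourierIntegral_continuous Real.continuous_fourierChar continuous_inner hf

theorem norm_fourier_le_integral_norm (f : V → ℂ) (ξ : V) : ‖𝓕 f ξ‖ ≤ ∫ x, ‖f x‖ :=
  VectorFourier.norm_fourierIntegral_le_integral_norm _ _ _ _ _

/-- The `L²` Fourier transform agrees with the Fourier integral on `L¹ ∩ L²`. -/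
theorem fourier_toLp_ae_eq {f : V → ℂ} (hf : Integrable f) (hf2 : MemLp f 2) :
    ((𝓕 (hf2.toLp f) : Lp ℂ 2 (volume : Measure V)) : V → ℂ) =ᵐ[volume] 𝓕 f := by
  refine ae_eq_of_integral_contDiff_smul_eq ?_ ?_ ?_
  · exact (Lp.memLp _).locallyIntegrable (by norm_num)
  · exact (continuous_fourier_of_integrable hf).locallyIntegrable
  intro g hg hgc
  have hgc' : HasCompactSupport (fun x => (g x : ℂ)) :=
    hgc.comp_left (g := fun x : ℝ => (x : ℂ)) (by simp)
  have hg' : ContDiff ℝ (⊤ : ℕ∞) (fun x => (g x : ℂ)) := ofRealCLM.contDiff.comp hg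
  let G : 𝓢(V, ℂ) := hgc'.toSchwartzMap hg'
  have hG : ∀ x, G x = (g x : ℂ) := fun x => rfl
  have h := congrArg (fun T => T G) (Lp.fourier_toTemperedDistribution_eq (hf2.toLp f))
  simp only [TemperedDistribution.fourier_apply, Lp.toTemperedDistribution_apply] at h
  calc ∫ x, g x • ((𝓕 (hf2.toLp f) : Lp ℂ 2 (volume : Measure V)) : V → ℂ) x
      = ∫ x, G x • ((𝓕 (hf2.toLp f) : Lp ℂ 2 (volume : Measure V)) : V → ℂ) x := by simp [hG]
    _ = ∫ x, (𝓕 G) x • (hf2.toLp f) x := h.symm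
    _ = ∫ x, 𝓕 (G : V → ℂ) x * f x := by
        refine integral_congr_ae ?_
        filter_upwards [hf2.coeFn_toLp] with x hx
        rw [hx, SchwartzMap.fourier_coe, smul_eq_mul]
    _ = ∫ x, G x * 𝓕 f x := integral_fourier_mul_eq_of_integrable G.integrable hf
    _ = ∫ x, g x • 𝓕 f x := by simp [hG]

theorem memLp_two_fourier {f : V → ℂ} (hf : Integrable f) (hf2 : MemLp f 2) :
    MemLp (𝓕 f) 2 :=
  (memLp_congr_ae (fourier_toLp_ae_eq hf hf2)).1 (Lp.memLp _)

/-- Plancherel's theorem for functions in `L¹ ∩ L²`. -/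
theorem lintegral_enorm_sq_fourier {f : V → ℂ} (hf : Integrable f) (hf2 : MemLp f 2) :
    ∫⁻ ξ, ‖𝓕 f ξ‖ₑ ^ 2 = ∫⁻ x, ‖f x‖ₑ ^ 2 := by
  have key : eLpNorm (𝓕 f) 2 volume = eLpNorm f 2 volume := by
    rw [← eLpNorm_congr_ae (fourier_toLp_ae_eq hf hf2), ← eLpNorm_congr_ae hf2.coeFn_toLp,
      ← Lp.enorm_def, ← Lp.enorm_def, ← ofReal_norm, ← ofReal_norm, Lp.norm_fourier_eq]
  have h2 : ∀ g : V → ℂ, eLpNorm g 2 volume ^ 2 = ∫⁻ x, ‖g x‖ₑ ^ 2 := by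
    intro g
    have := eLpNorm_nnreal_pow_eq_lintegral (μ := (volume : Measure V)) (f := g) (p := 2)
      (by norm_num)
    simpa using this
  rw [← h2, ← h2, key]

/-- Parseval's identity for functions in `L¹ ∩ L²`. -/
theorem integral_fourier_mul_conj_fourier {f g : V → ℂ} (hf : Integrable f) (hf2 : MemLp f 2)
    (hg : Integrable g) (hg2 : MemLp g 2) :
    ∫ ξ, 𝓕 f ξ * (starRingEnd ℂ) (𝓕 g ξ) = ∫ x, f x * (starRingEnd ℂ) (g x) := by
  have h := Lp.inner_fourier_eq (hg2.toLp g) (hf2.toLp f)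
  rw [L2.inner_def, L2.inner_def] at h
  calc ∫ ξ, 𝓕 f ξ * (starRingEnd ℂ) (𝓕 g ξ)
      = ∫ ξ, inner ℂ (((𝓕 (hg2.toLp g) : Lp ℂ 2 (volume : Measure V)) : V → ℂ) ξ)
          (((𝓕 (hf2.toLp f) : Lp ℂ 2 (volume : Measure V)) : V → ℂ) ξ) := by
        refine integral_congr_ae ?_
        filter_upwards [fourier_toLp_ae_eq hf hf2, fourier_toLp_ae_eq hg hg2] with x h1 h2
        rw [h1, h2]; simp
    _ = _ := h
    _ = _ := by
        refine integral_congr_ae ?_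
        filter_upwards [hf2.coeFn_toLp, hg2.coeFn_toLp] with x h1 h2
        rw [h1, h2]; simp

end Plancherel

section RadialSingularIntegral

open Set

/-- Convexity bound for powers: `t ↦ t ^ m` grows at least linearly away from a base point. -/
theorem rpow_sub_one_mul_abs_sub_le {m : ℝ} (hm : 1 < m) {r s : ℝ} (hr : 0 < r) (hs : 0 < s) :
    s ^ (m - 1) * |r - s| ≤ |r ^ m - s ^ m| := by
  have e : ∀ t : ℝ, 0 < t → t ^ m = t ^ (m - 1) * t := fun t ht => by
    rw [← rpow_add_one ht.ne']; ring_nf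
  rw [e r hr, e s hs]
  rcases le_total s r with h | h
  · have h1 : s ^ (m - 1) ≤ r ^ (m - 1) := rpow_le_rpow hs.le h (by linarith)
    rw [abs_of_nonneg (by linarith), abs_of_nonneg (by nlinarith [rpow_nonneg hs.le (m - 1)])]
    nlinarith
  · have h1 : r ^ (m - 1) ≤ s ^ (m - 1) := rpow_le_rpow hr.le h (by linarith)
    rw [abs_of_nonpos (by linarith), abs_of_nonpos (by nlinarith [rpow_nonneg hs.le (m - 1)])]
    nlinarith

theorem norm_sub_sub_mul_I_ge (τ x ε : ℝ) : |x - τ| ≤ ‖(τ : ℂ) - x - ε * I‖ := by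
  have := abs_re_le_norm ((τ : ℂ) - x - ε * I)
  simp at this
  rwa [abs_sub_comm]

theorem sub_sub_mul_I_ne_zero {τ x ε : ℝ} (hε : ε ≠ 0) : (τ : ℂ) - x - ε * I ≠ 0 := by
  intro h
  have := congrArg Complex.im h
  simp at this
  exact hε this

theorem integrableOn_norm_div_of_le {G : ℝ → ℂ} {A κ : ℝ} (hκ : 0 < κ)
    (hG : IntegrableOn G (Ioi 0)) (hA : ∫ r in Ioi (0 : ℝ), ‖G r‖ ≤ A)
    (h0 : ∀ r, 0 < r → ‖G r‖ ≤ A * r ^ κ) :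
    IntegrableOn (fun r => ‖G r‖ / r) (Ioi 0) ∧
      ∫ r in Ioi (0 : ℝ), ‖G r‖ / r ≤ A * (1 / κ + 1) := by
  have hmeas : AEStronglyMeasurable (fun r => ‖G r‖ / r) (volume.restrict (Ioi 0)) :=
    (hG.aestronglyMeasurable.norm.aemeasurable.div aemeasurable_id).aestronglyMeasurable
  have hpow : IntegrableOn (fun r : ℝ => A * r ^ (κ - 1)) (Ioc 0 1) := by
    rw [← intervalIntegrable_iff_integrableOn_Ioc_of_le zero_le_one]
    exact (intervalIntegral.intervalIntegrable_rpow' (by linarith)).const_mul A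
  have b1 : ∀ᵐ r ∂(volume.restrict (Ioc (0 : ℝ) 1)), ‖‖G r‖ / r‖ ≤ A * r ^ (κ - 1) := by
    filter_upwards [ae_restrict_mem measurableSet_Ioc] with r hr
    have hr0 : 0 < r := hr.1
    rw [Real.norm_of_nonneg (by positivity), rpow_sub_one hr0.ne', ← mul_div_assoc]
    gcongr
    exact h0 r hr0
  have b2 : ∀ᵐ r ∂(volume.restrict (Ioi (1 : ℝ))), ‖‖G r‖ / r‖ ≤ ‖G r‖ := by
    filter_upwards [ae_restrict_mem measurableSet_Ioi] with r hr
    have hr0 : 1 < r := hr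
    rw [Real.norm_of_nonneg (by positivity)]
    exact div_le_self (norm_nonneg _) hr0.le
  have sub1 : Ioc (0 : ℝ) 1 ⊆ Ioi 0 := fun x hx => hx.1
  have sub2 : Ioi (1 : ℝ) ⊆ Ioi 0 := Ioi_subset_Ioi zero_le_one
  have hG2 : IntegrableOn (fun r => ‖G r‖) (Ioi 1) := (hG.mono_set sub2).norm
  have i1 : IntegrableOn (fun r => ‖G r‖ / r) (Ioc 0 1) :=
    hpow.mono' (hmeas.mono_set sub1) b1
  have i2 : IntegrableOn (fun r => ‖G r‖ / r) (Ioi 1) :=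
    hG2.mono' (hmeas.mono_set sub2) b2
  have hU : Ioi (0 : ℝ) = Ioc 0 1 ∪ Ioi 1 := (Ioc_union_Ioi_eq_Ioi zero_le_one).symm
  refine ⟨by rw [hU]; exact i1.union i2, ?_⟩
  rw [hU, setIntegral_union (Ioc_disjoint_Ioi le_rfl) measurableSet_Ioi i1 i2]
  have e1 : ∫ r in Ioc (0 : ℝ) 1, ‖G r‖ / r ≤ A * (1 / κ) := by
    calc ∫ r in Ioc (0 : ℝ) 1, ‖G r‖ / r ≤ ∫ r in Ioc (0 : ℝ) 1, A * r ^ (κ - 1) := by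
          refine integral_mono_ae i1 hpow ?_
          filter_upwards [b1] with r hr using (le_abs_self _).trans hr
      _ = A * (1 / κ) := by
          rw [integral_const_mul, ← intervalIntegral.integral_of_le zero_le_one,
            integral_rpow (Or.inl (by linarith))]
          simp [hκ.ne']
  have e2 : ∫ r in Ioi (1 : ℝ), ‖G r‖ / r ≤ A := by
    calc ∫ r in Ioi (1 : ℝ), ‖G r‖ / r ≤ ∫ r in Ioi (1 : ℝ), ‖G r‖ := by
          refine integral_mono_ae i2 hG2 ?_
          filter_upwards [b2] with r hr using (le_abs_self _).trans hr
      _ ≤ ∫ r in Ioi (0 : ℝ), ‖G r‖ :=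
          setIntegral_mono_set hG.norm (Filter.Eventually.of_forall fun _ => norm_nonneg _)
            (Filter.Eventually.of_forall sub2)
      _ ≤ A := hA
  linarith

theorem norm_integral_log_kernel_le {m τ ε h r₁ r₂ : ℝ} (hm : 1 < m) (hε : ε ≠ 0)
    (hr₁ : 0 < r₁) (h12 : r₁ ≤ r₂) (e₁ : r₁ ^ m = τ - h) (e₂ : r₂ ^ m = τ + h) :
    ‖∫ r in r₁..r₂, ((r ^ (m - 1) : ℝ) : ℂ) / ((τ : ℂ) - ((r ^ m : ℝ) : ℂ) - ε * I)‖
      ≤ 2 * π := by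
  have hpos : ∀ r ∈ uIcc r₁ r₂, 0 < r := fun r hr => by
    rw [uIcc_of_le h12] at hr; exact hr₁.trans_le hr.1
  have hslit : ∀ x : ℝ, (τ : ℂ) - (x : ℂ) - ε * I ∈ slitPlane := fun x => by
    rw [mem_slitPlane_iff]; right; simpa using hε
  have hder : ∀ r ∈ uIcc r₁ r₂, HasDerivAt
      (fun r : ℝ => (-(1 / m) : ℂ) * Complex.log ((τ : ℂ) - ((r ^ m : ℝ) : ℂ) - ε * I))
      (((r ^ (m - 1) : ℝ) : ℂ) / ((τ : ℂ) - ((r ^ m : ℝ) : ℂ) - ε * I)) r := by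
    intro r hr
    have hr0 := hpos r hr
    have d1 : HasDerivAt (fun r : ℝ => ((r ^ m : ℝ) : ℂ)) ((m * r ^ (m - 1) : ℝ) : ℂ) r :=
      (Real.hasDerivAt_rpow_const (Or.inl hr0.ne')).ofReal_comp
    have d2 := ((d1.const_sub (τ : ℂ)).sub_const (ε * I)).clog_real (hslit (r ^ m))
    refine (d2.const_mul (-(1 / m) : ℂ)).congr_deriv ?_
    have hm0 : (m : ℂ) ≠ 0 := by exact_mod_cast (by linarith : m ≠ 0)
    have hz := sub_sub_mul_I_ne_zero (τ := τ) (x := r ^ m) hε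
    rw [ofReal_mul]
    field_simp
  have hcont : ContinuousOn (fun r : ℝ => ((r ^ (m - 1) : ℝ) : ℂ) /
      ((τ : ℂ) - ((r ^ m : ℝ) : ℂ) - ε * I)) (uIcc r₁ r₂) := by
    have hc : ∀ p : ℝ, ContinuousOn (fun r : ℝ => ((r ^ p : ℝ) : ℂ)) (uIcc r₁ r₂) := fun p =>
      continuous_ofReal.comp_continuousOn
        (continuousOn_id.rpow_const fun r hr => Or.inl (hpos r hr).ne')
    exact (hc _).div ((continuousOn_const.sub (hc _)).sub continuousOn_const)
      fun r _ => sub_sub_mul_I_ne_zero hε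
  rw [intervalIntegral.integral_eq_sub_of_hasDerivAt hder hcont.intervalIntegrable,
    ← mul_sub, norm_mul, e₁, e₂]
  have hn : ‖(τ : ℂ) - ((τ + h : ℝ) : ℂ) - ε * I‖ = ‖(τ : ℂ) - ((τ - h : ℝ) : ℂ) - ε * I‖ := by
    have l : (τ : ℂ) - ((τ + h : ℝ) : ℂ) - ε * I = -(starRingEnd ℂ) ((τ : ℂ) -
        ((τ - h : ℝ) : ℂ) - ε * I) := by
      apply Complex.ext <;> simp
    rw [l, norm_neg, RCLike.norm_conj]
  have hlog : Complex.log ((τ : ℂ) - ((τ + h : ℝ) : ℂ) - ε * I) -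
      Complex.log ((τ : ℂ) - ((τ - h : ℝ) : ℂ) - ε * I) =
      ((arg ((τ : ℂ) - ((τ + h : ℝ) : ℂ) - ε * I) -
        arg ((τ : ℂ) - ((τ - h : ℝ) : ℂ) - ε * I) : ℝ) : ℂ) * I := by
    rw [Complex.log, Complex.log, hn]; push_cast; ring
  rw [hlog, norm_mul, norm_I, mul_one, norm_real]
  have ha := abs_arg_le_pi ((τ : ℂ) - ((τ + h : ℝ) : ℂ) - ε * I)
  have hb := abs_arg_le_pi ((τ : ℂ) - ((τ - h : ℝ) : ℂ) - ε * I)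
  have hm1 : ‖(-(1 / m) : ℂ)‖ ≤ 1 := by
    rw [norm_neg, norm_div, norm_one, norm_real, Real.norm_of_nonneg (by linarith)]
    rw [div_le_one (by linarith)]; exact hm.le
  have := abs_sub (arg ((τ : ℂ) - ((τ + h : ℝ) : ℂ) - ε * I))
    (arg ((τ : ℂ) - ((τ - h : ℝ) : ℂ) - ε * I))
  calc _ ≤ 1 * (2 * π) := by
        apply mul_le_mul hm1 _ (norm_nonneg _) zero_le_one
        rw [Real.norm_eq_abs]; linarith
    _ = 2 * π := one_mul _

/-- Away from the resonant radius the radial resolvent kernel is bounded by `3 / r + 4`. -/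
theorem kernel_le_of_far {m r₀ r : ℝ} (hm : 1 < m) (hr₀ : 0 < r₀) (hr : 0 < r)
    (hfar : min 1 r₀⁻¹ / 2 * r₀ ^ m ≤ |r ^ m - r₀ ^ m|) (hne : 0 < |r ^ m - r₀ ^ m|) :
    r ^ (m - 1) / |r ^ m - r₀ ^ m| ≤ 3 / r + 4 := by
  set D := |r ^ m - r₀ ^ m| with hD
  have e : r ^ m = r ^ (m - 1) * r := by rw [← rpow_add_one hr.ne']; ring_nf
  have hrp : 0 < r ^ (m - 1) := rpow_pos_of_pos hr _
  rw [div_le_iff₀ hne]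
  suffices h : r ^ m ≤ (3 + 4 * r) * D by
    rw [e] at h
    have : r ^ (m - 1) ≤ (3 + 4 * r) * D / r := by rwa [le_div_iff₀ hr]
    refine this.trans (le_of_eq ?_)
    field_simp
  rcases le_total (r₀ / 2) r with h | h
  · have h1 : r ^ m ≤ r₀ ^ m + D := by
      have := le_abs_self (r ^ m - r₀ ^ m); linarith
    have h2 : r₀ ^ m ≤ 2 * (1 + r₀) * D := by
      have hq : 1 / (1 + r₀) ≤ min 1 r₀⁻¹ := by
        apply le_min
        · rw [div_le_one (by linarith)]; linarith
        · rw [one_div]; exact inv_anti₀ hr₀ (by linarith)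
      have h3 : 1 / (1 + r₀) / 2 * r₀ ^ m ≤ D := le_trans (by gcongr) hfar
      calc r₀ ^ m = 2 * (1 + r₀) * (1 / (1 + r₀) / 2 * r₀ ^ m) := by field_simp
        _ ≤ _ := by gcongr
    nlinarith
  · have h1 := rpow_sub_one_mul_abs_sub_le hm hr hr₀
    have h2 : r ^ (m - 1) ≤ r₀ ^ (m - 1) := rpow_le_rpow hr.le (by linarith) (by linarith)
    have h3 : r ≤ |r - r₀| := by rw [abs_sub_comm]; exact le_trans (by linarith) (le_abs_self _)
    have h4 : r ^ m ≤ D := by rw [e]; exact (mul_le_mul h2 h3 hr.le (by positivity)).trans h1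
    nlinarith

theorem measurable_radial_kernel (m τ ε : ℝ) : Measurable (fun r : ℝ =>
    ((r ^ (m - 1) : ℝ) : ℂ) / ((τ : ℂ) - ((r ^ m : ℝ) : ℂ) - ε * I)) := by
  fun_prop

/-- Uniform bound for the one-dimensional resolvent integral of a Hölder continuous density. -/
theorem exists_norm_integral_radial_kernel_le {m κ : ℝ} (hm : 1 < m) (hκ : 0 < κ) :
    ∃ C : ℝ, 0 ≤ C ∧ ∀ (τ ε : ℝ), ε ≠ 0 → ∀ (G : ℝ → ℂ) (A : ℝ), 0 ≤ A →
      IntegrableOn G (Ioi 0) → ∫ r in Ioi (0 : ℝ), ‖G r‖ ≤ A →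
      (∀ r, 0 < r → ‖G r‖ ≤ A) → (∀ r, 0 < r → ‖G r‖ ≤ A * r ^ κ) →
      (∀ r r₀, 0 < r₀ → |r - r₀| ≤ r₀ / 2 → ‖G r - G r₀‖ ≤ A * |r - r₀| ^ κ) →
      ‖∫ r in Ioi (0 : ℝ), ((r ^ (m - 1) : ℝ) : ℂ) /
        ((τ : ℂ) - ((r ^ m : ℝ) : ℂ) - ε * I) * G r‖ ≤ C * A := by
  set L : ℝ := ∫ x in (-1 : ℝ)..1, |x| ^ (κ - 1) with hL
  have hLint : IntervalIntegrable (fun x : ℝ => |x| ^ (κ - 1)) volume (-1) 1 := by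
    have h01 : IntervalIntegrable (fun x : ℝ => |x| ^ (κ - 1)) volume 0 1 := by
      refine (intervalIntegral.intervalIntegrable_rpow' (a := 0) (b := 1)
        (by linarith : -1 < κ - 1)).congr ?_
      intro x hx
      rw [uIoc_of_le zero_le_one] at hx
      simp only
      rw [abs_of_pos hx.1]
    have h10 : IntervalIntegrable (fun x : ℝ => |x| ^ (κ - 1)) volume (-1) 0 := by
      have := h01.comp_mul_left (c := -1)
      simp at this
      exact this.symm
    exact h10.trans h01
  have hL0 : 0 ≤ L := intervalIntegral.integral_nonneg (by norm_num) fun x _ => by positivity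
  set c : ℝ := (3 / 2 : ℝ) ^ (m - 1) with hc
  have hc0 : 0 ≤ c := by positivity
  set C₀ : ℝ := 3 * (1 / κ + 1) + 4 with hC₀
  have hC₀0 : 0 ≤ C₀ := by positivity
  refine ⟨C₀ + c * L + 2 * π, by positivity, ?_⟩
  intro τ ε hε G A hA hGi hGA hG1 hGκ hGh
  set k : ℝ → ℂ := fun r => ((r ^ (m - 1) : ℝ) : ℂ) / ((τ : ℂ) - ((r ^ m : ℝ) : ℂ) - ε * I)
    with hk
  have hkmeas : Measurable k := measurable_radial_kernel m τ ε
  obtain ⟨hGdi, hGd⟩ := integrableOn_norm_div_of_le hκ hGi hGA hGκ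
  have hknorm : ∀ r, 0 < r → ‖k r‖ ≤ r ^ (m - 1) / |r ^ m - τ| ∨ r ^ m = τ := by
    intro r hr
    by_cases h : r ^ m = τ
    · exact Or.inr h
    left
    rw [hk]; simp only
    rw [norm_div, norm_real, Real.norm_of_nonneg (by positivity)]
    have : 0 < |r ^ m - τ| := abs_pos.2 (sub_ne_zero.2 h)
    gcongr
    exact norm_sub_sub_mul_I_ge τ (r ^ m) ε
  -- the contribution of a measurable set on which the kernel is bounded by `3 / r + 4`
  have far : ∀ S : Set ℝ, MeasurableSet S → S ⊆ Ioi 0 → (∀ r ∈ S, ‖k r‖ ≤ 3 / r + 4) →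
      IntegrableOn (fun r => k r * G r) S ∧ ‖∫ r in S, k r * G r‖ ≤ C₀ * A := by
    intro S hS hS0 hb
    have hdom : IntegrableOn (fun r => 3 * (‖G r‖ / r) + 4 * ‖G r‖) (Ioi 0) :=
      (hGdi.const_mul 3).add (hGi.norm.const_mul 4)
    have hb' : ∀ᵐ r ∂(volume.restrict S), ‖k r * G r‖ ≤ 3 * (‖G r‖ / r) + 4 * ‖G r‖ := by
      filter_upwards [ae_restrict_mem hS] with r hr
      rw [norm_mul]
      calc ‖k r‖ * ‖G r‖ ≤ (3 / r + 4) * ‖G r‖ := by gcongr; exact hb r hr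
        _ = _ := by ring
    have hi : IntegrableOn (fun r => k r * G r) S :=
      (hdom.mono_set hS0).mono' (hkmeas.aestronglyMeasurable.mul
        (hGi.aestronglyMeasurable.mono_set hS0)) hb'
    refine ⟨hi, ?_⟩
    calc ‖∫ r in S, k r * G r‖ ≤ ∫ r in S, (3 * (‖G r‖ / r) + 4 * ‖G r‖) :=
          norm_integral_le_of_norm_le (hdom.mono_set hS0) hb'
      _ ≤ ∫ r in Ioi (0 : ℝ), (3 * (‖G r‖ / r) + 4 * ‖G r‖) := by
          refine setIntegral_mono_set hdom ?_ (Filter.Eventually.of_forall hS0)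
          filter_upwards [ae_restrict_mem measurableSet_Ioi] with r hr
          have : (0 : ℝ) < r := hr
          simp only [Pi.zero_apply]; positivity
      _ = 3 * (∫ r in Ioi (0 : ℝ), ‖G r‖ / r) + 4 * ∫ r in Ioi (0 : ℝ), ‖G r‖ := by
          rw [integral_add (hGdi.const_mul 3) (hGi.norm.const_mul 4), integral_const_mul,
            integral_const_mul]
      _ ≤ C₀ * A := by rw [hC₀]; nlinarith
  rcases le_or_gt τ 0 with hτ | hτ
  · have hb : ∀ r ∈ Ioi (0 : ℝ), ‖k r‖ ≤ 3 / r + 4 := by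
      intro r hr
      have hr0 : (0 : ℝ) < r := hr
      have hrm : 0 < r ^ m := rpow_pos_of_pos hr0 m
      rcases hknorm r hr0 with h | h
      · refine h.trans ?_
        rw [abs_of_pos (by linarith)]
        calc r ^ (m - 1) / (r ^ m - τ) ≤ r ^ (m - 1) / r ^ m := by gcongr; linarith
          _ = 1 / r := by rw [rpow_sub_one hr0.ne']; field_simp
          _ ≤ 3 / r + 4 := by
            have : 1 / r ≤ 3 / r := by gcongr; norm_num
            linarith
      · linarith
    refine (far _ measurableSet_Ioi subset_rfl hb).2.trans ?_
    have : 0 ≤ (c * L + 2 * π) * A := by positivity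
    nlinarith
  -- the resonant case
  set r₀ : ℝ := τ ^ m⁻¹ with hr₀
  have hm0 : m ≠ 0 := by linarith
  have hr₀0 : 0 < r₀ := rpow_pos_of_pos hτ _
  have hr₀m : r₀ ^ m = τ := rpow_inv_rpow hτ.le hm0
  set q : ℝ := min 1 r₀⁻¹ / 2 with hq
  have hq0 : 0 < q := by positivity
  have hq1 : q ≤ 1 / 2 := by rw [hq]; linarith [min_le_left 1 r₀⁻¹]
  have hq2 : q * r₀ ≤ 1 / 2 := by
    have : min 1 r₀⁻¹ * r₀ ≤ r₀⁻¹ * r₀ := by gcongr; exact min_le_right _ _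
    rw [inv_mul_cancel₀ hr₀0.ne'] at this
    rw [hq]; linarith
  set h : ℝ := q * τ with hh
  have hh0 : 0 < h := by positivity
  have hhτ : 0 < τ - h := by nlinarith
  set r₁ : ℝ := (τ - h) ^ m⁻¹ with hr₁
  set r₂ : ℝ := (τ + h) ^ m⁻¹ with hr₂
  have hr₁0 : 0 < r₁ := rpow_pos_of_pos hhτ _
  have e₁ : r₁ ^ m = τ - h := rpow_inv_rpow hhτ.le hm0
  have e₂ : r₂ ^ m = τ + h := rpow_inv_rpow (by linarith) hm0
  have h12 : r₁ ≤ r₂ := by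
    rw [hr₁, hr₂]; exact rpow_le_rpow hhτ.le (by linarith) (by positivity)
  have hmem : ∀ r, 0 < r → (r ∈ Ioc r₁ r₂ → |r ^ m - τ| ≤ h) ∧
      (r ∉ Ioc r₁ r₂ → h ≤ |r ^ m - τ|) := by
    intro r hr
    constructor
    · intro hI
      have a1 := rpow_le_rpow hr₁0.le hI.1.le (by linarith : 0 ≤ m)
      have a2 := rpow_le_rpow hr.le hI.2 (by linarith : 0 ≤ m)
      rw [e₁] at a1; rw [e₂] at a2
      rw [abs_le]; constructor <;> linarith
    · intro hI
      rw [mem_Ioc, not_and_or, not_lt, not_le] at hI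
      rcases hI with hI | hI
      · have a1 := rpow_le_rpow hr.le hI (by linarith : 0 ≤ m)
        rw [e₁] at a1
        rw [abs_sub_comm]; exact le_trans (by linarith) (le_abs_self _)
      · have a2 := rpow_le_rpow (by linarith) hI.le (by linarith : 0 ≤ m)
        rw [e₂] at a2
        exact le_trans (by linarith) (le_abs_self _)
  have hsubI : Ioc r₁ r₂ ⊆ Ioi 0 := fun r hr => hr₁0.trans hr.1
  have hclose : ∀ r ∈ Ioc r₁ r₂, |r - r₀| ≤ q * r₀ := by
    intro r hr
    have hr0 : 0 < r := hsubI hr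
    have a1 := rpow_sub_one_mul_abs_sub_le hm hr0 hr₀0
    rw [hr₀m] at a1
    have a2 := a1.trans ((hmem r hr0).1 hr)
    have hp : 0 < r₀ ^ (m - 1) := rpow_pos_of_pos hr₀0 _
    have e : τ = r₀ ^ (m - 1) * r₀ := by rw [← rpow_add_one hr₀0.ne', ← hr₀m]; ring_nf
    have a3 : r₀ ^ (m - 1) * |r - r₀| ≤ r₀ ^ (m - 1) * (q * r₀) := by
      calc _ ≤ h := a2
        _ = _ := by rw [hh, e]; ring
    exact le_of_mul_le_mul_left a3 hp
  obtain ⟨ifar, bfar⟩ := far (Ioi 0 \ Ioc r₁ r₂) (measurableSet_Ioi.diff measurableSet_Ioc)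
    sdiff_subset (by
      intro r hr
      have hr0 : 0 < r := hr.1
      have hf := (hmem r hr0).2 hr.2
      rcases hknorm r hr0 with hb | hb
      · refine hb.trans ?_
        rw [← hr₀m]
        apply kernel_le_of_far hm hr₀0 hr0
        · rw [hr₀m]; exact hf
        · rw [hr₀m]; linarith
      · rw [hb, sub_self, abs_zero] at hf; linarith)
  have hkI : IntegrableOn k (Ioc r₁ r₂) := by
    have hcont : ContinuousOn k (Icc r₁ r₂) := by
      have hc : ∀ p : ℝ, ContinuousOn (fun r : ℝ => ((r ^ p : ℝ) : ℂ)) (Icc r₁ r₂) := fun p =>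
        continuous_ofReal.comp_continuousOn
          (continuousOn_id.rpow_const fun r hr => Or.inl (hr₁0.trans_le hr.1).ne')
      exact (hc _).div ((continuousOn_const.sub (hc _)).sub continuousOn_const)
        fun r _ => sub_sub_mul_I_ne_zero hε
    exact (hcont.integrableOn_compact isCompact_Icc).mono_set Ioc_subset_Icc_self
  set g : ℝ → ℝ := fun r => c * A * |r - r₀| ^ (κ - 1) with hg
  have hgint : IntegrableOn g (Ioc (r₀ - 1) (r₀ + 1)) := by
    rw [← intervalIntegrable_iff_integrableOn_Ioc_of_le (by linarith)]
    have := (hLint.comp_sub_right r₀).const_mul (c * A)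
    convert this using 1 <;> ring
  have hgval : ∫ r in Ioc (r₀ - 1) (r₀ + 1), g r = c * A * L := by
    rw [integral_const_mul, ← intervalIntegral.integral_of_le (by linarith), hL,
      intervalIntegral.integral_comp_sub_right (fun x => |x| ^ (κ - 1)) r₀]
    congr 2 <;> ring
  have hsubJ : Ioc r₁ r₂ ⊆ Ioc (r₀ - 1) (r₀ + 1) := by
    intro r hr
    have := abs_le.1 ((hclose r hr).trans hq2)
    constructor <;> linarith
  have hnear : ∀ᵐ r ∂(volume.restrict (Ioc r₁ r₂)), ‖k r * (G r - G r₀)‖ ≤ g r := by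
    filter_upwards [ae_restrict_mem measurableSet_Ioc] with r hr
    have hr0 : 0 < r := hsubI hr
    have hcl := hclose r hr
    rcases eq_or_ne r r₀ with rfl | hne
    · simp only [sub_self, mul_zero, norm_zero, hg]; positivity
    have habs : 0 < |r - r₀| := abs_pos.2 (sub_ne_zero.2 hne)
    have hp : 0 < r₀ ^ (m - 1) := rpow_pos_of_pos hr₀0 _
    have a1 := rpow_sub_one_mul_abs_sub_le hm hr0 hr₀0
    rw [hr₀m] at a1
    have a1' : 0 < |r ^ m - τ| := lt_of_lt_of_le (by positivity) a1
    have hcl2 : |r - r₀| ≤ r₀ / 2 := hcl.trans (by nlinarith)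
    have hk1 : ‖k r‖ ≤ c / |r - r₀| := by
      rcases hknorm r hr0 with hb | hb
      · refine hb.trans ?_
        have hr32 : r ≤ 3 / 2 * r₀ := by have := (abs_le.1 hcl2).2; linarith
        calc r ^ (m - 1) / |r ^ m - τ| ≤ (3 / 2 * r₀) ^ (m - 1) / (r₀ ^ (m - 1) * |r - r₀|) := by
              gcongr
          _ = c / |r - r₀| := by
              rw [mul_rpow (by norm_num) hr₀0.le, ← hc]; field_simp
      · rw [hb, sub_self, abs_zero] at a1'; exact absurd a1' (lt_irrefl _)
    rw [norm_mul]
    calc ‖k r‖ * ‖G r - G r₀‖ ≤ c / |r - r₀| * (A * |r - r₀| ^ κ) :=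
          mul_le_mul hk1 (hGh r r₀ hr₀0 hcl2) (norm_nonneg _) (by positivity)
      _ = g r := by rw [hg]; simp only; rw [rpow_sub_one habs.ne']; field_simp
  have hmeasI : AEStronglyMeasurable (fun r => k r * (G r - G r₀))
      (volume.restrict (Ioc r₁ r₂)) :=
    hkmeas.aestronglyMeasurable.mul
      ((hGi.aestronglyMeasurable.mono_set hsubI).sub aestronglyMeasurable_const)
  have inear : IntegrableOn (fun r => k r * (G r - G r₀)) (Ioc r₁ r₂) :=
    (hgint.mono_set hsubJ).mono' hmeasI hnear
  have bnear : ‖∫ r in Ioc r₁ r₂, k r * (G r - G r₀)‖ ≤ c * A * L := by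
    calc _ ≤ ∫ r in Ioc r₁ r₂, g r :=
          norm_integral_le_of_norm_le (hgint.mono_set hsubJ) hnear
      _ ≤ ∫ r in Ioc (r₀ - 1) (r₀ + 1), g r := by
          refine setIntegral_mono_set hgint ?_ (Filter.Eventually.of_forall hsubJ)
          exact Filter.Eventually.of_forall fun r => by simp only [Pi.zero_apply, hg]; positivity
      _ = c * A * L := hgval
  have bsing : ‖∫ r in Ioc r₁ r₂, k r * G r₀‖ ≤ 2 * π * A := by
    rw [integral_mul_const, norm_mul, ← intervalIntegral.integral_of_le h12]
    exact mul_le_mul (norm_integral_log_kernel_le hm hε hr₁0 h12 e₁ e₂) (hG1 r₀ hr₀0)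
      (norm_nonneg _) (by positivity)
  have hsplitI : ∫ r in Ioc r₁ r₂, k r * G r =
      (∫ r in Ioc r₁ r₂, k r * (G r - G r₀)) + ∫ r in Ioc r₁ r₂, k r * G r₀ := by
    rw [← integral_add inear (hkI.mul_const _)]
    congr 1; ext r; ring
  have iI : IntegrableOn (fun r => k r * G r) (Ioc r₁ r₂) := by
    have := inear.add (hkI.mul_const (G r₀))
    refine this.congr (Filter.Eventually.of_forall fun r => ?_)
    simp only [Pi.add_apply]; ring
  have hsplit : ∫ r in Ioi (0 : ℝ), k r * G r =
      (∫ r in Ioi 0 \ Ioc r₁ r₂, k r * G r) + ∫ r in Ioc r₁ r₂, k r * G r := by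
    rw [← setIntegral_union disjoint_sdiff_left measurableSet_Ioc ifar iI,
      sdiff_union_of_subset hsubI]
  change ‖∫ r in Ioi (0 : ℝ), k r * G r‖ ≤ _
  rw [hsplit, hsplitI]
  calc _ ≤ C₀ * A + (c * A * L + 2 * π * A) :=
        (norm_add_le _ _).trans (add_le_add bfar ((norm_add_le _ _).trans (add_le_add bnear bsing)))
    _ = _ := by ring

end RadialSingularIntegral

section CauchySchwarz

variable {α : Type*} [MeasurableSpace α] {μ : Measure α}

/-- The Cauchy–Schwarz inequality for products of square-integrable norms. -/
theorem integral_norm_mul_norm_le {E F : Type*} [NormedAddCommGroup E] [NormedAddCommGroup F]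
    {f : α → E} {g : α → F} (hf : MemLp f 2 μ) (hg : MemLp g 2 μ) :
    Integrable (fun x => ‖f x‖ * ‖g x‖) μ ∧
      ∫ x, ‖f x‖ * ‖g x‖ ∂μ ≤ √(∫ x, ‖f x‖ ^ 2 ∂μ) * √(∫ x, ‖g x‖ ^ 2 ∂μ) := by
  refine ⟨hf.norm.integrable_mul hg.norm, ?_⟩
  have h := integral_mul_norm_le_Lp_mul_Lq (μ := μ) (p := 2) (q := 2) (f := fun x => ‖f x‖)
    (g := fun x => ‖g x‖) Real.HolderConjugate.two_two (by simpa using hf.norm)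
    (by simpa using hg.norm)
  simpa [Real.sqrt_eq_rpow] using h

end CauchySchwarz

section Radial

open Set

theorem sq_norm_sub_le_integral {v v' : ℝ → ℂ} (hv : ∀ r, HasDerivAt v (v' r) r)
    (hv' : Continuous v') {r s : ℝ} (hrs : r ≤ s) :
    ‖v s - v r‖ ^ 2 ≤ (s - r) * ∫ ρ in Ioc r s, ‖v' ρ‖ ^ 2 := by
  have h1 : ∫ ρ in r..s, v' ρ = v s - v r :=
    intervalIntegral.integral_eq_sub_of_hasDerivAt (fun x _ => hv x) (hv'.intervalIntegrable _ _)
  have hm : MemLp v' 2 (volume.restrict (Ioc r s)) :=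
    (memLp_two_iff_integrable_sq_norm hv'.aestronglyMeasurable).2
      ((hv'.norm.pow 2).integrableOn_Ioc)
  have h2 := (integral_norm_mul_norm_le hm
    (memLp_const (μ := volume.restrict (Ioc r s)) (1 : ℝ))).2
  have h3 : ‖v s - v r‖ ≤ ∫ ρ in Ioc r s, ‖v' ρ‖ := by
    rw [← h1, intervalIntegral.integral_of_le hrs]; exact norm_integral_le_integral_norm _
  simp only [norm_one, mul_one, one_pow, integral_const, MeasurableSet.univ,
    measureReal_restrict_apply, univ_inter, smul_eq_mul, Real.volume_real_Ioc_of_le hrs] at h2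
  have h4 : 0 ≤ ∫ ρ in Ioc r s, ‖v' ρ‖ ^ 2 := integral_nonneg fun _ => by positivity
  calc ‖v s - v r‖ ^ 2 ≤ (√(∫ ρ in Ioc r s, ‖v' ρ‖ ^ 2) * √(s - r)) ^ 2 := by
        gcongr; exact h3.trans h2
    _ = _ := by rw [mul_pow, sq_sqrt h4, sq_sqrt (by linarith)]; ring

/-- Quantitative control of a function along a ray by weighted `L²` norms of the function and of
its derivative at frequency scale `R`. -/
structure RayBound (d : ℕ) (v : ℝ → ℂ) (R N : ℝ) : Prop where
  one_le : 1 ≤ R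
  nonneg : 0 ≤ N
  cont : Continuous v
  integrable : IntegrableOn (fun r => r ^ d * ‖v r‖ ^ 2) (Ioi 0)
  integral_le : R * ∫ r in Ioi (0 : ℝ), r ^ d * ‖v r‖ ^ 2 ≤ N ^ 2
  sq_sub_le : ∀ r s, 0 < r → r ≤ s → r ^ d * ‖v s - v r‖ ^ 2 ≤ (s - r) * (R * N ^ 2)
  sq_le : ∀ r, ‖v r‖ ^ 2 ≤ R ^ d * N ^ 2

theorem RayBound.of_hasDerivAt {d : ℕ} {v v' : ℝ → ℂ} {R N : ℝ} (hR : 1 ≤ R) (hN : 0 ≤ N)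
    (hv : ∀ r, HasDerivAt v (v' r) r) (hv' : Continuous v')
    (hi : IntegrableOn (fun r => r ^ d * ‖v r‖ ^ 2) (Ioi 0))
    (hle : R * ∫ r in Ioi (0 : ℝ), r ^ d * ‖v r‖ ^ 2 ≤ N ^ 2)
    (hi' : IntegrableOn (fun r => r ^ d * ‖v' r‖ ^ 2) (Ioi 0))
    (hle' : ∫ r in Ioi (0 : ℝ), r ^ d * ‖v' r‖ ^ 2 ≤ R * N ^ 2)
    (hsup : ∀ r, ‖v r‖ ^ 2 ≤ R ^ d * N ^ 2) : RayBound d v R N where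
  one_le := hR
  nonneg := hN
  cont := continuous_iff_continuousAt.2 fun r => (hv r).continuousAt
  integrable := hi
  integral_le := hle
  sq_le := hsup
  sq_sub_le := by
    intro r s hr hrs
    have hsub : Ioc r s ⊆ Ioi 0 := fun x hx => hr.trans hx.1
    have h2 : r ^ d * ∫ ρ in Ioc r s, ‖v' ρ‖ ^ 2 ≤ R * N ^ 2 := by
      calc r ^ d * ∫ ρ in Ioc r s, ‖v' ρ‖ ^ 2 = ∫ ρ in Ioc r s, r ^ d * ‖v' ρ‖ ^ 2 :=
            (integral_const_mul _ _).symm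
        _ ≤ ∫ ρ in Ioc r s, ρ ^ d * ‖v' ρ‖ ^ 2 := by
            refine setIntegral_mono_on ?_ (hi'.mono_set hsub) measurableSet_Ioc fun ρ hρ => ?_
            · exact ((hv'.norm.pow 2).integrableOn_Ioc).const_mul _
            · have := hρ.1.le
              gcongr
        _ ≤ ∫ ρ in Ioi (0 : ℝ), ρ ^ d * ‖v' ρ‖ ^ 2 := by
            refine setIntegral_mono_set hi' ?_ (Filter.Eventually.of_forall hsub)
            filter_upwards [ae_restrict_mem measurableSet_Ioi] with ρ hρ
            have : (0 : ℝ) < ρ := hρ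
            simp only [Pi.zero_apply]; positivity
        _ ≤ _ := hle'
    calc r ^ d * ‖v s - v r‖ ^ 2 ≤ r ^ d * ((s - r) * ∫ ρ in Ioc r s, ‖v' ρ‖ ^ 2) := by
          gcongr; exact sq_norm_sub_le_integral hv hv' hrs
      _ = (s - r) * (r ^ d * ∫ ρ in Ioc r s, ‖v' ρ‖ ^ 2) := by ring
      _ ≤ _ := by
        have : 0 ≤ s - r := by linarith
        gcongr

theorem RayBound.pow_mul_sq_le {d : ℕ} {v : ℝ → ℂ} {R N : ℝ} (h : RayBound d v R N) {r : ℝ}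
    (hr : 0 < r) : r ^ d * ‖v r‖ ^ 2 ≤ 4 * N ^ 2 := by
  have hR : 0 < R := zero_lt_one.trans_le h.one_le
  have hsub : Ioc r (r + 1 / R) ⊆ Ioi 0 := fun x hx => hr.trans hx.1
  have key : ∀ ρ ∈ Ioc r (r + 1 / R),
      r ^ d * ‖v r‖ ^ 2 ≤ 2 * (ρ ^ d * ‖v ρ‖ ^ 2) + 2 * N ^ 2 := by
    intro ρ hρ
    have h1 := h.sq_sub_le r ρ hr hρ.1.le
    have h2 : (ρ - r) * (R * N ^ 2) ≤ N ^ 2 := by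
      have : ρ - r ≤ 1 / R := by linarith [hρ.2]
      calc (ρ - r) * (R * N ^ 2) ≤ 1 / R * (R * N ^ 2) := by gcongr
        _ = N ^ 2 := by field_simp
    have h3 : ‖v r‖ ≤ ‖v ρ‖ + ‖v ρ - v r‖ := by
      have := norm_sub_le (v ρ) (v ρ - v r)
      simpa using this
    have h4 : ‖v r‖ ^ 2 ≤ 2 * ‖v ρ‖ ^ 2 + 2 * ‖v ρ - v r‖ ^ 2 := by
      nlinarith [norm_nonneg (v r), norm_nonneg (v ρ), norm_nonneg (v ρ - v r),
        sq_nonneg (‖v ρ‖ - ‖v ρ - v r‖)]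
    have h5 : r ^ d * ‖v ρ‖ ^ 2 ≤ ρ ^ d * ‖v ρ‖ ^ 2 := by
      have := hρ.1.le
      gcongr
    have h6 : r ^ d * ‖v r‖ ^ 2 ≤ r ^ d * (2 * ‖v ρ‖ ^ 2 + 2 * ‖v ρ - v r‖ ^ 2) := by gcongr
    nlinarith
  have hI : IntegrableOn (fun ρ => 2 * (ρ ^ d * ‖v ρ‖ ^ 2) + 2 * N ^ 2) (Ioc r (r + 1 / R)) :=
    ((h.integrable.mono_set hsub).const_mul 2).add (integrableOn_const (by simp))
  have hle : r ≤ r + 1 / R := by linarith [show 0 < 1 / R by positivity]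
  have h1 := setIntegral_mono_on (integrableOn_const (by simp)) hI measurableSet_Ioc key
  rw [integral_add ((h.integrable.mono_set hsub).const_mul 2) (integrableOn_const (by simp)),
    integral_const_mul 2] at h1
  simp only [integral_const, MeasurableSet.univ, measureReal_restrict_apply, univ_inter,
    smul_eq_mul, Real.volume_real_Ioc_of_le hle, add_sub_cancel_left] at h1
  have h2 : ∫ ρ in Ioc r (r + 1 / R), ρ ^ d * ‖v ρ‖ ^ 2 ≤
      ∫ ρ in Ioi (0 : ℝ), ρ ^ d * ‖v ρ‖ ^ 2 := by
    refine setIntegral_mono_set h.integrable ?_ (Filter.Eventually.of_forall hsub)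
    filter_upwards [ae_restrict_mem measurableSet_Ioi] with ρ hρ
    have : (0 : ℝ) < ρ := hρ
    simp only [Pi.zero_apply]; positivity
  have h3 := h.integral_le
  have h4 : R * (1 / R * (r ^ d * ‖v r‖ ^ 2)) ≤
      R * (2 * (∫ ρ in Ioi (0 : ℝ), ρ ^ d * ‖v ρ‖ ^ 2) + 1 / R * (2 * N ^ 2)) := by
    gcongr; linarith
  have h5 : R * (1 / R * (r ^ d * ‖v r‖ ^ 2)) = r ^ d * ‖v r‖ ^ 2 := by field_simp
  have h6 : R * (1 / R * (2 * N ^ 2)) = 2 * N ^ 2 := by field_simp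
  rw [h5, mul_add, h6] at h4
  linarith

theorem le_mul_rpow_of_sq_le {x N c t κ : ℝ} (hN : 0 ≤ N) (hc : 1 ≤ c) (ht : 0 ≤ t) (hκ : 0 < κ)
    (hκ2 : κ ≤ 1 / 2) (h1 : x ≤ c * N) (h2 : t ≤ 1 → x ^ 2 ≤ t * N ^ 2) :
    x ≤ c * N * t ^ κ := by
  rcases le_total 1 t with h | h
  · exact h1.trans (le_mul_of_one_le_right (by positivity) (one_le_rpow h hκ.le))
  · have h3 : t ≤ (t ^ κ) ^ 2 := by
      rw [← rpow_natCast, ← rpow_mul ht]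
      rcases ht.eq_or_lt with rfl | ht0
      · positivity
      · calc t = t ^ (1 : ℝ) := (rpow_one t).symm
          _ ≤ _ := rpow_le_rpow_of_exponent_ge ht0 h (by push_cast; linarith)
    have h4 : 0 ≤ t ^ κ := by positivity
    have h5 : x ^ 2 ≤ (N * t ^ κ) ^ 2 := (h2 h).trans (by rw [mul_pow]; nlinarith [sq_nonneg N])
    have h6 := abs_le_of_sq_le_sq h5 (by positivity)
    calc x ≤ N * t ^ κ := (le_abs_self x).trans h6
      _ ≤ c * (N * t ^ κ) := le_mul_of_one_le_left (by positivity) hc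
      _ = _ := by ring

namespace RayBound

variable {d : ℕ} {v w : ℝ → ℂ} {R S N M κ : ℝ}

theorem sqrt_mul_norm_le (h : RayBound d v R N) {r : ℝ} (hr : 0 < r) :
    √(r ^ d) * ‖v r‖ ≤ 2 * N := by
  have h0 := h.nonneg
  refine le_of_sq_le_sq ?_ (by positivity)
  rw [mul_pow, sq_sqrt (by positivity)]
  linarith [h.pow_mul_sq_le hr]

theorem sqrt_mul_norm_le_rpow (h : RayBound d v R N) (hd : 1 ≤ d) (hκ : 0 < κ) (hκ2 : κ ≤ 1 / 2)
    {r : ℝ} (hr : 0 < r) : √(r ^ d) * ‖v r‖ ≤ 2 * N * (r * R) ^ κ := by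
  have hR : 0 < R := zero_lt_one.trans_le h.one_le
  refine le_mul_rpow_of_sq_le h.nonneg one_le_two (by positivity) hκ hκ2 (h.sqrt_mul_norm_le hr)
    fun h1 => ?_
  rw [mul_pow, sq_sqrt (by positivity)]
  calc r ^ d * ‖v r‖ ^ 2 ≤ r ^ d * (R ^ d * N ^ 2) := by gcongr; exact h.sq_le r
    _ = (r * R) ^ d * N ^ 2 := by rw [mul_pow]; ring
    _ ≤ (r * R) * N ^ 2 := by
      gcongr; exact pow_le_of_le_one (by positivity) h1 (by omega)

theorem sqrt_mul_norm_sub_le (h : RayBound d v R N) (hκ : 0 < κ) (hκ2 : κ ≤ 1 / 2)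
    {r s : ℝ} (hr : 0 < r) (hs : 0 < s) :
    √(min r s ^ d) * ‖v r - v s‖ ≤ 4 * N * (R * |r - s|) ^ κ := by
  wlog hrs : r ≤ s generalizing r s
  · rw [min_comm, norm_sub_rev, abs_sub_comm]
    exact this hs hr (le_of_not_ge hrs)
  have hR : 0 < R := zero_lt_one.trans_le h.one_le
  rw [min_eq_left hrs, norm_sub_rev, abs_sub_comm, abs_of_nonneg (sub_nonneg.2 hrs)]
  refine le_mul_rpow_of_sq_le h.nonneg (by norm_num)
    (mul_nonneg hR.le (sub_nonneg.2 hrs)) hκ hκ2 ?_ fun _ => ?_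
  · have h1 := h.sqrt_mul_norm_le hr
    have h2 := h.sqrt_mul_norm_le hs
    have h3 : √(r ^ d) * ‖v s‖ ≤ √(s ^ d) * ‖v s‖ := by gcongr
    have h4 : √(r ^ d) * ‖v s - v r‖ ≤ √(r ^ d) * (‖v s‖ + ‖v r‖) := by
      gcongr; exact norm_sub_le _ _
    linarith
  · rw [mul_pow, sq_sqrt (by positivity)]
    calc _ ≤ _ := h.sq_sub_le r s hr hrs
      _ = _ := by ring

theorem memLp (h : RayBound d v R N) :
    MemLp (fun r => √(r ^ d) * ‖v r‖) 2 (volume.restrict (Ioi 0)) := by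
  have hc := h.cont
  rw [memLp_two_iff_integrable_sq_norm (by fun_prop)]
  refine h.integrable.congr_fun (fun r hr => ?_) measurableSet_Ioi
  have : (0 : ℝ) < r := hr
  simp only [norm_mul, norm_eq_abs, mul_pow, sq_abs]
  rw [sq_sqrt (by positivity)]

theorem integral_sq_le (h : RayBound d v R N) :
    ∫ r in Ioi (0 : ℝ), ‖√(r ^ d) * ‖v r‖‖ ^ 2 ≤ N ^ 2 := by
  have : ∫ r in Ioi (0 : ℝ), ‖√(r ^ d) * ‖v r‖‖ ^ 2 = ∫ r in Ioi (0 : ℝ), r ^ d * ‖v r‖ ^ 2 := by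
    refine setIntegral_congr_fun measurableSet_Ioi fun r hr => ?_
    have : (0 : ℝ) < r := hr
    simp only [norm_mul, norm_eq_abs, mul_pow, sq_abs]
    rw [sq_sqrt (by positivity)]
  rw [this]
  have h0 : 0 ≤ ∫ r in Ioi (0 : ℝ), r ^ d * ‖v r‖ ^ 2 := by
    refine setIntegral_nonneg measurableSet_Ioi fun r hr => ?_
    have : (0 : ℝ) < r := hr
    positivity
  nlinarith [h.integral_le, h.one_le]

theorem integral_product_le (hv : RayBound d v R N) (hw : RayBound d w S M) :
    IntegrableOn (fun r => ((r ^ d : ℝ) : ℂ) * (v r * (starRingEnd ℂ) (w r))) (Ioi 0) ∧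
      ∫ r in Ioi (0 : ℝ), ‖((r ^ d : ℝ) : ℂ) * (v r * (starRingEnd ℂ) (w r))‖ ≤ N * M := by
  obtain ⟨h1, h2⟩ := integral_norm_mul_norm_le hv.memLp hw.memLp
  have hn : ∀ r ∈ Ioi (0 : ℝ), ‖√(r ^ d) * ‖v r‖‖ * ‖√(r ^ d) * ‖w r‖‖ =
      ‖((r ^ d : ℝ) : ℂ) * (v r * (starRingEnd ℂ) (w r))‖ := by
    intro r hr
    have hr0 : (0 : ℝ) < r := hr
    have hq : √(r ^ d) * √(r ^ d) = r ^ d := mul_self_sqrt (by positivity)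
    rw [norm_mul ((r ^ d : ℝ) : ℂ), norm_real, norm_of_nonneg (by positivity : 0 ≤ r ^ d),
      norm_of_nonneg (by positivity), norm_of_nonneg (by positivity), norm_mul, RCLike.norm_conj]
    linear_combination (‖v r‖ * ‖w r‖) * hq
  have hcv := hv.cont
  have hcw := hw.cont
  constructor
  · refine (integrable_norm_iff (by fun_prop)).1 ?_
    exact IntegrableOn.congr_fun h1 hn measurableSet_Ioi
  · rw [← setIntegral_congr_fun measurableSet_Ioi hn]
    refine h2.trans (mul_le_mul ?_ ?_ (sqrt_nonneg _) hv.nonneg)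
    · exact (Real.sqrt_le_sqrt hv.integral_sq_le).trans_eq (sqrt_sq hv.nonneg)
    · exact (Real.sqrt_le_sqrt hw.integral_sq_le).trans_eq (sqrt_sq hw.nonneg)

end RayBound

end Radial

section Radial

open Set

theorem abs_pow_sub_pow_le_mul {d : ℕ} {r s : ℝ} (hs : 0 < s) (h : |r - s| ≤ s / 2) :
    |r ^ d - s ^ d| ≤ d * 2 ^ d * (|r - s| / s) * s ^ d := by
  have hr := abs_le.1 h
  have h1 := abs_pow_sub_pow_le r s d
  rcases Nat.eq_zero_or_pos d with rfl | hd
  · simp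
  have h2 : max |r| |s| ≤ 2 * s := by
    rw [abs_of_nonneg (by linarith), abs_of_pos hs]; exact max_le (by linarith) (by linarith)
  calc |r ^ d - s ^ d| ≤ |r - s| * d * (2 * s) ^ (d - 1) := h1.trans (by gcongr)
    _ = d * 2 ^ (d - 1) * (|r - s| / s) * (s ^ (d - 1) * s) := by rw [mul_pow]; field_simp
    _ = d * 2 ^ (d - 1) * (|r - s| / s) * s ^ d := by rw [← pow_succ, Nat.sub_add_cancel hd]
    _ ≤ _ := by gcongr <;> [norm_num; omega]

theorem sqrt_pow_le_of_le_mul {d : ℕ} {r s : ℝ} (hr : 0 ≤ r) (h : r ≤ 3 * s) :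
    √(r ^ d) ≤ 3 ^ d * √(s ^ d) := by
  have hs : 0 ≤ s := by linarith
  calc √(r ^ d) ≤ √((3 ^ d) ^ 2 * s ^ d) := by
        apply Real.sqrt_le_sqrt
        calc r ^ d ≤ (3 * s) ^ d := by gcongr
          _ = 3 ^ d * s ^ d := mul_pow _ _ _
          _ ≤ (3 ^ d) ^ 2 * s ^ d := by
            gcongr; exact le_self_pow₀ (one_le_pow₀ (by norm_num)) (by norm_num)
    _ = _ := by rw [Real.sqrt_mul (by positivity), sqrt_sq (by positivity)]

namespace RayBound

variable {d : ℕ} {v w : ℝ → ℂ} {R S N M κ : ℝ}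

theorem norm_product_sub_le (hv : RayBound d v R N) (hw : RayBound d w S M) (hd : 1 ≤ d)
    (hκ : 0 < κ) (hκ2 : κ ≤ 1 / 2) {r s : ℝ} (hs : 0 < s) (hrs : |r - s| ≤ s / 2) :
    ‖((r ^ d : ℝ) : ℂ) * (v r * (starRingEnd ℂ) (w r)) -
        ((s ^ d : ℝ) : ℂ) * (v s * (starRingEnd ℂ) (w s))‖ ≤
      (16 * 9 ^ d + 4 * d * 2 ^ d) * (R * S) ^ κ * N * M * |r - s| ^ κ := by
  have hR := hv.one_le
  have hS := hw.one_le
  have hN := hv.nonneg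
  have hM := hw.nonneg
  have hr' := abs_le.1 hrs
  have hr : 0 < r := by linarith
  set Δ := |r - s| with hΔ
  have hΔ0 : 0 ≤ Δ := abs_nonneg _
  have hmin : 0 < min r s := lt_min hr hs
  have hRk : R ^ κ ≤ (R * S) ^ κ := by
    apply rpow_le_rpow <;> nlinarith
  have hSk : S ^ κ ≤ (R * S) ^ κ := by
    apply rpow_le_rpow <;> nlinarith
  have hq1 : √(r ^ d) ≤ 3 ^ d * √(min r s ^ d) :=
    sqrt_pow_le_of_le_mul hr.le (by rcases min_choice r s with h | h <;> rw [h] <;> linarith)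
  have hq2 : √(r ^ d) ≤ 3 ^ d * √(s ^ d) := sqrt_pow_le_of_le_mul hr.le (by linarith)
  have hqr : √(r ^ d) * √(r ^ d) = r ^ d := mul_self_sqrt (by positivity)
  have e1 : r ^ d * (‖v r - v s‖ * ‖w r‖) ≤ 8 * 9 ^ d * (R * S) ^ κ * N * M * Δ ^ κ := by
    calc r ^ d * (‖v r - v s‖ * ‖w r‖)
        = (√(r ^ d) * ‖v r - v s‖) * (√(r ^ d) * ‖w r‖) := by
          linear_combination (-‖v r - v s‖ * ‖w r‖) * hqr
      _ ≤ (3 ^ d * √(min r s ^ d) * ‖v r - v s‖) * (√(r ^ d) * ‖w r‖) := by gcongr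
      _ = 3 ^ d * (√(min r s ^ d) * ‖v r - v s‖) * (√(r ^ d) * ‖w r‖) := by ring
      _ ≤ 3 ^ d * (4 * N * (R * Δ) ^ κ) * (2 * M) := by
          gcongr 3 ^ d * ?_ * ?_
          · exact hv.sqrt_mul_norm_sub_le hκ hκ2 hr hs
          · exact hw.sqrt_mul_norm_le hr
      _ = 8 * 3 ^ d * R ^ κ * N * M * Δ ^ κ := by
          rw [mul_rpow (by linarith) hΔ0]; ring
      _ ≤ _ := by gcongr; norm_num
  have e2 : r ^ d * (‖v s‖ * ‖w r - w s‖) ≤ 8 * 9 ^ d * (R * S) ^ κ * N * M * Δ ^ κ := by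
    calc r ^ d * (‖v s‖ * ‖w r - w s‖)
        = (√(r ^ d) * ‖v s‖) * (√(r ^ d) * ‖w r - w s‖) := by
          linear_combination (-‖v s‖ * ‖w r - w s‖) * hqr
      _ ≤ (3 ^ d * √(s ^ d) * ‖v s‖) * (3 ^ d * √(min r s ^ d) * ‖w r - w s‖) := by gcongr
      _ = 3 ^ d * 3 ^ d * (√(s ^ d) * ‖v s‖) * (√(min r s ^ d) * ‖w r - w s‖) := by ring
      _ ≤ 3 ^ d * 3 ^ d * (2 * N) * (4 * M * (S * Δ) ^ κ) := by
          gcongr 3 ^ d * 3 ^ d * ?_ * ?_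
          · exact hv.sqrt_mul_norm_le hs
          · exact hw.sqrt_mul_norm_sub_le hκ hκ2 hr hs
      _ = 8 * 9 ^ d * S ^ κ * N * M * Δ ^ κ := by
          rw [mul_rpow (by linarith) hΔ0, ← mul_pow]; norm_num; ring
      _ ≤ _ := by gcongr
  have e3 : |r ^ d - s ^ d| * (‖v s‖ * ‖w s‖) ≤ 4 * d * 2 ^ d * (R * S) ^ κ * N * M * Δ ^ κ := by
    have hqs : √(s ^ d) * √(s ^ d) = s ^ d := mul_self_sqrt (by positivity)
    have hx : Δ / s * s ^ κ ≤ Δ ^ κ := by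
      have h1 : Δ / s ≤ 1 := by rw [div_le_one hs]; linarith
      have h2 : Δ / s ≤ (Δ / s) ^ κ := self_le_rpow_of_le_one (by positivity) h1 (by linarith)
      calc Δ / s * s ^ κ ≤ (Δ / s) ^ κ * s ^ κ := by gcongr
        _ = Δ ^ κ := by rw [← mul_rpow (by positivity) hs.le, div_mul_cancel₀ _ hs.ne']
    calc |r ^ d - s ^ d| * (‖v s‖ * ‖w s‖)
        ≤ (d * 2 ^ d * (Δ / s) * s ^ d) * (‖v s‖ * ‖w s‖) := by
          gcongr; exact abs_pow_sub_pow_le_mul hs hrs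
      _ = d * 2 ^ d * (Δ / s) * (√(s ^ d) * ‖v s‖) * (√(s ^ d) * ‖w s‖) := by
          linear_combination (-(d * 2 ^ d * (Δ / s)) * ‖v s‖ * ‖w s‖) * hqs
      _ ≤ d * 2 ^ d * (Δ / s) * (2 * N * (s * R) ^ κ) * (2 * M) := by
          gcongr d * 2 ^ d * (Δ / s) * ?_ * ?_
          · exact hv.sqrt_mul_norm_le_rpow hd hκ hκ2 hs
          · exact hw.sqrt_mul_norm_le hs
      _ = 4 * d * 2 ^ d * R ^ κ * N * M * (Δ / s * s ^ κ) := by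
          rw [mul_rpow hs.le (by linarith)]; ring
      _ ≤ _ := by gcongr
  have hsplit : ((r ^ d : ℝ) : ℂ) * (v r * (starRingEnd ℂ) (w r)) -
        ((s ^ d : ℝ) : ℂ) * (v s * (starRingEnd ℂ) (w s)) =
      ((r ^ d : ℝ) : ℂ) * ((v r - v s) * (starRingEnd ℂ) (w r)) +
      ((r ^ d : ℝ) : ℂ) * (v s * (starRingEnd ℂ) (w r - w s)) +
      ((r ^ d - s ^ d : ℝ) : ℂ) * (v s * (starRingEnd ℂ) (w s)) := by
    rw [map_sub]; push_cast; ring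
  have hn : ∀ (x : ℝ) (y z : ℂ), ‖(x : ℂ) * (y * (starRingEnd ℂ) z)‖ = |x| * (‖y‖ * ‖z‖) := by
    intro x y z; rw [norm_mul, norm_mul, RCLike.norm_conj, norm_real, norm_eq_abs]
  rw [hsplit]
  refine norm_add₃_le.trans ?_
  rw [hn, hn, hn, abs_of_pos (by positivity : 0 < r ^ d)]
  linarith

theorem norm_product_eq {d : ℕ} (v w : ℝ → ℂ) {r : ℝ} (hr : 0 < r) :
    ‖((r ^ d : ℝ) : ℂ) * (v r * (starRingEnd ℂ) (w r))‖ =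
      (√(r ^ d) * ‖v r‖) * (√(r ^ d) * ‖w r‖) := by
  have hqr : √(r ^ d) * √(r ^ d) = r ^ d := (mul_self_sqrt (by positivity))
  rw [norm_mul, norm_mul, RCLike.norm_conj, norm_real, norm_of_nonneg (by positivity)]
  linear_combination (-‖v r‖ * ‖w r‖) * hqr

end RayBound

/-- The resolvent form along a single ray. -/
theorem exists_norm_integral_ray_le {d : ℕ} (hd : 1 ≤ d) {m κ : ℝ} (hm : 1 < m) (hκ : 0 < κ)
    (hκ2 : κ ≤ 1 / 2) :
    ∃ C, 0 ≤ C ∧ ∀ τ ε : ℝ, ε ≠ 0 → ∀ (v w : ℝ → ℂ) (R S N M : ℝ),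
      RayBound d v R N → RayBound d w S M →
      ‖∫ r in Ioi (0 : ℝ), ((r ^ (m - 1) : ℝ) : ℂ) / ((τ : ℂ) - ((r ^ m : ℝ) : ℂ) - ε * I) *
        (((r ^ d : ℝ) : ℂ) * (v r * (starRingEnd ℂ) (w r)))‖ ≤ C * ((R * S) ^ κ * N * M) := by
  obtain ⟨C, hC, h⟩ := exists_norm_integral_radial_kernel_le hm hκ
  refine ⟨C * (16 * 9 ^ d + 4 * d * 2 ^ d), by positivity, ?_⟩
  intro τ ε hε v w R S N M hv hw
  have hR := hv.one_le
  have hS := hw.one_le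
  have hN := hv.nonneg
  have hM := hw.nonneg
  have hRS : 1 ≤ (R * S) ^ κ := one_le_rpow (by nlinarith) hκ.le
  have hRk : R ^ κ ≤ (R * S) ^ κ := by
    apply rpow_le_rpow <;> nlinarith
  have hK : (4 : ℝ) ≤ 16 * 9 ^ d + 4 * d * 2 ^ d := by
    have : (1 : ℝ) ≤ 9 ^ d := one_le_pow₀ (by norm_num)
    have : (0 : ℝ) ≤ 4 * d * 2 ^ d := by positivity
    linarith
  set K : ℝ := 16 * 9 ^ d + 4 * d * 2 ^ d with hKdef
  have hNM : 0 ≤ N * M := by positivity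
  obtain ⟨hi, hle⟩ := hv.integral_product_le hw
  have base : N * M ≤ (R * S) ^ κ * (N * M) := le_mul_of_one_le_left hNM hRS
  have base' : 0 ≤ (R * S) ^ κ * (N * M) := by positivity
  rw [show C * K * ((R * S) ^ κ * N * M) = C * (K * (R * S) ^ κ * N * M) by ring]
  refine h τ ε hε _ _ (by positivity) hi ?_ ?_ ?_ ?_
  · refine hle.trans ?_
    calc N * M ≤ (R * S) ^ κ * (N * M) := base
      _ ≤ K * ((R * S) ^ κ * (N * M)) := le_mul_of_one_le_left base' (by linarith)
      _ = _ := by ring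
  · intro r hr
    rw [RayBound.norm_product_eq v w hr]
    calc _ ≤ (2 * N) * (2 * M) := by
          gcongr ?_ * ?_
          · exact hv.sqrt_mul_norm_le hr
          · exact hw.sqrt_mul_norm_le hr
      _ = 4 * (N * M) := by ring
      _ ≤ K * ((R * S) ^ κ * (N * M)) := by gcongr
      _ = _ := by ring
  · intro r hr
    rw [RayBound.norm_product_eq v w hr]
    calc _ ≤ (2 * N * (r * R) ^ κ) * (2 * M) := by
          gcongr ?_ * ?_
          · exact hv.sqrt_mul_norm_le_rpow hd hκ hκ2 hr
          · exact hw.sqrt_mul_norm_le hr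
      _ = 4 * R ^ κ * N * M * r ^ κ := by rw [mul_rpow hr.le (by linarith)]; ring
      _ ≤ K * (R * S) ^ κ * N * M * r ^ κ := by gcongr
  · intro r s hs hrs
    exact hv.norm_product_sub_le hw hd hκ hκ2 hs hrs

end Radial

section Polar

open Set Metric

theorem integral_volumeIoiPow {X : Type*} [NormedAddCommGroup X] [NormedSpace ℝ X] (d : ℕ)
    (g : ℝ → X) :
    ∫ r : Ioi (0 : ℝ), g r ∂(Measure.volumeIoiPow d) = ∫ r in Ioi (0 : ℝ), r ^ d • g r := by
  simp only [Measure.volumeIoiPow, ENNReal.ofReal]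
  rw [integral_withDensity_eq_integral_smul,
    integral_subtype_comap measurableSet_Ioi fun a ↦ Real.toNNReal (a ^ d) • g a,
    setIntegral_congr_fun measurableSet_Ioi fun x hx ↦ ?_]
  · rw [NNReal.smul_def, Real.coe_toNNReal _ (pow_nonneg hx.out.le _)]
  · exact (measurable_subtype_coe.pow_const _).real_toNNReal

theorem integrable_volumeIoiPow {X : Type*} [NormedAddCommGroup X] [NormedSpace ℝ X] (d : ℕ)
    {g : ℝ → X} :
    Integrable (fun r : Ioi (0 : ℝ) => g r) (Measure.volumeIoiPow d) ↔
      IntegrableOn (fun r => r ^ d • g r) (Ioi 0) := by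
  rw [integrableOn_iff_comap_subtypeVal measurableSet_Ioi, Measure.volumeIoiPow,
    integrable_withDensity_iff_integrable_smul' (by fun_prop) (by simp)]
  refine integrable_congr (.of_forall ?_)
  rintro ⟨x, hx : 0 < x⟩
  simp (disch := positivity) [ENNReal.toReal_ofReal]

variable {V : Type*} [NormedAddCommGroup V] [InnerProductSpace ℝ V] [FiniteDimensional ℝ V]
  [MeasurableSpace V] [BorelSpace V]

/-- Integration in polar coordinates. -/
theorem integral_polar {X : Type*} [NormedAddCommGroup X] [NormedSpace ℝ X] {d : ℕ}
    (hd : Module.finrank ℝ V = d + 1) {F : V → X} (hF : Integrable F) :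
    (∀ᵐ ω : sphere (0 : V) 1 ∂(volume : Measure V).toSphere,
        IntegrableOn (fun r : ℝ => r ^ d • F (r • (ω : V))) (Ioi 0)) ∧
      Integrable (fun ω : sphere (0 : V) 1 => ∫ r in Ioi (0 : ℝ), r ^ d • F (r • (ω : V)))
        (volume : Measure V).toSphere ∧
      ∫ ω : sphere (0 : V) 1, (∫ r in Ioi (0 : ℝ), r ^ d • F (r • (ω : V)))
        ∂(volume : Measure V).toSphere = ∫ x, F x := by
  have : Nontrivial V := Module.nontrivial_of_finrank_pos (R := ℝ) (by omega)
  have hd' : Module.finrank ℝ V - 1 = d := by omega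
  have hmp := (volume : Measure V).measurePreserving_homeomorphUnitSphereProd
  rw [hd'] at hmp
  let G : sphere (0 : V) 1 × Ioi (0 : ℝ) → X := fun p => F ((p.2 : ℝ) • (p.1 : V))
  have hG : ∀ x, G (homeomorphUnitSphereProd V x) = F x := by
    intro x
    have hx : ‖(x : V)‖ ≠ 0 := norm_ne_zero_iff.2 x.2
    simp [G, smul_smul, hx]
  have hF' : Integrable (fun x : ({0}ᶜ : Set V) => F x)
      (Measure.comap Subtype.val (volume : Measure V)) := by
    have := (integrableOn_iff_comap_subtypeVal (μ := (volume : Measure V)) (f := F)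
      (measurableSet_singleton (0 : V)).compl).1 hF.integrableOn
    exact this
  have hGi : Integrable G ((volume : Measure V).toSphere.prod (Measure.volumeIoiPow d)) := by
    rw [← hmp.integrable_comp_emb (Homeomorph.measurableEmbedding _)]
    exact hF'.congr (.of_forall fun x => (hG x).symm)
  have hGe : ∫ p, G p ∂((volume : Measure V).toSphere.prod (Measure.volumeIoiPow d)) =
      ∫ x, F x := by
    rw [← hmp.integral_comp (Homeomorph.measurableEmbedding _)]
    simp_rw [hG]
    rw [integral_subtype_comap (measurableSet_singleton (0 : V)).compl F,
      restrict_compl_singleton]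
  refine ⟨?_, ?_, ?_⟩
  · filter_upwards [hGi.prod_right_ae] with ω hω
    exact (integrable_volumeIoiPow d (g := fun r => F (r • (ω : V)))).1 hω
  · refine hGi.integral_prod_left.congr (.of_forall fun ω => ?_)
    exact integral_volumeIoiPow d (fun r => F (r • (ω : V)))
  · rw [← hGe, integral_prod _ hGi]
    refine integral_congr_ae (.of_forall fun ω => ?_)
    exact (integral_volumeIoiPow d (fun r => F (r • (ω : V)))).symm

end Polar

section SingleScale

open Set Metric FourierTransform VectorFourier

theorem norm_sq_apply_le_sum {V : Type*} [NormedAddCommGroup V] [InnerProductSpace ℝ V]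
    {n : Type*} [Fintype n] (b : OrthonormalBasis n ℝ V)
    (L : V →L[ℝ] ℂ) {ω : V} (hω : ‖ω‖ = 1) : ‖L ω‖ ^ 2 ≤ ∑ j, ‖L (b j)‖ ^ 2 := by
  have h1 : L ω = ∑ j, (⟪b j, ω⟫ : ℝ) • L (b j) := by
    conv_lhs => rw [← b.sum_repr' ω]
    simp
  have h2 : ‖L ω‖ ≤ ∑ j, |⟪b j, ω⟫| * ‖L (b j)‖ := by
    rw [h1]
    refine (norm_sum_le _ _).trans_eq ?_
    simp
  have h3 : ∑ j, |⟪b j, ω⟫| ^ 2 = 1 := by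
    have := b.sum_sq_norm_inner_right ω
    simpa [hω] using this
  calc ‖L ω‖ ^ 2 ≤ (∑ j, |⟪b j, ω⟫| * ‖L (b j)‖) ^ 2 := by gcongr
    _ ≤ (∑ j, |⟪b j, ω⟫| ^ 2) * ∑ j, ‖L (b j)‖ ^ 2 := Finset.sum_mul_sq_le_sq_mul_sq _ _ _
    _ = _ := by rw [h3, one_mul]

variable {V : Type*} [NormedAddCommGroup V] [InnerProductSpace ℝ V] [FiniteDimensional ℝ V]
  [MeasurableSpace V] [BorelSpace V]

/-- A square-integrable function supported in the ball of radius `R ≥ 1`. -/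
structure BallSupported (φ : V → ℂ) (R : ℝ) : Prop where
  one_le : 1 ≤ R
  memLp : MemLp φ 2
  eq_zero : ∀ x, R < ‖x‖ → φ x = 0

namespace BallSupported

variable {φ : V → ℂ} {R : ℝ}

theorem integrable (h : BallSupported φ R) : Integrable φ := by
  have : IsFiniteMeasure (volume.restrict (closedBall (0 : V) R)) :=
    ⟨by simpa using measure_closedBall_lt_top⟩
  have h1 : IntegrableOn φ (closedBall 0 R) :=
    (h.memLp.restrict _).integrable (by norm_num)
  refine (integrableOn_iff_integrable_of_support_subset fun x hx => ?_).1 h1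
  by_contra hc
  exact hx (h.eq_zero x (by simpa using hc))

theorem mul_inner (h : BallSupported φ R) (e : V) :
    BallSupported (fun x => -(2 * π * I) * ((⟪x, e⟫ : ℝ) : ℂ) * φ x) R where
  one_le := h.one_le
  eq_zero x hx := by rw [h.eq_zero x hx, mul_zero]
  memLp := by
    refine h.memLp.of_le_mul (c := 2 * π * (R * ‖e‖)) ?_ (.of_forall fun x => ?_)
    · exact (by fun_prop : Continuous fun x : V =>
        -(2 * π * I) * ((⟪x, e⟫ : ℝ) : ℂ)).aestronglyMeasurable.mul h.memLp.1
    · rcases le_or_gt ‖x‖ R with hx | hx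
      · rw [norm_mul]
        gcongr
        rw [norm_mul]
        gcongr
        · simp [abs_of_pos pi_pos]
        · rw [norm_real]
          exact (norm_inner_le_norm x e).trans (by gcongr)
      · simp [h.eq_zero x hx]

theorem hasFDerivAt (h : BallSupported φ R) (ξ : V) :
    ∃ L : V →L[ℝ] ℂ, HasFDerivAt (𝓕 φ) L ξ ∧
      ∀ e, L e = 𝓕 (fun x => -(2 * π * I) * ((⟪x, e⟫ : ℝ) : ℂ) * φ x) ξ := by
  have hi : Integrable (fun v => ‖v‖ * ‖φ v‖) := by
    refine (h.integrable.norm.const_mul R).mono' ?_ (.of_forall fun x => ?_)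
    · exact continuous_norm.aestronglyMeasurable.mul h.integrable.norm.1
    · rw [norm_mul, norm_norm, norm_norm]
      rcases le_or_gt ‖x‖ R with hx | hx
      · gcongr
      · simp [h.eq_zero x hx]
  refine ⟨_, Real.hasFDerivAt_fourier h.integrable hi ξ, fun e => ?_⟩
  have hi2 : Integrable (fourierSMulRight (innerSL ℝ) φ) :=
    (hi.const_mul (2 * π * ‖(innerSL ℝ : V →L[ℝ] V →L[ℝ] ℝ)‖)).mono'
      h.integrable.1.fourierSMulRight (.of_forall fun v =>
        (norm_fourierSMulRight_le _ _ _).trans_eq (by ring))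
  rw [Real.fourier_continuousLinearMap_apply hi2]
  refine congrArg (fun g : V → ℂ => 𝓕 g ξ) (funext fun x => ?_)
  simp only [fourierSMulRight_apply, smul_eq_mul, mul_assoc, real_smul]
  rfl

theorem integral_norm_le (h : BallSupported φ R) :
    (∫ x, ‖φ x‖) ^ 2 ≤ (volume : Measure V).real (ball 0 1) * R ^ Module.finrank ℝ V *
      ∫ x, ‖φ x‖ ^ 2 := by
  have : IsFiniteMeasure (volume.restrict (closedBall (0 : V) R)) :=
    ⟨by simpa using measure_closedBall_lt_top⟩
  have hR : 0 ≤ R := zero_le_one.trans h.one_le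
  have h1 : ∫ x, ‖φ x‖ = ∫ x in closedBall (0 : V) R, ‖φ x‖ * ‖(1 : ℝ)‖ := by
    simp only [norm_one, mul_one]
    refine (setIntegral_eq_integral_of_forall_compl_eq_zero fun x hx => ?_).symm
    rw [h.eq_zero x (by simpa using hx), norm_zero]
  have h2 := (integral_norm_mul_norm_le (h.memLp.restrict (closedBall 0 R))
    (memLp_const (μ := volume.restrict (closedBall (0 : V) R)) (1 : ℝ))).2
  have h3 : ∫ x in closedBall (0 : V) R, ‖φ x‖ ^ 2 ≤ ∫ x, ‖φ x‖ ^ 2 :=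
    setIntegral_le_integral ((memLp_two_iff_integrable_sq_norm h.memLp.1).1 h.memLp)
      (.of_forall fun x => by positivity)
  have h4 : (volume : Measure V).real (closedBall 0 R) =
      R ^ Module.finrank ℝ V * (volume : Measure V).real (ball 0 1) :=
    Measure.addHaar_real_closedBall _ _ hR
  rw [h1]
  have h0 : 0 ≤ ∫ x in closedBall (0 : V) R, ‖φ x‖ ^ 2 := integral_nonneg fun _ => by positivity
  calc _ ≤ (√(∫ x in closedBall (0 : V) R, ‖φ x‖ ^ 2) *
        √(∫ x in closedBall (0 : V) R, ‖(1 : ℝ)‖ ^ 2)) ^ 2 := by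
        gcongr
    _ = (∫ x in closedBall (0 : V) R, ‖φ x‖ ^ 2) *
        (volume : Measure V).real (closedBall 0 R) := by
        rw [mul_pow, sq_sqrt h0, sq_sqrt (by positivity)]; simp
    _ ≤ (∫ x, ‖φ x‖ ^ 2) * (volume : Measure V).real (closedBall 0 R) := by gcongr
    _ = _ := by rw [h4]; ring

theorem integral_fourier_sq (h : BallSupported φ R) :
    Integrable (fun ξ => ‖𝓕 φ ξ‖ ^ 2) ∧ ∫ ξ, ‖𝓕 φ ξ‖ ^ 2 = ∫ x, ‖φ x‖ ^ 2 := by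
  have hm := memLp_two_fourier h.integrable h.memLp
  refine ⟨(memLp_two_iff_integrable_sq_norm hm.1).1 hm, ?_⟩
  have h1 := integral_fourier_mul_conj_fourier h.integrable h.memLp h.integrable h.memLp
  simp only [mul_conj, normSq_eq_norm_sq] at h1
  rw [integral_complex_ofReal, integral_complex_ofReal] at h1
  exact_mod_cast h1

end BallSupported

end SingleScale

section SingleScale

open Set Metric FourierTransform

variable {V : Type*} [NormedAddCommGroup V] [InnerProductSpace ℝ V] [FiniteDimensional ℝ V]
  [MeasurableSpace V] [BorelSpace V]

/-- For almost every direction, the Fourier transform of a function supported in a ball is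
controlled along the corresponding ray, with a bound that is square integrable over the sphere. -/
theorem BallSupported.exists_rayBound {d : ℕ} (hd : Module.finrank ℝ V = d + 1) :
    ∃ C, 0 ≤ C ∧ ∀ (φ : V → ℂ) (R : ℝ), BallSupported φ R → ∃ N : sphere (0 : V) 1 → ℝ,
      (∀ᵐ ω : sphere (0 : V) 1 ∂(volume : Measure V).toSphere,
        RayBound d (fun r : ℝ => 𝓕 φ (r • (ω : V))) R (N ω)) ∧
      MemLp N 2 (volume : Measure V).toSphere ∧
      ∫ ω, ‖N ω‖ ^ 2 ∂(volume : Measure V).toSphere ≤ C * (R * ∫ x, ‖φ x‖ ^ 2) := by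
  set σ := (volume : Measure V).toSphere with hσ
  set c := (volume : Measure V).real (ball 0 1) with hc
  have hc0 : 0 ≤ c := measureReal_nonneg
  refine ⟨1 + (2 * π) ^ 2 + c * σ.real univ, by positivity, fun φ R h => ?_⟩
  have hR1 := h.one_le
  have hR : 0 < R := zero_lt_one.trans_le hR1
  set P := ∫ x, ‖φ x‖ ^ 2 with hP
  have hP0 : 0 ≤ P := integral_nonneg fun _ => by positivity
  let b := stdOrthonormalBasis ℝ V
  let ψ : V → V → ℂ := fun e x => -(2 * π * I) * ((⟪x, e⟫ : ℝ) : ℂ) * φ x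
  have hψ : ∀ e, BallSupported (ψ e) R := h.mul_inner
  let D : V → ℝ := fun ξ => ∑ j, ‖𝓕 (ψ (b j)) ξ‖ ^ 2
  have hD : Integrable D := integrable_finsetSum _ fun j _ => (hψ (b j)).integral_fourier_sq.1
  have hDle : ∫ ξ, D ξ ≤ (2 * π * R) ^ 2 * P := by
    have hsq : ∀ e, Integrable fun x => ‖ψ e x‖ ^ 2 := fun e =>
      (memLp_two_iff_integrable_sq_norm (hψ e).memLp.1).1 (hψ e).memLp
    have e1 : ∫ ξ, D ξ = ∫ x, ∑ j, ‖ψ (b j) x‖ ^ 2 := by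
      rw [integral_finsetSum _ fun j _ => (hψ (b j)).integral_fourier_sq.1,
        integral_finsetSum _ fun j _ => hsq (b j)]
      exact Finset.sum_congr rfl fun j _ => (hψ (b j)).integral_fourier_sq.2
    rw [e1, hP, ← integral_const_mul]
    refine integral_mono (integrable_finsetSum _ fun j _ => hsq (b j))
      (((memLp_two_iff_integrable_sq_norm h.memLp.1).1 h.memLp).const_mul _) fun x => ?_
    have e2 : ∑ j, ‖ψ (b j) x‖ ^ 2 = (2 * π * ‖x‖) ^ 2 * ‖φ x‖ ^ 2 := by
      have e3 := b.sum_sq_norm_inner_left x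
      rw [mul_pow _ ‖x‖, ← e3, Finset.mul_sum, Finset.sum_mul]
      refine Finset.sum_congr rfl fun j _ => ?_
      simp [ψ, abs_of_pos pi_pos, mul_pow]
    simp only
    rw [e2]
    rcases le_or_gt ‖x‖ R with hx | hx
    · gcongr
    · simp [h.eq_zero x hx]
  obtain ⟨a1, a2, a3⟩ := integral_polar hd h.integral_fourier_sq.1
  obtain ⟨b1, b2, b3⟩ := integral_polar hd hD
  simp only [smul_eq_mul] at a1 a2 a3 b1 b2 b3
  set I₁ : sphere (0 : V) 1 → ℝ := fun ω => ∫ r in Ioi (0 : ℝ), r ^ d * ‖𝓕 φ (r • (ω : V))‖ ^ 2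
    with hI₁
  set I₂ : sphere (0 : V) 1 → ℝ := fun ω => ∫ r in Ioi (0 : ℝ), r ^ d * D (r • (ω : V)) with hI₂
  have hI₁0 : ∀ ω, 0 ≤ I₁ ω := fun ω => setIntegral_nonneg measurableSet_Ioi fun r hr => by
    have : (0 : ℝ) < r := hr
    positivity
  have hD0 : ∀ ξ, 0 ≤ D ξ := fun ξ => Finset.sum_nonneg fun _ _ => by positivity
  have hI₂0 : ∀ ω, 0 ≤ I₂ ω := fun ω => setIntegral_nonneg measurableSet_Ioi fun r hr => by
    have : (0 : ℝ) < r := hr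
    have := hD0 (r • (ω : V))
    positivity
  set Q : sphere (0 : V) 1 → ℝ := fun ω => R * I₁ ω + R⁻¹ * I₂ ω + c * R * P with hQ
  have hQ0 : ∀ ω, 0 ≤ Q ω := fun ω => by
    have := hI₁0 ω
    have := hI₂0 ω
    simp only [hQ]; positivity
  have hQi : Integrable Q σ := ((a2.const_mul R).add (b2.const_mul R⁻¹)).add (integrable_const _)
  have hNsq : ∀ ω, ‖√(Q ω)‖ ^ 2 = Q ω := fun ω => by
    rw [norm_eq_abs, sq_abs, sq_sqrt (hQ0 ω)]
  refine ⟨fun ω => √(Q ω), ?_, ?_, ?_⟩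
  · filter_upwards [a1, b1] with ω hω1 hω2
    have hωn : ‖(ω : V)‖ = 1 := by simp
    have hv : ∀ r : ℝ, HasDerivAt (fun r : ℝ => 𝓕 φ (r • (ω : V))) (𝓕 (ψ ω) (r • (ω : V))) r ∧
        ‖𝓕 (ψ ω) (r • (ω : V))‖ ^ 2 ≤ D (r • (ω : V)) := by
      intro r
      obtain ⟨L, hL, hLe⟩ := h.hasFDerivAt (r • (ω : V))
      constructor
      · have h1 : HasDerivAt (fun r : ℝ => r • (ω : V)) ((1 : ℝ) • (ω : V)) r :=
          (hasDerivAt_id r).smul_const _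
        have h2 := hL.comp_hasDerivAt r h1
        rw [one_smul, hLe] at h2
        exact h2
      · have h1 := norm_sq_apply_le_sum b L hωn
        simp only [hLe] at h1
        exact h1
    have hcont : Continuous fun r : ℝ => 𝓕 (ψ ω) (r • (ω : V)) :=
      (continuous_fourier_of_integrable (hψ ω).integrable).comp (by fun_prop)
    have hb : ∀ r ∈ Ioi (0 : ℝ), r ^ d * ‖𝓕 (ψ ω) (r • (ω : V))‖ ^ 2 ≤
        r ^ d * D (r • (ω : V)) := by
      intro r hr
      have : (0 : ℝ) < r := hr
      gcongr
      exact (hv r).2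
    have hi' : IntegrableOn (fun r : ℝ => r ^ d * ‖𝓕 (ψ ω) (r • (ω : V))‖ ^ 2) (Ioi 0) := by
      refine Integrable.mono' hω2 (by fun_prop) ?_
      filter_upwards [ae_restrict_mem measurableSet_Ioi] with r hr
      have hr0 : (0 : ℝ) < r := hr
      rw [norm_of_nonneg (by positivity)]
      exact hb r hr
    have hsq : √(Q ω) ^ 2 = Q ω := sq_sqrt (hQ0 ω)
    have h1 := hI₁0 ω
    have h2 := hI₂0 ω
    refine RayBound.of_hasDerivAt hR1 (sqrt_nonneg _) (fun r => (hv r).1) hcont hω1 ?_ hi' ?_ ?_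
    · rw [hsq]
      have : 0 ≤ R⁻¹ * I₂ ω + c * R * P := by positivity
      simp only [hQ]; linarith
    · rw [hsq]
      calc _ ≤ I₂ ω := setIntegral_mono_on hi' hω2 measurableSet_Ioi hb
        _ = R * (R⁻¹ * I₂ ω) := by field_simp
        _ ≤ R * Q ω := by
          have : 0 ≤ R * I₁ ω + c * R * P := by positivity
          gcongr
          simp only [hQ]; linarith
    · intro r
      rw [hsq]
      calc ‖𝓕 φ (r • (ω : V))‖ ^ 2 ≤ (∫ x, ‖φ x‖) ^ 2 := by
            gcongr; exact norm_fourier_le_integral_norm _ _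
        _ ≤ c * R ^ (d + 1) * P := by rw [← hd]; exact h.integral_norm_le
        _ = R ^ d * (c * R * P) := by ring
        _ ≤ R ^ d * Q ω := by
          have : 0 ≤ R * I₁ ω + R⁻¹ * I₂ ω := by positivity
          gcongr
          simp only [hQ]; linarith
  · have hm : AEStronglyMeasurable (fun ω => √(Q ω)) σ :=
      Real.continuous_sqrt.comp_aestronglyMeasurable hQi.1
    rw [memLp_two_iff_integrable_sq_norm hm]
    simpa only [hNsq] using hQi
  · simp only [hNsq]
    calc ∫ ω, Q ω ∂σ = R * (∫ ω, I₁ ω ∂σ) + R⁻¹ * (∫ ω, I₂ ω ∂σ) + σ.real univ * (c * R * P) := by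
          simp only [hQ]
          have hs : Integrable (fun ω => R * I₁ ω + R⁻¹ * I₂ ω) σ :=
            (a2.const_mul R).add (b2.const_mul R⁻¹)
          rw [integral_add hs (integrable_const _),
            integral_add (a2.const_mul R) (b2.const_mul R⁻¹), integral_const_mul,
            integral_const_mul, integral_const, smul_eq_mul]
      _ ≤ R * P + R⁻¹ * ((2 * π * R) ^ 2 * P) + σ.real univ * (c * R * P) := by
          rw [a3, b3, h.integral_fourier_sq.2]
          gcongr
      _ = _ := by field_simp

end SingleScale

section Resolvent

open Set Metric FourierTransform

variable {V : Type*} [NormedAddCommGroup V] [InnerProductSpace ℝ V]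

/-- A continuous symbol, positively homogeneous of degree one and elliptic. -/
structure EllipticSymbol (a : V → ℝ) : Prop where
  cont : Continuous a
  hom : ∀ t : ℝ, 0 < t → ∀ ξ, a (t • ξ) = t * a ξ
  pos : ∀ ξ, ξ ≠ 0 → 0 < a ξ

/-- The symbol `|η|^(m-1) / (τ - a(η)^m - iε)`. -/
def resolventSymbol (a : V → ℝ) (m τ ε : ℝ) (η : V) : ℂ :=
  ((‖η‖ ^ (m - 1) : ℝ) : ℂ) / ((τ : ℂ) - ((a η ^ m : ℝ) : ℂ) - ε * I)

namespace EllipticSymbol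

variable {a : V → ℝ}

theorem map_zero (h : EllipticSymbol a) : a 0 = 0 := by
  have := h.hom 2 two_pos 0
  rw [smul_zero] at this
  linarith

theorem nonneg (h : EllipticSymbol a) (ξ : V) : 0 ≤ a ξ := by
  rcases eq_or_ne ξ 0 with rfl | hξ
  · exact h.map_zero.ge
  · exact (h.pos ξ hξ).le

theorem exists_lower_bound [FiniteDimensional ℝ V] (h : EllipticSymbol a) :
    ∃ c, 0 < c ∧ ∀ ξ, c * ‖ξ‖ ≤ a ξ := by
  obtain ⟨c, hc, hcs⟩ : ∃ c, 0 < c ∧ ∀ ω ∈ sphere (0 : V) 1, c ≤ a ω := by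
    rcases (sphere (0 : V) 1).eq_empty_or_nonempty with he | hne
    · exact ⟨1, one_pos, by simp [he]⟩
    · obtain ⟨ω, hω, hmin⟩ := (isCompact_sphere (0 : V) 1).exists_isMinOn hne h.cont.continuousOn
      refine ⟨a ω, h.pos ω ?_, fun ω' hω' => hmin hω'⟩
      rintro rfl
      simp at hω
  refine ⟨c, hc, fun ξ => ?_⟩
  rcases eq_or_ne ξ 0 with rfl | hξ
  · simp [h.map_zero]
  · have hn : 0 < ‖ξ‖ := norm_pos_iff.2 hξ
    have h1 := hcs (‖ξ‖⁻¹ • ξ) (by simp [norm_smul, hn.ne'])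
    rw [h.hom _ (inv_pos.2 hn)] at h1
    calc c * ‖ξ‖ ≤ (‖ξ‖⁻¹ * a ξ) * ‖ξ‖ := by gcongr
      _ = a ξ := by field_simp

end EllipticSymbol

theorem measurable_resolventSymbol {W : Type*} [NormedAddCommGroup W] [MeasurableSpace W]
    [BorelSpace W] {a : W → ℝ}
    (ha : Continuous a) (m τ ε : ℝ) : Measurable (resolventSymbol a m τ ε) := by
  have := ha.measurable
  unfold resolventSymbol
  fun_prop

theorem exists_norm_resolventSymbol_le [FiniteDimensional ℝ V] {a : V → ℝ}
    (ha : EllipticSymbol a) {m : ℝ} (hm : 1 < m) (τ : ℝ) {ε : ℝ} (hε : ε ≠ 0) :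
    ∃ K, ∀ η, ‖resolventSymbol a m τ ε η‖ ≤ K := by
  obtain ⟨c, hc, hca⟩ := ha.exists_lower_bound
  have hcm : 0 < c ^ m := rpow_pos_of_pos hc m
  have hε' : 0 < |ε| := abs_pos.2 hε
  refine ⟨(1 + |τ| / c ^ m) / |ε| + 1 / c ^ m, fun η => ?_⟩
  set z : ℂ := (τ : ℂ) - ((a η ^ m : ℝ) : ℂ) - ε * I with hz
  have h1 : |ε| ≤ ‖z‖ := by
    have := abs_im_le_norm z
    simpa [hz] using this
  have h2 : a η ^ m - |τ| ≤ ‖z‖ := by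
    have h3 := abs_re_le_norm z
    have h4 : z.re = τ - a η ^ m := by simp [hz]
    rw [h4] at h3
    have := neg_abs_le (τ - a η ^ m)
    have := le_abs_self τ
    linarith
  have hz0 : 0 < ‖z‖ := hε'.trans_le h1
  have h3 : ‖η‖ ^ (m - 1) ≤ 1 + ‖η‖ ^ m := by
    have hn := norm_nonneg η
    rcases le_total ‖η‖ 1 with h | h
    · have : ‖η‖ ^ (m - 1) ≤ 1 := rpow_le_one hn h (by linarith)
      have : 0 ≤ ‖η‖ ^ m := by positivity
      linarith
    · have : ‖η‖ ^ (m - 1) ≤ ‖η‖ ^ m := rpow_le_rpow_of_exponent_le h (by linarith)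
      linarith
  have h4 : ‖η‖ ^ m ≤ (‖z‖ + |τ|) / c ^ m := by
    rw [le_div_iff₀ hcm, mul_comm, ← mul_rpow hc.le (norm_nonneg η)]
    have : (c * ‖η‖) ^ m ≤ a η ^ m := by
      gcongr
      exact hca η
    linarith
  rw [resolventSymbol, norm_div, norm_real, norm_of_nonneg (by positivity), ← hz, div_le_iff₀ hz0]
  calc ‖η‖ ^ (m - 1) ≤ 1 + (‖z‖ + |τ|) / c ^ m := by linarith
    _ = (1 + |τ| / c ^ m) / |ε| * |ε| + 1 / c ^ m * ‖z‖ := by field_simp; ring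
    _ ≤ (1 + |τ| / c ^ m) / |ε| * ‖z‖ + 1 / c ^ m * ‖z‖ := by gcongr
    _ = _ := by ring

variable [FiniteDimensional ℝ V] [MeasurableSpace V] [BorelSpace V]

/-- The resolvent form `∫ |η|^(m-1) φ̂ \bar{γ̂} / (τ - a(η)^m - iε)`. -/
def resolventForm (a : V → ℝ) (m τ ε : ℝ) (φ γ : V → ℂ) : ℂ :=
  ∫ η, resolventSymbol a m τ ε η * (𝓕 φ η * (starRingEnd ℂ) (𝓕 γ η))

theorem integrable_resolventForm {a : V → ℝ} (ha : EllipticSymbol a) {m : ℝ} (hm : 1 < m)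
    (τ : ℝ) {ε : ℝ} (hε : ε ≠ 0) {f g : V → ℂ} (hf : MemLp f 2) (hg : MemLp g 2) :
    Integrable fun η => resolventSymbol a m τ ε η * (f η * (starRingEnd ℂ) (g η)) := by
  obtain ⟨K, hK⟩ := exists_norm_resolventSymbol_le ha hm τ hε
  refine Integrable.bdd_mul (c := K) ?_
    (measurable_resolventSymbol ha.cont m τ ε).aestronglyMeasurable (.of_forall hK)
  exact hf.integrable_mul hg.star

/-- The resolvent form on functions supported in balls, with an explicit dependence on the radii
that is uniform in the spectral parameter. -/
theorem exists_norm_resolventForm_le_of_ballSupported {d : ℕ} (hd : 1 ≤ d)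
    (hV : Module.finrank ℝ V = d + 1) {a : V → ℝ} (ha : EllipticSymbol a) {m κ : ℝ} (hm : 1 < m)
    (hκ : 0 < κ) (hκ2 : κ ≤ 1 / 2) :
    ∃ C, 0 ≤ C ∧ ∀ τ ε : ℝ, ε ≠ 0 → ∀ (φ γ : V → ℂ) (R S : ℝ), BallSupported φ R →
      BallSupported γ S → ‖resolventForm a m τ ε φ γ‖ ≤
        C * (R ^ (κ + 1 / 2) * √(∫ x, ‖φ x‖ ^ 2)) * (S ^ (κ + 1 / 2) * √(∫ x, ‖γ x‖ ^ 2)) := by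
  obtain ⟨C, hC, hray⟩ := exists_norm_integral_ray_le hd hm hκ hκ2
  obtain ⟨C', hC', hN⟩ := BallSupported.exists_rayBound hV
  obtain ⟨c, hc, hca⟩ := ha.exists_lower_bound
  refine ⟨(c ^ m)⁻¹ * C * C', by positivity, fun τ ε hε φ γ R S hφ hγ => ?_⟩
  have hR : 0 < R := zero_lt_one.trans_le hφ.one_le
  have hS : 0 < S := zero_lt_one.trans_le hγ.one_le
  obtain ⟨N, hN1, hN2, hN3⟩ := hN φ R hφ
  obtain ⟨M, hM1, hM2, hM3⟩ := hN γ S hγ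
  have hInt := integrable_resolventForm ha hm τ hε (memLp_two_fourier hφ.integrable hφ.memLp)
    (memLp_two_fourier hγ.integrable hγ.memLp)
  obtain ⟨-, h2, h3⟩ := integral_polar hV hInt
  rw [resolventForm, ← h3]
  obtain ⟨hNM, hNMle⟩ := integral_norm_mul_norm_le hN2 hM2
  have hpt : ∀ᵐ ω : sphere (0 : V) 1 ∂(volume : Measure V).toSphere,
      ‖∫ r in Ioi (0 : ℝ), r ^ d • (resolventSymbol a m τ ε (r • (ω : V)) *
        (𝓕 φ (r • (ω : V)) * (starRingEnd ℂ) (𝓕 γ (r • (ω : V)))))‖ ≤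
      (c ^ m)⁻¹ * C * (R * S) ^ κ * (‖N ω‖ * ‖M ω‖) := by
    filter_upwards [hN1, hM1] with ω hω1 hω2
    have hω : ‖(ω : V)‖ = 1 := by simp
    have hcω : c ≤ a ω := by simpa [hω] using hca ω
    set β := a ω ^ m with hβ
    have hβ0 : 0 < β := rpow_pos_of_pos (hc.trans_le hcω) m
    have hcβ : β⁻¹ ≤ (c ^ m)⁻¹ := by
      have : c ^ m ≤ β := by rw [hβ]; gcongr
      have : 0 < c ^ m := by positivity
      gcongr
    have e1 : ∫ r in Ioi (0 : ℝ), r ^ d • (resolventSymbol a m τ ε (r • (ω : V)) *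
        (𝓕 φ (r • (ω : V)) * (starRingEnd ℂ) (𝓕 γ (r • (ω : V))))) =
      ((β⁻¹ : ℝ) : ℂ) * ∫ r in Ioi (0 : ℝ),
        ((r ^ (m - 1) : ℝ) : ℂ) / (((τ / β : ℝ) : ℂ) - ((r ^ m : ℝ) : ℂ) - ((ε / β : ℝ) : ℂ) * I) *
        (((r ^ d : ℝ) : ℂ) * (𝓕 φ (r • (ω : V)) * (starRingEnd ℂ) (𝓕 γ (r • (ω : V))))) := by
      rw [← integral_const_mul]
      refine setIntegral_congr_fun measurableSet_Ioi fun r hr => ?_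
      have hr0 : (0 : ℝ) < r := hr
      have hβc : (β : ℂ) ≠ 0 := by exact_mod_cast hβ0.ne'
      have e2 : resolventSymbol a m τ ε (r • (ω : V)) = ((β⁻¹ : ℝ) : ℂ) *
          (((r ^ (m - 1) : ℝ) : ℂ) /
            (((τ / β : ℝ) : ℂ) - ((r ^ m : ℝ) : ℂ) - ((ε / β : ℝ) : ℂ) * I)) := by
        rw [resolventSymbol, norm_smul, hω, mul_one, norm_of_nonneg hr0.le, ha.hom r hr0,
          mul_rpow hr0.le (ha.nonneg _), ← hβ]
        have e3 : (((τ / β : ℝ) : ℂ) - ((r ^ m : ℝ) : ℂ) - ((ε / β : ℝ) : ℂ) * I) =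
            ((τ : ℂ) - ((r ^ m * β : ℝ) : ℂ) - ε * I) / β := by
          push_cast; field_simp
        rw [e3]
        push_cast
        field_simp
      rw [e2, real_smul]
      push_cast
      ring
    rw [e1, norm_mul, norm_real, norm_of_nonneg (by positivity)]
    have h4 := hray (τ / β) (ε / β) (div_ne_zero hε hβ0.ne') _ _ R S _ _ hω1 hω2
    rw [norm_of_nonneg hω1.nonneg, norm_of_nonneg hω2.nonneg]
    have hN0 := hω1.nonneg
    have hM0 := hω2.nonneg
    calc _ ≤ β⁻¹ * (C * ((R * S) ^ κ * N ω * M ω)) := by gcongr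
      _ ≤ (c ^ m)⁻¹ * (C * ((R * S) ^ κ * N ω * M ω)) := by gcongr
      _ = _ := by ring
  refine (norm_integral_le_of_norm_le (hNM.const_mul _) hpt).trans ?_
  rw [integral_const_mul]
  have hsq : ∀ x : ℝ, 0 < x → ∀ y : ℝ, √(C' * (x * y)) = √C' * x ^ (1 / 2 : ℝ) * √y := by
    intro x hx y
    rw [Real.sqrt_mul hC', Real.sqrt_mul hx.le, Real.sqrt_eq_rpow x]; ring
  calc (c ^ m)⁻¹ * C * (R * S) ^ κ * ∫ ω, ‖N ω‖ * ‖M ω‖ ∂(volume : Measure V).toSphere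
      ≤ (c ^ m)⁻¹ * C * (R * S) ^ κ * (√(C' * (R * ∫ x, ‖φ x‖ ^ 2)) *
          √(C' * (S * ∫ x, ‖γ x‖ ^ 2))) := by
        gcongr
        exact hNMle.trans (by gcongr)
    _ = _ := by
        rw [hsq R hR, hsq S hS, mul_rpow hR.le hS.le, rpow_add hR, rpow_add hS]
        have : √C' * √C' = C' := mul_self_sqrt hC'
        linear_combination ((c ^ m)⁻¹ * C * R ^ κ * S ^ κ * R ^ (1 / 2 : ℝ) * S ^ (1 / 2 : ℝ) *
          √(∫ x, ‖φ x‖ ^ 2) * √(∫ x, ‖γ x‖ ^ 2)) * this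

end Resolvent

section Weighted

open Set Metric FourierTransform

variable {V : Type*} [NormedAddCommGroup V]

/-- The weight `⟨x⟩ = (1 + |x|²)^(1/2)`. -/
def bracket (x : V) : ℝ := √(1 + ‖x‖ ^ 2)

theorem one_le_bracket (x : V) : 1 ≤ bracket x := by
  rw [bracket, Real.one_le_sqrt]
  nlinarith [sq_nonneg ‖x‖]

theorem bracket_pos (x : V) : 0 < bracket x := zero_lt_one.trans_le (one_le_bracket x)

theorem norm_le_bracket (x : V) : ‖x‖ ≤ bracket x :=
  Real.le_sqrt_of_sq_le (by linarith)

theorem continuous_bracket : Continuous (bracket : V → ℝ) := by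
  unfold bracket; fun_prop

theorem continuous_bracket_rpow (δ : ℝ) : Continuous fun x : V => bracket x ^ δ :=
  continuous_bracket.rpow_const fun x => .inl (bracket_pos x).ne'

/-- The dyadic shell `2^k ≤ ⟨x⟩ < 2^(k+1)`. -/
def dyadicShell (V : Type*) [NormedAddCommGroup V] (k : ℕ) : Set V :=
  {x | 2 ^ k ≤ bracket x ∧ bracket x < 2 ^ (k + 1)}

theorem measurableSet_dyadicShell [MeasurableSpace V] [BorelSpace V] (k : ℕ) :
    MeasurableSet (dyadicShell V k) :=
  (measurableSet_le measurable_const continuous_bracket.measurable).inter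
    (measurableSet_lt continuous_bracket.measurable measurable_const)

theorem sum_indicator_dyadicShell (φ : V → ℂ) (J : ℕ) (x : V) :
    ∑ k ∈ Finset.range J, (dyadicShell V k).indicator φ x =
      {x | bracket x < 2 ^ J}.indicator φ x := by
  induction J with
  | zero =>
    have : x ∉ {x : V | bracket x < 2 ^ 0} := by simpa using one_le_bracket x
    rw [indicator_of_notMem this, Finset.sum_range_zero]
  | succ J ih =>
    rw [Finset.sum_range_succ, ih]
    have h2 : (2 : ℝ) ^ J ≤ 2 ^ (J + 1) := by gcongr <;> simp
    rcases lt_or_ge (bracket x) (2 ^ J) with h | h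
    · rw [indicator_of_mem (by exact h), indicator_of_notMem (by simp [dyadicShell, h]),
        indicator_of_mem (show x ∈ {x : V | bracket x < 2 ^ (J + 1)} from h.trans_le h2), add_zero]
    · rw [indicator_of_notMem (by simpa using h), zero_add]
      by_cases h3 : bracket x < 2 ^ (J + 1)
      · rw [indicator_of_mem (show x ∈ dyadicShell V J from ⟨h, h3⟩),
          indicator_of_mem (by exact h3)]
      · rw [indicator_of_notMem (by simp [dyadicShell, h3]), indicator_of_notMem (by exact h3)]

variable [InnerProductSpace ℝ V] [FiniteDimensional ℝ V] [MeasurableSpace V] [BorelSpace V]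

/-- Integrable functions in the weighted space `⟨x⟩^(-δ) L²`. -/
structure WeightedL2 (δ : ℝ) (φ : V → ℂ) : Prop where
  integrable : Integrable φ
  weighted : Integrable fun x => (bracket x ^ δ * ‖φ x‖) ^ 2

/-- The norm of the weighted space `⟨x⟩^(-δ) L²`. -/
def weightedNorm (δ : ℝ) (φ : V → ℂ) : ℝ := √(∫ x, (bracket x ^ δ * ‖φ x‖) ^ 2)

theorem weightedNorm_nonneg (δ : ℝ) (φ : V → ℂ) : 0 ≤ weightedNorm δ φ := Real.sqrt_nonneg _

namespace WeightedL2

variable {δ : ℝ} {φ : V → ℂ}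

theorem memLp (h : WeightedL2 δ φ) (hδ : 0 ≤ δ) : MemLp φ 2 := by
  refine (memLp_two_iff_integrable_sq_norm h.integrable.aestronglyMeasurable).2 ?_
  refine h.weighted.mono' (h.integrable.aestronglyMeasurable.norm.pow 2) (.of_forall fun x => ?_)
  rw [norm_of_nonneg (by positivity)]
  have : 1 ≤ bracket x ^ δ := Real.one_le_rpow (one_le_bracket x) hδ
  have h2 : ‖φ x‖ ≤ bracket x ^ δ * ‖φ x‖ := le_mul_of_one_le_left (norm_nonneg _) this
  gcongr

theorem sqrt_integral_indicator_le (h : WeightedL2 δ φ) (hδ : 0 ≤ δ) {s : Set V}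
    {r : ℝ} (hr : 0 < r) (hs : ∀ x ∈ s, r ≤ bracket x) :
    √(∫ x, ‖s.indicator φ x‖ ^ 2) ≤ r ^ (-δ) * weightedNorm δ φ := by
  have h1 : ∫ x, ‖s.indicator φ x‖ ^ 2 ≤ ∫ x, (r ^ (-δ)) ^ 2 * (bracket x ^ δ * ‖φ x‖) ^ 2 := by
    refine integral_mono_of_nonneg (.of_forall fun x => by positivity)
      (h.weighted.const_mul _) (.of_forall fun x => ?_)
    by_cases hx : x ∈ s
    · simp only [indicator_of_mem hx]
      rw [← mul_pow, ← mul_assoc]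
      have : 1 ≤ r ^ (-δ) * bracket x ^ δ := by
        rw [rpow_neg hr.le, inv_mul_eq_div, one_le_div (rpow_pos_of_pos hr δ)]
        exact rpow_le_rpow hr.le (hs x hx) hδ
      have h2 := le_mul_of_one_le_left (norm_nonneg (φ x)) this
      gcongr
    · simp only [indicator_of_notMem hx, norm_zero, ne_eq, OfNat.ofNat_ne_zero, not_false_eq_true,
        zero_pow]
      exact mul_nonneg (sq_nonneg _) (sq_nonneg _)
  refine (Real.sqrt_le_sqrt h1).trans ?_
  rw [integral_const_mul, Real.sqrt_mul (by positivity), Real.sqrt_sq (by positivity), weightedNorm]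

end WeightedL2

theorem norm_resolventForm_le {a : V → ℝ} {m τ ε K : ℝ}
    (hK : ∀ η, ‖resolventSymbol a m τ ε η‖ ≤ K) {φ γ : V → ℂ} (hφ : Integrable φ) (hφ2 : MemLp φ 2)
    (hγ : Integrable γ) (hγ2 : MemLp γ 2) :
    ‖resolventForm a m τ ε φ γ‖ ≤ K * (√(∫ x, ‖φ x‖ ^ 2) * √(∫ x, ‖γ x‖ ^ 2)) := by
  have hplanch : ∀ {f : V → ℂ}, Integrable f → MemLp f 2 →
      ∫ x, ‖𝓕 f x‖ ^ 2 = ∫ x, ‖f x‖ ^ 2 := by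
    intro f hf hf2
    have h := integral_fourier_mul_conj_fourier hf hf2 hf hf2
    simp only [mul_conj, normSq_eq_norm_sq] at h
    rw [integral_complex_ofReal, integral_complex_ofReal] at h
    exact_mod_cast h
  obtain ⟨h1, h2⟩ := integral_norm_mul_norm_le (memLp_two_fourier hφ hφ2) (memLp_two_fourier hγ hγ2)
  rw [hplanch hφ hφ2, hplanch hγ hγ2] at h2
  have hK0 : 0 ≤ K := (norm_nonneg _).trans (hK 0)
  refine (norm_integral_le_of_norm_le (h1.const_mul K) (.of_forall fun η => ?_)).trans ?_
  · rw [norm_mul, norm_mul, RCLike.norm_conj]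
    gcongr
    exact hK η
  · rw [integral_const_mul]
    gcongr

theorem resolventForm_sum {ι : Type*} {a : V → ℝ} (ha : EllipticSymbol a) {m : ℝ} (hm : 1 < m)
    (τ : ℝ) {ε : ℝ} (hε : ε ≠ 0) (s : Finset ι) {φ γ : ι → V → ℂ}
    (hφ : ∀ i, Integrable (φ i)) (hφ2 : ∀ i, MemLp (φ i) 2)
    (hγ : ∀ i, Integrable (γ i)) (hγ2 : ∀ i, MemLp (γ i) 2) :
    resolventForm a m τ ε (fun x => ∑ i ∈ s, φ i x) (fun x => ∑ i ∈ s, γ i x) =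
      ∑ i ∈ s, ∑ j ∈ s, resolventForm a m τ ε (φ i) (γ j) := by
  have hF : ∀ {f : ι → V → ℂ}, (∀ i, Integrable (f i)) → ∀ η,
      𝓕 (fun x => ∑ i ∈ s, f i x) η = ∑ i ∈ s, 𝓕 (f i) η := by
    intro f hf η
    simp only [Real.fourier_eq, Finset.smul_sum]
    rw [integral_finsetSum]
    intro i _
    exact (Real.fourierIntegral_convergent_iff η).2 (hf i)
  simp only [resolventForm, hF hφ, hF hγ, map_sum]
  simp_rw [Finset.sum_mul_sum]
  simp only [Finset.mul_sum]
  have hI := fun i j => integrable_resolventForm ha hm τ hε (memLp_two_fourier (hφ i) (hφ2 i))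
    (memLp_two_fourier (hγ j) (hγ2 j))
  rw [integral_finsetSum]
  · refine Finset.sum_congr rfl fun i _ => ?_
    rw [integral_finsetSum]
    exact fun j _ => hI i j
  · exact fun i _ => integrable_finsetSum _ fun j _ => hI i j

theorem resolventForm_add_add {a : V → ℝ} (ha : EllipticSymbol a) {m : ℝ} (hm : 1 < m)
    (τ : ℝ) {ε : ℝ} (hε : ε ≠ 0) {φ φ' γ γ' : V → ℂ} (hφ : Integrable φ) (hφ2 : MemLp φ 2)
    (hφ' : Integrable φ') (hφ2' : MemLp φ' 2) (hγ : Integrable γ) (hγ2 : MemLp γ 2)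
    (hγ' : Integrable γ') (hγ2' : MemLp γ' 2) :
    resolventForm a m τ ε (φ + φ') (γ + γ') = resolventForm a m τ ε φ γ +
      (resolventForm a m τ ε φ' (γ + γ') + resolventForm a m τ ε φ γ') := by
  have hF : ∀ {f g : V → ℂ}, Integrable f → Integrable g → ∀ η, 𝓕 (f + g) η = 𝓕 f η + 𝓕 g η := by
    intro f g hf hg η
    simp only [Real.fourier_eq, Pi.add_apply, smul_add]
    exact integral_add ((Real.fourierIntegral_convergent_iff η).2 hf)
      ((Real.fourierIntegral_convergent_iff η).2 hg)
  have m1 := memLp_two_fourier hφ hφ2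
  have m2 := memLp_two_fourier hφ' hφ2'
  have m3 := memLp_two_fourier hγ hγ2
  have m4 := memLp_two_fourier hγ' hγ2'
  have m5 := memLp_two_fourier (hγ.add hγ') (hγ2.add hγ2')
  simp only [resolventForm]
  rw [← integral_add (integrable_resolventForm ha hm τ hε m2 m5)
      (integrable_resolventForm ha hm τ hε m1 m4),
    ← integral_add (integrable_resolventForm ha hm τ hε m1 m3)]
  · refine integral_congr_ae (.of_forall fun η => ?_)
    simp only [hF hφ hφ', hF hγ hγ', map_add]
    ring
  · exact (integrable_resolventForm ha hm τ hε m2 m5).add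
      (integrable_resolventForm ha hm τ hε m1 m4)

/-- The uniform weighted resolvent estimate. -/
theorem exists_norm_resolventForm_le {d : ℕ} (hd : 1 ≤ d)
    (hV : Module.finrank ℝ V = d + 1) {a : V → ℝ} (ha : EllipticSymbol a) {m δ : ℝ} (hm : 1 < m)
    (hδ : 1 / 2 < δ) :
    ∃ C, 0 ≤ C ∧ ∀ τ ε : ℝ, ε ≠ 0 → ∀ φ γ : V → ℂ, WeightedL2 δ φ → WeightedL2 δ γ →
      ‖resolventForm a m τ ε φ γ‖ ≤ C * (weightedNorm δ φ * weightedNorm δ γ) := by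
  set κ : ℝ := min (1 / 2) ((2 * δ - 1) / 4) with hκ
  have hκ0 : 0 < κ := lt_min (by norm_num) (by linarith)
  have hκ1 : κ ≤ 1 / 2 := min_le_left _ _
  have hκ2 : κ ≤ (2 * δ - 1) / 4 := min_le_right _ _
  have hδ0 : 0 ≤ δ := by linarith
  obtain ⟨C, hC, hball⟩ := exists_norm_resolventForm_le_of_ballSupported hd hV ha hm hκ0 hκ1
  set q : ℝ := 2 ^ (κ + 1 / 2 - δ) with hq
  have hq0 : 0 < q := by positivity
  have hq1 : q < 1 := Real.rpow_lt_one_of_one_lt_of_neg (by norm_num) (by linarith)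
  set B : ℝ := 2 ^ (κ + 1 / 2) * (1 - q)⁻¹ with hB
  have hB0 : 0 ≤ B := by
    have : 0 < 1 - q := by linarith
    positivity
  refine ⟨C * B * B, by positivity, fun τ ε hε φ γ hφ hγ => ?_⟩
  have hφ2 := hφ.memLp hδ0
  have hγ2 := hγ.memLp hδ0
  have hshell : ∀ {f : V → ℂ}, WeightedL2 δ f → ∀ k, BallSupported ((dyadicShell V k).indicator f)
      (2 ^ (k + 1)) := by
    intro f hf k
    refine ⟨one_le_pow₀ one_le_two, (hf.memLp hδ0).indicator (measurableSet_dyadicShell k),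
      fun x hx => indicator_of_notMem ?_ _⟩
    intro h
    exact absurd (hx.trans_le (norm_le_bracket x)) h.2.not_gt
  have hterm : ∀ {f : V → ℂ}, WeightedL2 δ f → ∀ k : ℕ, ((2 : ℝ) ^ (k + 1)) ^ (κ + 1 / 2) *
      √(∫ x, ‖(dyadicShell V k).indicator f x‖ ^ 2) ≤
        2 ^ (κ + 1 / 2) * q ^ k * weightedNorm δ f := by
    intro f hf k
    have h1 := hf.sqrt_integral_indicator_le hδ0 (s := dyadicShell V k) (r := 2 ^ k)
      (by positivity) fun x hx => hx.1
    have e : ((2 : ℝ) ^ (k + 1)) ^ (κ + 1 / 2) * ((2 : ℝ) ^ k) ^ (-δ) =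
        2 ^ (κ + 1 / 2) * q ^ k := by
      rw [hq, pow_succ, mul_rpow (by positivity) (by positivity), ← rpow_natCast, ← rpow_natCast,
        ← rpow_mul (by norm_num), ← rpow_mul (by norm_num), ← rpow_mul (by norm_num), mul_comm
        ((2 : ℝ) ^ _) ((2 : ℝ) ^ (κ + 1 / 2)), mul_assoc, ← rpow_add (by norm_num)]
      congr 2
      ring
    calc _ ≤ ((2 : ℝ) ^ (k + 1)) ^ (κ + 1 / 2) * (((2 : ℝ) ^ k) ^ (-δ) * weightedNorm δ f) := by
          gcongr
      _ = _ := by rw [← mul_assoc, e]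
  have hsum : ∀ {f : V → ℂ}, WeightedL2 δ f → ∀ J, ∑ k ∈ Finset.range J,
      ((2 : ℝ) ^ (k + 1)) ^ (κ + 1 / 2) * √(∫ x, ‖(dyadicShell V k).indicator f x‖ ^ 2) ≤
        B * weightedNorm δ f := by
    intro f hf J
    refine (Finset.sum_le_sum fun k _ => hterm hf k).trans ?_
    rw [← Finset.sum_mul, ← Finset.mul_sum, hB]
    have := weightedNorm_nonneg δ f
    gcongr
    rw [← tsum_geometric_of_lt_one hq0.le hq1]
    exact (summable_geometric_of_lt_one hq0.le hq1).sum_le_tsum _ fun i _ => by positivity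
  obtain ⟨K, hK⟩ := exists_norm_resolventSymbol_le ha hm τ hε
  have hK0 : 0 ≤ K := (norm_nonneg _).trans (hK 0)
  set s : ℕ → Set V := fun J => {x | bracket x < 2 ^ J} with hs
  have hsm : ∀ J, MeasurableSet (s J) := fun J =>
    measurableSet_lt continuous_bracket.measurable measurable_const
  have htrunc : ∀ J, ‖resolventForm a m τ ε ((s J).indicator φ) ((s J).indicator γ)‖ ≤
      C * B * B * (weightedNorm δ φ * weightedNorm δ γ) := by
    intro J
    have e : ∀ f : V → ℂ, (s J).indicator f =
        fun x => ∑ k ∈ Finset.range J, (dyadicShell V k).indicator f x := fun f =>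
      funext fun x => (sum_indicator_dyadicShell f J x).symm
    rw [e, e, resolventForm_sum ha hm τ hε _ (fun i => (hshell hφ i).integrable)
      (fun i => (hshell hφ i).memLp) (fun i => (hshell hγ i).integrable)
      (fun i => (hshell hγ i).memLp)]
    refine (norm_sum_le_of_le _ fun i _ => norm_sum_le_of_le _ fun j _ =>
      hball τ ε hε _ _ _ _ (hshell hφ i) (hshell hγ j)).trans ?_
    simp_rw [mul_assoc C]
    simp_rw [← Finset.mul_sum]
    rw [← Finset.sum_mul]
    have := hsum hφ J
    have h2 := hsum hγ J
    have := weightedNorm_nonneg δ φ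
    calc _ ≤ C * ((B * weightedNorm δ φ) * (B * weightedNorm δ γ)) := by
          gcongr C * ?_
          refine mul_le_mul (hsum hφ J) h2 (Finset.sum_nonneg fun i _ => by positivity)
            (by positivity)
      _ = _ := by ring
  have htail : ∀ J : ℕ, ‖resolventForm a m τ ε φ γ‖ ≤
      C * B * B * (weightedNorm δ φ * weightedNorm δ γ) +
        (K * (((2 : ℝ) ^ J) ^ (-δ) * weightedNorm δ φ * √(∫ x, ‖γ x‖ ^ 2)) +
          K * (√(∫ x, ‖φ x‖ ^ 2) * (((2 : ℝ) ^ J) ^ (-δ) * weightedNorm δ γ))) := by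
    intro J
    have e : ∀ f : V → ℂ, f = (s J).indicator f + (s J)ᶜ.indicator f := fun f =>
      (indicator_self_add_compl (s J) f).symm
    have hcompl : ∀ x ∈ (s J)ᶜ, (2 : ℝ) ^ J ≤ bracket x := fun x hx => not_lt.1 hx
    have t1 := hφ.sqrt_integral_indicator_le hδ0 (by positivity) hcompl
    have t2 := hγ.sqrt_integral_indicator_le hδ0 (by positivity) hcompl
    have e1 := resolventForm_add_add ha hm τ hε (hφ.integrable.indicator (hsm J))
      (hφ2.indicator (hsm J)) (hφ.integrable.indicator (hsm J).compl)
      (hφ2.indicator (hsm J).compl) (hγ.integrable.indicator (hsm J))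
      (hγ2.indicator (hsm J)) (hγ.integrable.indicator (hsm J).compl)
      (hγ2.indicator (hsm J).compl)
    rw [← e φ, ← e γ] at e1
    rw [e1]
    refine (norm_add_le _ _).trans (add_le_add (htrunc J) ((norm_add_le _ _).trans
      (add_le_add ?_ ?_)))
    · refine (norm_resolventForm_le hK (hφ.integrable.indicator (hsm J).compl)
        (hφ2.indicator (hsm J).compl) hγ.integrable hγ2).trans ?_
      gcongr
    · refine (norm_resolventForm_le hK (hφ.integrable.indicator (hsm J))
        (hφ2.indicator (hsm J)) (hγ.integrable.indicator (hsm J).compl)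
        (hγ2.indicator (hsm J).compl)).trans ?_
      gcongr K * (√?_ * ?_)
      refine integral_mono_of_nonneg (.of_forall fun x => by positivity)
        ((memLp_two_iff_integrable_sq_norm hφ.integrable.aestronglyMeasurable).1 hφ2)
        (.of_forall fun x => ?_)
      have := norm_indicator_le_norm_self (s := s J) φ x
      simp only
      gcongr
  have hlim : Filter.Tendsto (fun J : ℕ => ((2 : ℝ) ^ J) ^ (-δ)) Filter.atTop (nhds 0) :=
    (tendsto_rpow_neg_atTop (by linarith)).comp (tendsto_pow_atTop_atTop_of_one_lt one_lt_two)
  refine ge_of_tendsto' (?_ : Filter.Tendsto _ Filter.atTop _) htail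
  have := (((hlim.mul_const (weightedNorm δ φ)).mul_const (√(∫ x, ‖γ x‖ ^ 2))).const_mul K).add
    (((hlim.mul_const (weightedNorm δ γ)).const_mul (√(∫ x, ‖φ x‖ ^ 2))).const_mul K)
  simpa using this.const_add (C * B * B * (weightedNorm δ φ * weightedNorm δ γ))

end Weighted

section Duality

open Set Metric FourierTransform Filter

variable {V : Type*} [NormedAddCommGroup V] [InnerProductSpace ℝ V] [FiniteDimensional ℝ V]
  [MeasurableSpace V] [BorelSpace V]

theorem integral_fourierInv_mul_conj {Ψ γ : V → ℂ} (hΨ : Integrable Ψ) (hγ : Integrable γ) :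
    ∫ x, 𝓕⁻ Ψ x * (starRingEnd ℂ) (γ x) = ∫ η, Ψ η * (starRingEnd ℂ) (𝓕 γ η) := by
  have hconj : ∀ η, (starRingEnd ℂ) (𝓕 γ η) = 𝓕 (fun x => (starRingEnd ℂ) (γ (-x))) η := by
    intro η
    rw [Real.fourier_eq, Real.fourier_eq, ← integral_conj, ← integral_neg_eq_self]
    refine integral_congr_ae (.of_forall fun x => ?_)
    simp [Circle.smul_def, ← Circle.coe_inv_eq_conj, AddChar.map_neg_eq_inv]
  have hInt : Integrable fun x => (starRingEnd ℂ) (γ (-x)) := by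
    have h1 : Integrable fun x => γ (-x) := hγ.comp_neg
    exact (LinearIsometryEquiv.integrable_comp_iff conjLIE).2 h1
  simp_rw [hconj]
  rw [← integral_fourier_mul_eq_of_integrable hΨ hInt, ← integral_neg_eq_self]
  refine integral_congr_ae (.of_forall fun x => ?_)
  simp only [Real.fourierInv_eq_fourier_neg, neg_neg]

/-- A bound for the pairing of `Ψ` with Fourier transforms of weighted functions controls the
inverse Fourier transform of `Ψ` in the dual weighted space. -/
theorem lintegral_fourierInv_le_of_forall_weightedL2 {δ N : ℝ} {Ψ : V → ℂ}
    (hΨ : Integrable Ψ) (hN : 0 ≤ N)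
    (h : ∀ γ : V → ℂ, WeightedL2 δ γ →
      ‖∫ η, Ψ η * (starRingEnd ℂ) (𝓕 γ η)‖ ≤ N * weightedNorm δ γ) :
    ∫⁻ x, ENNReal.ofReal ((bracket x ^ (-δ) * ‖𝓕⁻ Ψ x‖) ^ 2) ≤ ENNReal.ofReal (N ^ 2) := by
  have hv : Continuous (𝓕⁻ Ψ) := by
    have : 𝓕⁻ Ψ = fun x => 𝓕 Ψ (-x) := funext fun x => Real.fourierInv_eq_fourier_neg Ψ x
    rw [this]
    exact (continuous_fourier_of_integrable hΨ).comp continuous_neg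
  set g : V → ℝ := fun x => (bracket x ^ (-δ) * ‖𝓕⁻ Ψ x‖) ^ 2 with hg
  have hgc : Continuous g := ((continuous_bracket_rpow (-δ)).mul hv.norm).pow 2
  have hcover := (aecover_closedBall (μ := (volume : Measure V)) (x := 0)
    (tendsto_natCast_atTop_atTop (R := ℝ))).lintegral_tendsto_of_countably_generated
    (f := fun x => ENNReal.ofReal (g x)) hgc.measurable.ennreal_ofReal.aemeasurable
  refine le_of_tendsto' hcover fun k => ?_
  set s := closedBall (0 : V) k
  have hsm : MeasurableSet s := measurableSet_closedBall
  have hsc : IsCompact s := isCompact_closedBall _ _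
  set γ : V → ℂ := s.indicator fun x => ((bracket x ^ (-δ) * bracket x ^ (-δ) : ℝ) : ℂ) * 𝓕⁻ Ψ x
    with hγ
  have hgs : Integrable (s.indicator g) := by
    rw [integrable_indicator_iff hsm]
    exact hgc.continuousOn.integrableOn_compact hsc
  have e1 : ∀ x, (bracket x ^ δ * ‖γ x‖) ^ 2 = s.indicator g x := by
    intro x
    by_cases hx : x ∈ s
    · rw [hγ, indicator_of_mem hx, indicator_of_mem hx, norm_mul, norm_real,
        norm_of_nonneg (mul_nonneg (rpow_nonneg (bracket_pos x).le _)
          (rpow_nonneg (bracket_pos x).le _)), hg]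
      simp only
      congr 1
      rw [← mul_assoc, ← mul_assoc, ← rpow_add (bracket_pos x), add_neg_cancel, rpow_zero, one_mul]
    · simp [hγ, indicator_of_notMem hx]
  have hγw : WeightedL2 δ γ := by
    refine ⟨?_, by simpa only [e1] using hgs⟩
    rw [hγ, integrable_indicator_iff hsm]
    refine Continuous.continuousOn ?_ |>.integrableOn_compact hsc
    exact (continuous_ofReal.comp ((continuous_bracket_rpow (-δ)).mul
      (continuous_bracket_rpow (-δ)))).mul hv
  set Y := ∫ x, s.indicator g x with hY
  have hY0 : 0 ≤ Y := integral_nonneg fun x => indicator_nonneg (fun y _ => sq_nonneg _) x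
  have e2 : weightedNorm δ γ = √Y := by
    simp only [weightedNorm, e1, hY]
  have e3 : ∫ η, Ψ η * (starRingEnd ℂ) (𝓕 γ η) = (Y : ℂ) := by
    rw [← integral_fourierInv_mul_conj hΨ hγw.integrable, hY, ← integral_complex_ofReal]
    refine integral_congr_ae (.of_forall fun x => ?_)
    by_cases hx : x ∈ s
    · simp only [hγ, indicator_of_mem hx, map_mul, conj_ofReal, hg]
      rw [mul_comm, mul_assoc, mul_comm ((starRingEnd ℂ) _), mul_conj, normSq_eq_norm_sq]
      push_cast
      ring
    · simp [hγ, indicator_of_notMem hx]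
  have h1 := h γ hγw
  rw [e2, e3, norm_real, norm_of_nonneg hY0] at h1
  have h2 : Y ≤ N ^ 2 := by
    have h3 : √Y * √Y = Y := mul_self_sqrt hY0
    have h4 : √Y ≤ N := by
      by_contra! h5
      nlinarith [hN.trans_lt h5]
    nlinarith [Real.sqrt_nonneg Y]
  rw [← lintegral_indicator hsm]
  have e4 : ∀ x, s.indicator (fun x => ENNReal.ofReal (g x)) x =
      ENNReal.ofReal (s.indicator g x) := by
    intro x
    by_cases hx : x ∈ s <;> simp [hx]
  simp_rw [e4]
  rw [← ofReal_integral_eq_lintegral_ofReal hgs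
    (.of_forall fun x => indicator_nonneg (fun y _ => sq_nonneg _) x)]
  exact ENNReal.ofReal_le_ofReal h2

/-- Fourier transforms in different variables commute. -/
theorem fourier_fourier_swap {G : ℝ → V → ℂ}
    (hG : Integrable (Function.uncurry G) ((volume : Measure ℝ).prod (volume : Measure V)))
    (τ : ℝ) (η : V) :
    𝓕 (fun x => 𝓕 (fun t => G t x) τ) η = 𝓕 (fun t => 𝓕 (G t) η) τ := by
  simp only [Real.fourier_eq, Circle.smul_def, smul_eq_mul, ← integral_const_mul]
  rw [integral_integral_swap]
  · refine integral_congr_ae (.of_forall fun t => integral_congr_ae (.of_forall fun x => ?_))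
    ring
  · have h1 : Integrable (fun p : V × ℝ => G p.2 p.1) (volume.prod volume) := hG.swap
    have h2 : Integrable (fun p : V × ℝ => ((𝐞 (-⟪p.1, η⟫) : ℂ) * (𝐞 (-⟪p.2, τ⟫) : ℂ)) * G p.2 p.1)
        (volume.prod volume) := by
      refine h1.bdd_mul (c := 1) ?_ (.of_forall fun p => by
        rw [norm_mul, Circle.norm_coe, Circle.norm_coe, mul_one])
      have hc := Real.continuous_fourierChar
      refine Continuous.aestronglyMeasurable ?_
      fun_prop
    refine h2.congr (.of_forall fun p => ?_)
    simp only [Function.uncurry]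
    ring

theorem fourier_fourierInv_swap {G : ℝ → V → ℂ}
    (hG : Integrable (Function.uncurry G) ((volume : Measure ℝ).prod (volume : Measure V)))
    (τ : ℝ) (x : V) :
    𝓕⁻ (fun η => 𝓕 (fun t => G t η) τ) x = 𝓕 (fun t => 𝓕⁻ (G t) x) τ := by
  simp only [Real.fourierInv_eq_fourier_neg]
  exact fourier_fourier_swap hG τ (-x)

end Duality

section Duhamel

open Set Metric FourierTransform Filter

/-- The function `e^(-εt) g(t)` on the half line `t > 0`, extended by zero. -/
def damp (ε : ℝ) (g : ℝ → ℂ) : ℝ → ℂ :=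
  (Ioi 0).indicator fun t => ((rexp (-(ε * t)) : ℝ) : ℂ) * g t

/-- The Duhamel integral `∫₀ᵗ e^(i(t-s)p) g(s) ds`. -/
def duhamel (p : ℝ) (g : ℝ → ℂ) (t : ℝ) : ℂ :=
  ∫ s in (0 : ℝ)..t, cexp (I * ((t - s : ℝ) : ℂ) * (p : ℂ)) * g s

theorem norm_duhamel_le {p B : ℝ} {g : ℝ → ℂ} (hg : ∀ s, ‖g s‖ ≤ B) (t : ℝ) :
    ‖duhamel p g t‖ ≤ B * |t| := by
  have h := intervalIntegral.norm_integral_le_of_norm_le_const (a := (0 : ℝ)) (b := t) (C := B)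
    (f := fun s => cexp (I * ((t - s : ℝ) : ℂ) * (p : ℂ)) * g s) fun s _ => by
      rw [norm_mul, norm_exp]
      simpa using hg s
  simpa [duhamel] using h

theorem hasDerivAt_duhamel (p : ℝ) {g : ℝ → ℂ} (hg : Continuous g) (t : ℝ) :
    HasDerivAt (duhamel p g) (I * p * duhamel p g t + g t) t := by
  have e : ∀ r, duhamel p g r =
      cexp (I * r * p) * ∫ s in (0 : ℝ)..r, cexp (-(I * s * p)) * g s := by
    intro r
    rw [duhamel, ← intervalIntegral.integral_const_mul]
    refine intervalIntegral.integral_congr fun s _ => ?_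
    rw [← mul_assoc, ← Complex.exp_add]
    congr 2
    push_cast
    ring
  have hc : Continuous fun s : ℝ => cexp (-(I * s * p)) * g s := by fun_prop
  have h1 := intervalIntegral.integral_hasDerivAt_right (hc.intervalIntegrable 0 t)
    (hc.stronglyMeasurableAtFilter _ _) hc.continuousAt
  have h2 : HasDerivAt (fun r : ℝ => cexp (I * r * p)) (cexp (I * t * p) * (I * p)) t := by
    have := ((hasDerivAt_id t).ofReal_comp.const_mul I).mul_const (p : ℂ)
    simpa using this.cexp
  have h3 := h2.mul h1
  have e2 : duhamel p g = fun r : ℝ => cexp (I * r * p) *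
      ∫ s in (0 : ℝ)..r, cexp (-(I * s * p)) * g s := funext e
  rw [e2]
  refine HasDerivAt.congr_deriv h3 ?_
  rw [← mul_assoc (cexp (I * t * p)) (cexp (-(I * t * p))), ← Complex.exp_add, add_neg_cancel,
    Complex.exp_zero]
  ring

theorem fourier_damp (ε : ℝ) (g : ℝ → ℂ) (τ : ℝ) :
    𝓕 (damp ε g) τ = ∫ t in Ioi (0 : ℝ), cexp (-((ε + 2 * π * τ * I) * t)) * g t := by
  rw [Real.fourier_real_eq_integral_exp_smul, ← integral_indicator measurableSet_Ioi]
  refine integral_congr_ae (.of_forall fun t => ?_)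
  by_cases ht : t ∈ Ioi (0 : ℝ)
  · simp only [damp, indicator_of_mem ht, smul_eq_mul]
    rw [ofReal_exp, ← mul_assoc, ← Complex.exp_add]
    congr 2
    push_cast
    ring
  · simp [damp, indicator_of_notMem ht]

theorem integrableOn_exp_mul {ε : ℝ} (hε : 0 < ε) (A B : ℝ) :
    IntegrableOn (fun t : ℝ => rexp (-(ε * t)) * (A * t + B)) (Ioi 0) := by
  have h1 := integrableOn_rpow_mul_exp_neg_mul_rpow (s := 1) (p := 1) (b := ε) (by norm_num)
    one_pos hε
  have h0 := integrableOn_rpow_mul_exp_neg_mul_rpow (s := 0) (p := 1) (b := ε) (by norm_num)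
    one_pos hε
  have h2 : IntegrableOn (fun t : ℝ => A * (t ^ (1 : ℝ) * rexp (-ε * t ^ (1 : ℝ))) +
      B * (t ^ (0 : ℝ) * rexp (-ε * t ^ (1 : ℝ)))) (Ioi 0) :=
    (h1.const_mul A).add (h0.const_mul B)
  refine h2.congr_fun (fun t ht => ?_) measurableSet_Ioi
  simp only [rpow_one, rpow_zero, neg_mul]
  ring

/-- The Fourier transform of a damped Duhamel integral. -/
theorem fourier_damp_duhamel {p ε B : ℝ} (hε : 0 < ε) {g : ℝ → ℂ} (hg : Continuous g)
    (hB : ∀ s, ‖g s‖ ≤ B) (τ : ℝ) :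
    𝓕 (damp ε (duhamel p g)) τ = (ε + 2 * π * τ * I - I * p)⁻¹ * 𝓕 (damp ε g) τ := by
  set c : ℂ := ε + 2 * π * τ * I with hc
  have hcre : c.re = ε := by simp [hc]
  have hB0 : 0 ≤ B := (norm_nonneg _).trans (hB 0)
  have hh : ∀ t, HasDerivAt (duhamel p g) (I * p * duhamel p g t + g t) t := hasDerivAt_duhamel p hg
  have hhc : Continuous (duhamel p g) := continuous_iff_continuousAt.2 fun t => (hh t).continuousAt
  have hexp : ∀ t : ℝ, ‖cexp (-(c * t))‖ = rexp (-(ε * t)) := by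
    intro t
    rw [norm_exp]
    simp [hcre]
  have hI : ∀ {k : ℝ → ℂ}, Continuous k → (∀ t ∈ Ioi (0 : ℝ), ‖k t‖ ≤ B * t + B) →
      IntegrableOn (fun t : ℝ => cexp (-(c * t)) * k t) (Ioi 0) := by
    intro k hk hkB
    refine (integrableOn_exp_mul hε B B).mono' (by fun_prop) ?_
    refine (ae_restrict_iff' measurableSet_Ioi).2 (.of_forall fun t ht => ?_)
    rw [norm_mul, hexp]
    gcongr
    exact hkB t ht
  have hI1 := hI hhc fun t ht => by
    have := norm_duhamel_le (p := p) hB t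
    rw [abs_of_pos ht] at this
    linarith
  have hI2 := hI hg fun t ht => by
    have : 0 ≤ B * t := mul_nonneg hB0 (le_of_lt ht)
    linarith [hB t]
  have hderiv : ∀ t : ℝ, HasDerivAt (fun t : ℝ => cexp (-(c * t)) * duhamel p g t)
      (-(c - I * p) * (cexp (-(c * t)) * duhamel p g t) + cexp (-(c * t)) * g t) t := by
    intro t
    have h1 : HasDerivAt (fun r : ℝ => cexp (-(c * r))) (cexp (-(c * t)) * (-c)) t := by
      have := ((hasDerivAt_id t).ofReal_comp.const_mul c).neg
      simpa using this.cexp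
    refine (h1.mul (hh t)).congr_deriv ?_
    ring
  have hlim : Tendsto (fun t : ℝ => cexp (-(c * t)) * duhamel p g t) atTop (nhds 0) := by
    have h1 : Tendsto (fun t : ℝ => B * (t ^ (1 : ℝ) * rexp (-ε * t))) atTop (nhds (B * 0)) :=
      (tendsto_rpow_mul_exp_neg_mul_atTop_nhds_zero 1 ε hε).const_mul B
    rw [mul_zero] at h1
    refine squeeze_zero_norm' ?_ h1
    filter_upwards [eventually_gt_atTop 0] with t ht
    rw [norm_mul, hexp, rpow_one, neg_mul]
    have := norm_duhamel_le (p := p) hB t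
    rw [abs_of_pos ht] at this
    calc _ ≤ rexp (-(ε * t)) * (B * t) := by gcongr
      _ = _ := by ring
  have hmain := integral_Ioi_of_hasDerivAt_of_tendsto' (a := 0) (fun t _ => hderiv t)
    ((hI1.const_mul (-(c - I * p))).add hI2) hlim
  rw [integral_add (hI1.const_mul _) hI2, integral_const_mul] at hmain
  have hz : duhamel p g 0 = 0 := by simp [duhamel]
  rw [hz, mul_zero, sub_zero] at hmain
  have hne : c - I * p ≠ 0 := by
    intro h
    have := congrArg re h
    simp [hcre] at this
    exact hε.ne' this
  rw [fourier_damp, fourier_damp, ← hc, eq_inv_mul_iff_mul_eq₀ hne]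
  linear_combination -hmain

end Duhamel

section HalfLine

open Set Metric FourierTransform Filter

/-- The cut-off exponential weight underlying `damp`. -/
def dampFactor (ε : ℝ) : ℝ → ℝ := (Ioi 0).indicator fun t => rexp (-(ε * t))

theorem damp_apply (ε : ℝ) (g : ℝ → ℂ) (t : ℝ) : damp ε g t = (dampFactor ε t : ℂ) * g t := by
  by_cases ht : t ∈ Ioi (0 : ℝ)
  · simp only [damp, dampFactor, indicator_of_mem ht]
  · simp [damp, dampFactor, indicator_of_notMem ht]

theorem measurable_dampFactor (ε : ℝ) : Measurable (dampFactor ε) :=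
  Measurable.indicator (by fun_prop) measurableSet_Ioi

theorem dampFactor_nonneg (ε t : ℝ) : 0 ≤ dampFactor ε t :=
  indicator_nonneg (fun _ _ => (Real.exp_pos _).le) _

theorem dampFactor_of_pos (ε : ℝ) {t : ℝ} (ht : 0 < t) : dampFactor ε t = rexp (-(ε * t)) :=
  indicator_of_mem (show t ∈ Ioi (0 : ℝ) from ht) _

theorem dampFactor_of_nonpos (ε : ℝ) {t : ℝ} (ht : t ≤ 0) : dampFactor ε t = 0 :=
  indicator_of_notMem (by simpa using ht) _

theorem dampFactor_le_one {ε : ℝ} (hε : 0 < ε) (t : ℝ) : dampFactor ε t ≤ 1 := by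
  rcases lt_or_ge 0 t with h | h
  · rw [dampFactor_of_pos ε h, Real.exp_le_one_iff]
    have := mul_pos hε h
    linarith
  · rw [dampFactor_of_nonpos ε h]
    exact zero_le_one

theorem integrable_dampFactor_mul {ε : ℝ} (hε : 0 < ε) (A B : ℝ) :
    Integrable fun t => dampFactor ε t * (A * |t| + B) := by
  have h := (integrable_indicator_iff measurableSet_Ioi).2 (integrableOn_exp_mul hε A B)
  refine h.congr (.of_forall fun t => ?_)
  change _ = dampFactor ε t * (A * |t| + B)
  rcases lt_or_ge 0 t with ht | ht
  · rw [indicator_of_mem (by exact ht), dampFactor_of_pos ε ht, abs_of_pos ht]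
  · rw [indicator_of_notMem (by simpa using ht), dampFactor_of_nonpos ε ht, zero_mul]

theorem integrable_dampFactor {ε : ℝ} (hε : 0 < ε) : Integrable (dampFactor ε) := by
  simpa using integrable_dampFactor_mul hε 0 1

theorem integrable_dampFactor_mul_abs {ε : ℝ} (hε : 0 < ε) :
    Integrable fun t => dampFactor ε t * |t| := by
  simpa using integrable_dampFactor_mul hε 1 0

/-- Plancherel's theorem for a damped function of at most linear growth. -/
theorem lintegral_fourier_damp {ε A B : ℝ} (hε : 0 < ε) {g : ℝ → ℂ}
    (hg : StronglyMeasurable g) (hA : 0 ≤ A) (hB : 0 ≤ B) (hgb : ∀ t, ‖g t‖ ≤ A * |t| + B) :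
    ∫⁻ τ, ‖𝓕 (damp ε g) τ‖ₑ ^ 2 = ∫⁻ t, ‖damp ε g t‖ₑ ^ 2 := by
  have hm : StronglyMeasurable (damp ε g) := by
    have : damp ε g = fun t => (dampFactor ε t : ℂ) * g t := funext (damp_apply ε g)
    rw [this]
    exact (measurable_dampFactor ε).complex_ofReal.stronglyMeasurable.mul hg
  have hnorm : ∀ t, ‖damp ε g t‖ ≤ dampFactor ε t * (A * |t| + B) := by
    intro t
    rw [damp_apply, norm_mul, norm_real, norm_of_nonneg (dampFactor_nonneg ε t)]
    exact mul_le_mul_of_nonneg_left (hgb t) (dampFactor_nonneg ε t)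
  have hInt : Integrable (damp ε g) :=
    (integrable_dampFactor_mul hε A B).mono' hm.aestronglyMeasurable (.of_forall hnorm)
  have hbd : ∀ t, ‖damp ε g t‖ ≤ A / ε + B := by
    intro t
    refine (hnorm t).trans ?_
    rcases lt_or_ge 0 t with ht | ht
    · have h1 : dampFactor ε t * (ε * t) ≤ 1 := by
        rw [dampFactor_of_pos ε ht, Real.exp_neg, inv_mul_eq_div, div_le_one (Real.exp_pos _)]
        linarith [Real.add_one_le_exp (ε * t)]
      have h2 := dampFactor_le_one hε t
      rw [abs_of_pos ht]
      calc dampFactor ε t * (A * t + B)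
          = A / ε * (dampFactor ε t * (ε * t)) + dampFactor ε t * B := by
            field_simp
        _ ≤ A / ε * 1 + 1 * B := by gcongr
        _ = _ := by ring
    · rw [dampFactor_of_nonpos ε ht, zero_mul]
      positivity
  refine lintegral_enorm_sq_fourier hInt ?_
  refine (memLp_two_iff_integrable_sq_norm hm.aestronglyMeasurable).2 ?_
  refine (hInt.norm.const_mul (A / ε + B)).mono' (hm.norm.pow 2).aestronglyMeasurable
    (.of_forall fun t => ?_)
  rw [norm_of_nonneg (by positivity), sq]
  exact mul_le_mul_of_nonneg_right (hbd t) (norm_nonneg _)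

variable {V : Type*} [NormedAddCommGroup V] [InnerProductSpace ℝ V] [FiniteDimensional ℝ V]
  [MeasurableSpace V] [BorelSpace V]

theorem integrable_fourier_section {G : ℝ → V → ℂ}
    (hG : Integrable (Function.uncurry G) ((volume : Measure ℝ).prod (volume : Measure V)))
    (τ : ℝ) : Integrable fun x => 𝓕 (fun t => G t x) τ := by
  have h1 : Integrable (fun p : V × ℝ => G p.2 p.1) (volume.prod volume) := hG.swap
  have h2 : Integrable (fun p : V × ℝ => 𝐞 (-⟪p.2, τ⟫) • G p.2 p.1) (volume.prod volume) := by
    refine h1.norm.mono' ?_ (.of_forall fun p => by simp)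
    have hc := Real.continuous_fourierChar
    exact (Continuous.aestronglyMeasurable (by fun_prop)).smul h1.aestronglyMeasurable
  simpa only [Real.fourier_eq] using h2.integral_prod_left

theorem stronglyMeasurable_fourier_section {G : ℝ → V → ℂ}
    (hG : StronglyMeasurable (Function.uncurry G)) :
    StronglyMeasurable fun p : ℝ × V => 𝓕 (fun t => G t p.2) p.1 := by
  simp only [Real.fourier_eq]
  have hc := Real.continuous_fourierChar
  refine StronglyMeasurable.integral_prod_right
    (f := fun (p : ℝ × V) (t : ℝ) => 𝐞 (-⟪t, p.1⟫) • G t p.2) ?_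
  refine StronglyMeasurable.smul (Continuous.stronglyMeasurable ?_) ?_
  · fun_prop
  · exact hG.comp_measurable (by fun_prop : Measurable fun q : (ℝ × V) × ℝ => (q.2, q.1.2))

theorem stronglyMeasurable_fourierInv_param {G : ℝ → V → ℂ}
    (hG : StronglyMeasurable (Function.uncurry G)) :
    StronglyMeasurable fun p : ℝ × V => 𝓕⁻ (G p.1) p.2 := by
  simp only [Real.fourierInv_eq]
  have hc := Real.continuous_fourierChar
  refine StronglyMeasurable.integral_prod_right
    (f := fun (p : ℝ × V) (v : V) => 𝐞 (⟪v, p.2⟫) • G p.1 v) ?_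
  refine StronglyMeasurable.smul (Continuous.stronglyMeasurable ?_) ?_
  · fun_prop
  · exact hG.comp_measurable (by fun_prop : Measurable fun q : (ℝ × V) × V => (q.1.1, q.2))

/-- A forcing term whose time slices and their Fourier transforms have integrable majorants. -/
structure AdmissibleForcing (m δ : ℝ) (f : ℝ → V → ℂ) (A B : V → ℝ) : Prop where
  cont : Continuous (Function.uncurry f)
  norm_le : ∀ s x, ‖f s x‖ ≤ A x
  integrable : Integrable A
  weighted : Integrable fun x => (bracket x ^ δ * A x) ^ 2
  fourier_norm_le : ∀ s η, ‖𝓕 (f s) η‖ ≤ B η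
  fourier_integrable : Integrable B
  fourier_weighted : Integrable fun η => ‖η‖ ^ (m - 1) * B η

/-- The spatial Fourier transform of the Duhamel integral with phase `P`, times `|η|^(m-1)`. -/
def duhamelHat (m : ℝ) (P : V → ℝ) (f : ℝ → V → ℂ) (t : ℝ) (η : V) : ℂ :=
  ((‖η‖ ^ (m - 1) : ℝ) : ℂ) * duhamel (P η) (fun s => 𝓕 (f s) η) t

namespace AdmissibleForcing

variable {m δ : ℝ} {f : ℝ → V → ℂ} {A B : V → ℝ}

theorem continuous_fourier (hf : AdmissibleForcing m δ f A B) :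
    Continuous fun p : ℝ × V => 𝓕 (f p.1) p.2 := by
  simp only [Real.fourier_eq]
  have hc := Real.continuous_fourierChar
  have h1 := hf.cont
  refine continuous_of_dominated (bound := A) (fun p => ?_) (fun p => .of_forall fun x => ?_)
    hf.integrable (.of_forall fun x => ?_)
  · have : Continuous fun x => f p.1 x := h1.comp (by fun_prop : Continuous fun x => (p.1, x))
    exact Continuous.aestronglyMeasurable (by fun_prop)
  · rw [Circle.norm_smul]
    exact hf.norm_le _ _
  · have : Continuous fun p : ℝ × V => f p.1 x :=
      h1.comp (by fun_prop : Continuous fun p : ℝ × V => (p.1, x))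
    fun_prop

theorem continuous_duhamel (hf : AdmissibleForcing m δ f A B) {P : V → ℝ} (hP : Continuous P) :
    Continuous fun p : ℝ × V => duhamel (P p.2) (fun s => 𝓕 (f s) p.2) p.1 := by
  refine intervalIntegral.continuous_parametric_intervalIntegral_of_continuous
    (f := fun (p : ℝ × V) (s : ℝ) =>
      cexp (I * ((p.1 - s : ℝ) : ℂ) * (P p.2 : ℂ)) * 𝓕 (f s) p.2) ?_ continuous_fst
  have h1 := hf.continuous_fourier.comp
    (by fun_prop : Continuous fun q : (ℝ × V) × ℝ => (q.2, q.1.2))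
  refine Continuous.mul ?_ h1
  fun_prop

theorem continuous_duhamelHat (hf : AdmissibleForcing m δ f A B) (hm : 1 < m) {P : V → ℝ}
    (hP : Continuous P) : Continuous (Function.uncurry (duhamelHat m P f)) := by
  refine Continuous.mul (continuous_ofReal.comp ?_) (hf.continuous_duhamel hP)
  exact (continuous_norm.comp continuous_snd).rpow_const fun _ => .inr (by linarith)

theorem norm_duhamelHat_le (hf : AdmissibleForcing m δ f A B) (P : V → ℝ) (t : ℝ) (η : V) :
    ‖duhamelHat m P f t η‖ ≤ |t| * (‖η‖ ^ (m - 1) * B η) := by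
  rw [duhamelHat, norm_mul, norm_real, norm_of_nonneg (by positivity)]
  calc _ ≤ ‖η‖ ^ (m - 1) * (B η * |t|) := by
        gcongr
        exact norm_duhamel_le (fun s => hf.fourier_norm_le s η) t
    _ = _ := by ring

theorem norm_fourierInv_duhamelHat_le (hf : AdmissibleForcing m δ f A B) (P : V → ℝ) (t : ℝ)
    (x : V) : ‖𝓕⁻ (duhamelHat m P f t) x‖ ≤ (∫ η, ‖η‖ ^ (m - 1) * B η) * |t| := by
  rw [Real.fourierInv_eq_fourier_neg]
  refine (norm_fourier_le_integral_norm _ _).trans ?_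
  rw [mul_comm, ← integral_const_mul]
  exact integral_mono_of_nonneg (.of_forall fun η => norm_nonneg _)
    (hf.fourier_weighted.const_mul _) (.of_forall fun η => hf.norm_duhamelHat_le P t η)

theorem integrable_damp (hf : AdmissibleForcing m δ f A B) {ε : ℝ} (hε : 0 < ε) :
    Integrable (Function.uncurry fun t x => damp ε (fun s => f s x) t)
      ((volume : Measure ℝ).prod (volume : Measure V)) := by
  refine ((integrable_dampFactor hε).mul_prod hf.integrable).mono' ?_ (.of_forall fun p => ?_)
  · simp only [Function.uncurry_def, damp_apply]
    exact (((measurable_dampFactor ε).comp measurable_fst).complex_ofReal.mul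
      hf.cont.measurable).aestronglyMeasurable
  · simp only [Function.uncurry_def, damp_apply]
    rw [norm_mul, norm_real, norm_of_nonneg (dampFactor_nonneg _ _)]
    exact mul_le_mul_of_nonneg_left (hf.norm_le _ _) (dampFactor_nonneg _ _)

theorem integrable_damp_duhamelHat (hf : AdmissibleForcing m δ f A B) (hm : 1 < m) {P : V → ℝ}
    (hP : Continuous P) {ε : ℝ} (hε : 0 < ε) :
    Integrable (Function.uncurry fun t η => damp ε (fun s => duhamelHat m P f s η) t)
      ((volume : Measure ℝ).prod (volume : Measure V)) := by
  refine ((integrable_dampFactor_mul_abs hε).mul_prod hf.fourier_weighted).mono' ?_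
    (.of_forall fun p => ?_)
  · simp only [Function.uncurry_def, damp_apply]
    exact (((measurable_dampFactor ε).comp measurable_fst).complex_ofReal.mul
      (hf.continuous_duhamelHat hm hP).measurable).aestronglyMeasurable
  · simp only [Function.uncurry_def, damp_apply]
    rw [norm_mul, norm_real, norm_of_nonneg (dampFactor_nonneg _ _), mul_assoc]
    exact mul_le_mul_of_nonneg_left (hf.norm_duhamelHat_le P _ _) (dampFactor_nonneg _ _)

theorem fourier_damp_section (f : ℝ → V → ℂ) (ε t : ℝ) (η : V) :
    𝓕 (fun x => damp ε (fun s => f s x) t) η = damp ε (fun s => 𝓕 (f s) η) t := by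
  simp only [damp_apply, Real.fourier_eq]
  rw [← integral_const_mul]
  refine integral_congr_ae (.of_forall fun x => ?_)
  simp only [Circle.smul_def, smul_eq_mul]
  ring

theorem fourierInv_damp_section (f : ℝ → V → ℂ) (ε t : ℝ) (x : V) :
    𝓕⁻ (fun η => damp ε (fun s => f s η) t) x = damp ε (fun s => 𝓕⁻ (f s) x) t := by
  simp only [Real.fourierInv_eq_fourier_neg]
  exact fourier_damp_section f ε t (-x)

theorem weightedL2_fourier_damp (hf : AdmissibleForcing m δ f A B) {ε : ℝ} (hε : 0 < ε) (τ : ℝ) :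
    WeightedL2 δ fun x => 𝓕 (damp ε fun s => f s x) τ := by
  have h1 : Integrable fun x => 𝓕 (damp ε fun s => f s x) τ :=
    integrable_fourier_section (hf.integrable_damp hε) τ
  refine ⟨h1, ?_⟩
  set D := ∫ t, dampFactor ε t
  refine (hf.weighted.const_mul (D ^ 2)).mono' ?_ (.of_forall fun x => ?_)
  · exact ((continuous_bracket_rpow δ).aestronglyMeasurable.mul
      h1.aestronglyMeasurable.norm).pow 2
  · rw [norm_of_nonneg (by positivity), ← mul_pow]
    have hb := (bracket_pos x).le
    have h2 : ‖𝓕 (damp ε fun s => f s x) τ‖ ≤ D * A x := by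
      refine (norm_fourier_le_integral_norm _ _).trans ?_
      rw [← integral_mul_const]
      refine integral_mono_of_nonneg (.of_forall fun t => norm_nonneg _)
        ((integrable_dampFactor hε).mul_const _) (.of_forall fun t => ?_)
      simp only [damp_apply]
      rw [norm_mul, norm_real, norm_of_nonneg (dampFactor_nonneg _ _)]
      exact mul_le_mul_of_nonneg_left (hf.norm_le _ _) (dampFactor_nonneg _ _)
    have h3 : bracket x ^ δ * ‖𝓕 (damp ε fun s => f s x) τ‖ ≤ D * (bracket x ^ δ * A x) := by
      calc _ ≤ bracket x ^ δ * (D * A x) := by gcongr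
        _ = _ := by ring
    have h4 : 0 ≤ bracket x ^ δ := rpow_nonneg hb δ
    gcongr

end AdmissibleForcing

end HalfLine

section HalfLineEstimate

open Set Metric FourierTransform Filter

variable {V : Type*} [NormedAddCommGroup V] [InnerProductSpace ℝ V] [FiniteDimensional ℝ V]
  [MeasurableSpace V] [BorelSpace V]

theorem ofReal_weightedNorm_sq {δ : ℝ} {φ : V → ℂ} (h : WeightedL2 δ φ) :
    ENNReal.ofReal (weightedNorm δ φ ^ 2) =
      ∫⁻ x, ENNReal.ofReal ((bracket x ^ δ * ‖φ x‖) ^ 2) := by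
  rw [weightedNorm, Real.sq_sqrt (integral_nonneg fun x => sq_nonneg _),
    ofReal_integral_eq_lintegral_ofReal h.weighted (.of_forall fun x => sq_nonneg _)]

/-- The frequency-localized estimate: the damped Duhamel integral, after a Fourier transform in
time, is controlled by the damped forcing term. -/
theorem exists_lintegral_fourier_damp_le {d : ℕ} (hd : 1 ≤ d)
    (hV : Module.finrank ℝ V = d + 1) {b : V → ℝ} (hb : EllipticSymbol b) {m δ : ℝ} (hm : 1 < m)
    (hδ : 1 / 2 < δ) :
    ∃ C, 0 ≤ C ∧ ∀ σ : ℝ, σ ^ 2 = 1 → ∀ (f : ℝ → V → ℂ) (A B : V → ℝ), AdmissibleForcing m δ f A B →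
      ∀ ε, 0 < ε → ∀ τ, ∫⁻ x, ENNReal.ofReal ((bracket x ^ (-δ) *
        ‖𝓕 (damp ε fun t => 𝓕⁻ (duhamelHat m (fun η => σ * b η ^ m) f t) x) τ‖) ^ 2) ≤
        ENNReal.ofReal (C ^ 2) *
          ∫⁻ x, ENNReal.ofReal ((bracket x ^ δ * ‖𝓕 (damp ε fun t => f t x) τ‖) ^ 2) := by
  obtain ⟨C, hC, hres⟩ := exists_norm_resolventForm_le hd hV hb hm hδ
  refine ⟨C, hC, fun σ hσ f A B hf ε hε τ => ?_⟩
  set P : V → ℝ := fun η => σ * b η ^ m with hP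
  have hPc : Continuous P :=
    continuous_const.mul (hb.cont.rpow_const fun _ => .inr (by linarith))
  set φ : V → ℂ := fun x => 𝓕 (damp ε fun t => f t x) τ with hφ
  have hφw : WeightedL2 δ φ := hf.weightedL2_fourier_damp hε τ
  have hφhat : ∀ η, 𝓕 φ η = 𝓕 (damp ε fun s => 𝓕 (f s) η) τ := by
    intro η
    have h := fourier_fourier_swap (hf.integrable_damp hε) τ η
    simp only [AdmissibleForcing.fourier_damp_section] at h
    exact h
  set Ψ : V → ℂ := fun η => 𝓕 (damp ε fun t => duhamelHat m P f t η) τ with hΨ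
  have hΨi : Integrable Ψ := integrable_fourier_section (hf.integrable_damp_duhamelHat hm hPc hε) τ
  have hΨinv : ∀ x, 𝓕⁻ Ψ x = 𝓕 (damp ε fun t => 𝓕⁻ (duhamelHat m P f t) x) τ := by
    intro x
    have h := fourier_fourierInv_swap (hf.integrable_damp_duhamelHat hm hPc hε) τ x
    simp only [AdmissibleForcing.fourierInv_damp_section] at h
    exact h
  have hσ0 : σ ≠ 0 := by
    rintro rfl
    norm_num at hσ
  have hΨeq : ∀ η, Ψ η =
      (-I * σ) * (resolventSymbol b m (σ * (2 * π * τ)) (σ * ε) η * 𝓕 φ η) := by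
    intro η
    have hgc : Continuous fun s => 𝓕 (f s) η :=
      hf.continuous_fourier.comp (by fun_prop : Continuous fun s : ℝ => (s, η))
    have h1 : Ψ η = ((‖η‖ ^ (m - 1) : ℝ) : ℂ) *
        𝓕 (damp ε (duhamel (P η) fun s => 𝓕 (f s) η)) τ := by
      simp only [hΨ, Real.fourier_eq, duhamelHat, damp_apply]
      rw [← integral_const_mul]
      refine integral_congr_ae (.of_forall fun t => ?_)
      simp only [Circle.smul_def, smul_eq_mul]
      ring
    rw [h1, fourier_damp_duhamel hε hgc fun s => hf.fourier_norm_le s η, ← hφhat, resolventSymbol]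
    have hσc : (σ : ℂ) ^ 2 = 1 := by exact_mod_cast hσ
    have e : ((σ * (2 * π * τ) : ℝ) : ℂ) - ((b η ^ m : ℝ) : ℂ) - ((σ * ε : ℝ) : ℂ) * I =
        (-I * σ) * (ε + 2 * π * τ * I - I * (P η : ℝ)) := by
      simp only [hP]
      push_cast
      linear_combination (-((b η ^ m : ℝ) : ℂ) * I ^ 2) * hσc + ((σ : ℂ) * (2 * π * τ) -
        ((b η ^ m : ℝ) : ℂ)) * I_sq
    rw [e]
    have h2 : (σ : ℂ) ≠ 0 := by exact_mod_cast hσ0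
    have h3 : (ε + 2 * π * τ * I - I * (P η : ℝ) : ℂ) ≠ 0 := by
      intro h
      have := congrArg re h
      simp at this
      exact hε.ne' this
    field_simp
  have hdual := lintegral_fourierInv_le_of_forall_weightedL2 (δ := δ) (N := C * weightedNorm δ φ)
    hΨi (mul_nonneg hC (weightedNorm_nonneg _ _)) fun γ hγ => by
      have h := hres (σ * (2 * π * τ)) (σ * ε) (mul_ne_zero hσ0 hε.ne') φ γ hφw hγ
      have e : ∫ η, Ψ η * (starRingEnd ℂ) (𝓕 γ η) =
          (-I * σ) * resolventForm b m (σ * (2 * π * τ)) (σ * ε) φ γ := by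
        rw [resolventForm, ← integral_const_mul]
        refine integral_congr_ae (.of_forall fun η => ?_)
        simp only [hΨeq]
        ring
      have hn : ‖-I * (σ : ℂ)‖ = 1 := by
        rw [norm_mul, norm_neg, norm_I, one_mul, norm_real, norm_eq_abs, ← sq_eq_sq₀ (abs_nonneg σ)
          zero_le_one, sq_abs, hσ, one_pow]
      rw [e, norm_mul, hn, one_mul, mul_assoc C]
      exact h
  simp only [hΨinv] at hdual
  rwa [mul_pow, ENNReal.ofReal_mul (sq_nonneg C), ofReal_weightedNorm_sq hφw] at hdual

theorem ofReal_mul_norm_sq (c : ℝ) (z : ℂ) :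
    ENNReal.ofReal ((c * ‖z‖) ^ 2) = ENNReal.ofReal (c ^ 2) * ‖z‖ₑ ^ 2 := by
  rw [mul_pow, ENNReal.ofReal_mul (sq_nonneg c), ENNReal.ofReal_pow (norm_nonneg z), ofReal_norm]

/-- Plancherel's theorem in time for damped functions with spatial weights. -/
theorem lintegral_lintegral_fourier_damp {δ D ε : ℝ} (hε : 0 < ε) (hD : 0 ≤ D)
    {g : ℝ → V → ℂ} (hg : StronglyMeasurable (Function.uncurry g))
    (hgb : ∀ x : V, ∃ E, 0 ≤ E ∧ ∀ t, ‖g t x‖ ≤ D * |t| + E) :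
    ∫⁻ τ, ∫⁻ x, ENNReal.ofReal ((bracket x ^ δ * ‖𝓕 (damp ε fun t => g t x) τ‖) ^ 2) =
      ∫⁻ t, ∫⁻ x, ENNReal.ofReal ((bracket x ^ δ * ‖damp ε (fun t => g t x) t‖) ^ 2) := by
  have hbm : Measurable fun p : ℝ × V => bracket p.2 ^ δ :=
    (continuous_bracket_rpow δ).measurable.comp measurable_snd
  have hdm : StronglyMeasurable (Function.uncurry fun t x => damp ε (fun s => g s x) t) := by
    simp only [Function.uncurry_def, damp_apply]
    exact (((measurable_dampFactor ε).comp measurable_fst).complex_ofReal.stronglyMeasurable).mul hg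
  have h1 := (stronglyMeasurable_fourier_section hdm).measurable
  have h2 := (((hbm.mul h1.norm).pow_const 2).ennreal_ofReal.aemeasurable
    (μ := (volume : Measure ℝ).prod (volume : Measure V)))
  have h3 := (((hbm.mul hdm.measurable.norm).pow_const 2).ennreal_ofReal.aemeasurable
    (μ := (volume : Measure ℝ).prod (volume : Measure V)))
  refine (lintegral_lintegral_swap h2).trans (Eq.trans ?_ (lintegral_lintegral_swap h3).symm)
  · refine lintegral_congr fun x => ?_
    simp only [ofReal_mul_norm_sq]
    have hgx : StronglyMeasurable fun t => g t x :=
      hg.comp_measurable (by fun_prop : Measurable fun t : ℝ => (t, x))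
    obtain ⟨E, hE, hgE⟩ := hgb x
    rw [lintegral_const_mul', lintegral_const_mul', lintegral_fourier_damp hε hgx hD hE hgE] <;>
      exact ENNReal.ofReal_ne_top

/-- The smoothing estimate on the half line `t > 0`. -/
theorem exists_lintegral_Ioi_le {d : ℕ} (hd : 1 ≤ d)
    (hV : Module.finrank ℝ V = d + 1) {b : V → ℝ} (hb : EllipticSymbol b) {m δ : ℝ} (hm : 1 < m)
    (hδ : 1 / 2 < δ) :
    ∃ C, 0 ≤ C ∧ ∀ σ : ℝ, σ ^ 2 = 1 → ∀ (f : ℝ → V → ℂ) (A B : V → ℝ), AdmissibleForcing m δ f A B →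
      ∫⁻ t in Ioi (0 : ℝ), ∫⁻ x, ENNReal.ofReal ((bracket x ^ (-δ) *
        ‖𝓕⁻ (duhamelHat m (fun η => σ * b η ^ m) f t) x‖) ^ 2) ≤
        ENNReal.ofReal (C ^ 2) *
          ∫⁻ t in Ioi (0 : ℝ), ∫⁻ x, ENNReal.ofReal ((bracket x ^ δ * ‖f t x‖) ^ 2) := by
  obtain ⟨C, hC, hfreq⟩ := exists_lintegral_fourier_damp_le hd hV hb hm hδ
  refine ⟨C, hC, fun σ hσ f A B hf => ?_⟩
  set P : V → ℝ := fun η => σ * b η ^ m with hP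
  have hPc : Continuous P :=
    continuous_const.mul (hb.cont.rpow_const fun _ => .inr (by linarith))
  set u : ℝ → V → ℂ := fun t x => 𝓕⁻ (duhamelHat m P f t) x with hu
  have hum : StronglyMeasurable (Function.uncurry u) :=
    stronglyMeasurable_fourierInv_param (hf.continuous_duhamelHat hm hPc).stronglyMeasurable
  have hD : 0 ≤ ∫ η, ‖η‖ ^ (m - 1) * B η := integral_nonneg fun η =>
    mul_nonneg (by positivity) ((norm_nonneg _).trans (hf.fourier_norm_le 0 η))
  set J : ℝ → ENNReal := fun t => ∫⁻ x, ENNReal.ofReal ((bracket x ^ (-δ) * ‖u t x‖) ^ 2) with hJ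
  have hbm : Measurable fun p : ℝ × V => bracket p.2 ^ (-δ) :=
    (continuous_bracket_rpow (-δ)).measurable.comp measurable_snd
  have hJm : Measurable J :=
    Measurable.lintegral_prod_right
      (f := fun t x => ENNReal.ofReal ((bracket x ^ (-δ) * ‖u t x‖) ^ 2))
      ((hbm.mul hum.measurable.norm).pow_const 2).ennreal_ofReal
  have hdamp : ∀ (ε δ t : ℝ) (g : ℝ → V → ℂ), 0 < ε →
      ∫⁻ x, ENNReal.ofReal ((bracket x ^ δ * ‖damp ε (fun t => g t x) t‖) ^ 2) =
        ENNReal.ofReal (dampFactor ε t ^ 2) *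
          ∫⁻ x, ENNReal.ofReal ((bracket x ^ δ * ‖g t x‖) ^ 2) := by
    intro ε δ t g hε
    rw [← lintegral_const_mul' _ _ ENNReal.ofReal_ne_top]
    refine lintegral_congr fun x => ?_
    rw [damp_apply, norm_mul, norm_real, norm_of_nonneg (dampFactor_nonneg _ _),
      ← ENNReal.ofReal_mul (sq_nonneg _)]
    congr 1
    ring
  set A' := ENNReal.ofReal (C ^ 2) *
    ∫⁻ t in Ioi (0 : ℝ), ∫⁻ x, ENNReal.ofReal ((bracket x ^ δ * ‖f t x‖) ^ 2) with hA'
  have hε : ∀ ε, 0 < ε → ∫⁻ t in Ioi (0 : ℝ), ENNReal.ofReal (dampFactor ε t ^ 2) * J t ≤ A' := by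
    intro ε hε
    have h1 : ∫⁻ τ, ∫⁻ x, ENNReal.ofReal ((bracket x ^ (-δ) *
          ‖𝓕 (damp ε fun t => u t x) τ‖) ^ 2) ≤
        ENNReal.ofReal (C ^ 2) * ∫⁻ τ, ∫⁻ x, ENNReal.ofReal ((bracket x ^ δ *
          ‖𝓕 (damp ε fun t => f t x) τ‖) ^ 2) := by
      rw [← lintegral_const_mul' _ _ ENNReal.ofReal_ne_top]
      exact lintegral_mono fun τ => hfreq σ hσ f A B hf ε hε τ
    rw [lintegral_lintegral_fourier_damp hε hD hum fun x => ⟨0, le_rfl, fun t => by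
        rw [add_zero]; exact hf.norm_fourierInv_duhamelHat_le P t x⟩,
      lintegral_lintegral_fourier_damp hε le_rfl hf.cont.stronglyMeasurable fun x =>
        ⟨A x, (norm_nonneg _).trans (hf.norm_le 0 x), fun t => by
          rw [zero_mul, zero_add]; exact hf.norm_le t x⟩] at h1
    simp only [hdamp _ _ _ _ hε] at h1
    refine (setLIntegral_le_lintegral _ _).trans (h1.trans ?_)
    rw [hA']
    gcongr ENNReal.ofReal (C ^ 2) * ?_
    rw [← lintegral_indicator measurableSet_Ioi]
    refine lintegral_mono fun t => ?_
    by_cases ht : t ∈ Ioi (0 : ℝ)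
    · rw [indicator_of_mem ht]
      refine mul_le_of_le_one_left' ?_
      rw [ENNReal.ofReal_le_one]
      exact pow_le_one₀ (dampFactor_nonneg _ _) (dampFactor_le_one hε t)
    · rw [dampFactor_of_nonpos ε (by simpa using ht)]
      simp
  have hlim : Tendsto (fun k : ℕ => ∫⁻ t in Ioi (0 : ℝ),
      ENNReal.ofReal (dampFactor (1 / ((k : ℝ) + 1)) t ^ 2) * J t) atTop
      (nhds (∫⁻ t in Ioi (0 : ℝ), J t)) := by
    refine lintegral_tendsto_of_tendsto_of_monotone (fun k => ?_) ?_ ?_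
    · exact (((measurable_dampFactor _).pow_const 2).ennreal_ofReal.mul hJm).aemeasurable
    · refine (ae_restrict_iff' measurableSet_Ioi).2 (.of_forall fun t ht k l hkl => ?_)
      have ht0 : (0 : ℝ) < t := ht
      simp only [dampFactor_of_pos _ ht0]
      gcongr
    · refine (ae_restrict_iff' measurableSet_Ioi).2 (.of_forall fun t ht => ?_)
      have ht0 : (0 : ℝ) < t := ht
      simp only [dampFactor_of_pos _ ht0]
      have h1 : Tendsto (fun k : ℕ => rexp (-(1 / ((k : ℝ) + 1) * t)) ^ 2) atTop (nhds 1) := by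
        have h0 : Tendsto (fun k : ℕ => 1 / ((k : ℝ) + 1)) atTop (nhds 0) :=
          tendsto_one_div_add_atTop_nhds_zero_nat
        have h2 := (((Real.continuous_exp.tendsto _).comp (h0.mul_const t).neg).pow 2)
        simpa using h2
      have h2 := ENNReal.Tendsto.mul_const (b := J t) (ENNReal.tendsto_ofReal h1)
        (.inl (by simp))
      simpa using h2
  exact le_of_tendsto' hlim fun k => hε _ (by positivity)

end HalfLineEstimate

section SchwartzForcing

open Set FourierTransform

variable {V : Type*} [NormedAddCommGroup V] [InnerProductSpace ℝ V]

theorem norm_iteratedFDeriv_slice_le (f : SchwartzMap (ℝ × V) ℂ) (j : ℕ) (s : ℝ) (v : V) :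
    ‖iteratedFDeriv ℝ j (fun y => f (s, y)) v‖ ≤ ‖iteratedFDeriv ℝ j f (s, v)‖ := by
  have hcomp : (fun y => f (s, y)) =
      (fun z => f ((s, (0 : V)) + z)) ∘ ContinuousLinearMap.inr ℝ ℝ V := by
    ext y; simp
  have hsm : ContDiff ℝ j (fun z => f ((s, (0 : V)) + z)) :=
    (f.smooth j).comp (contDiff_const.add contDiff_id)
  rw [hcomp, ContinuousLinearMap.iteratedFDeriv_comp_right _ hsm _ le_rfl,
    iteratedFDeriv_comp_add_left]
  refine (ContinuousMultilinearMap.norm_compContinuousLinearMap_le _ _).trans ?_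
  have hinr : ‖ContinuousLinearMap.inr ℝ ℝ V‖ ≤ 1 :=
    ContinuousLinearMap.opNorm_le_bound _ zero_le_one fun y => by simp
  have hprod : ∏ _i : Fin j, ‖ContinuousLinearMap.inr ℝ ℝ V‖ ≤ 1 :=
    Finset.prod_le_one (fun _ _ => ContinuousLinearMap.opNorm_nonneg _) fun _ _ => hinr
  simpa using mul_le_mul_of_nonneg_left hprod (norm_nonneg (iteratedFDeriv ℝ j f (s, v)))

theorem exists_norm_iteratedFDeriv_slice_le (f : SchwartzMap (ℝ × V) ℂ) (N j : ℕ) :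
    ∃ K : ℝ, 0 ≤ K ∧ ∀ s v, ‖iteratedFDeriv ℝ j (fun y => f (s, y)) v‖ ≤
      K * (1 + ‖v‖) ^ (-(N : ℝ)) := by
  refine ⟨2 ^ N * (Finset.Iic (N, j)).sup (fun m => SchwartzMap.seminorm ℝ m.1 m.2) f,
    by positivity, fun s v => (norm_iteratedFDeriv_slice_le f j s v).trans ?_⟩
  have h := SchwartzMap.one_add_le_sup_seminorm_apply (𝕜 := ℝ) (m := (N, j)) le_rfl le_rfl f (s, v)
  have hv : (1 + ‖v‖) ^ N ≤ (1 + ‖(s, v)‖) ^ N := by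
    gcongr
    exact le_max_right _ _
  have hpos : 0 < (1 + ‖v‖) ^ N := by positivity
  rw [Real.rpow_neg (by positivity), Real.rpow_natCast, ← div_eq_mul_inv, le_div_iff₀ hpos,
    mul_comm]
  exact (mul_le_mul_of_nonneg_right hv (norm_nonneg _)).trans h

theorem bracket_le_one_add_norm {W : Type*} [NormedAddCommGroup W] (x : W) :
    bracket x ≤ 1 + ‖x‖ := by
  rw [bracket, Real.sqrt_le_left (by positivity)]
  nlinarith [norm_nonneg x]

variable [FiniteDimensional ℝ V] [MeasurableSpace V] [BorelSpace V]

theorem exists_norm_fourier_slice_le (f : SchwartzMap (ℝ × V) ℂ) (N : ℕ) :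
    ∃ K : ℝ, 0 ≤ K ∧ ∀ s η, ‖𝓕 (fun y => f (s, y)) η‖ ≤ K * (1 + ‖η‖) ^ (-(N : ℝ)) := by
  set r : ℕ := Module.finrank ℝ V + 1 with hr
  have hInt : Integrable fun v : V => (1 + ‖v‖) ^ (-(r : ℝ)) :=
    integrable_one_add_norm (by rw [hr]; exact_mod_cast Nat.lt_succ_self _)
  have hsm : ∀ s, ContDiff ℝ (⊤ : ℕ∞) fun y => f (s, y) := fun s =>
    f.smooth'.comp (contDiff_const.prodMk contDiff_id)
  choose K hK hKle using exists_norm_iteratedFDeriv_slice_le f r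
  have hbound : ∀ k i s, k ≤ 0 → Integrable fun v =>
      ‖v‖ ^ k * ‖iteratedFDeriv ℝ i (fun y => f (s, y)) v‖ := by
    intro k i s hk
    obtain rfl : k = 0 := by omega
    have hc : Continuous (iteratedFDeriv ℝ i (fun y => f (s, y))) :=
      (hsm s).continuous_iteratedFDeriv (by exact_mod_cast le_top)
    refine (hInt.const_mul (K i)).mono' (by fun_prop) (.of_forall fun v => ?_)
    simpa using hKle i s v
  set S : ℝ := ∫ v : V, (1 + ‖v‖) ^ (-(r : ℝ)) with hS
  have hS0 : 0 ≤ S := integral_nonneg fun v => by positivity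
  have hj : ∀ j : ℕ, ∀ s η, ‖η‖ ^ j * ‖𝓕 (fun y => f (s, y)) η‖ ≤
      2 ^ j * ∑ i ∈ Finset.range (j + 1), K i * S := by
    intro j s η
    have h := Real.pow_mul_norm_iteratedFDeriv_fourier_le (K := 0) (N := (⊤ : ℕ∞))
      (f := fun y => f (s, y)) (hsm s)
      (fun k i hk _ => hbound k i s (by exact_mod_cast hk)) (k := 0) (n := j) le_rfl le_top η
    simp only [norm_iteratedFDeriv_zero, pow_zero, one_mul, Nat.cast_zero, mul_zero, zero_add] at h
    refine h.trans ?_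
    rw [Finset.sum_product]
    simp only [Finset.range_one, Finset.sum_singleton, pow_zero, one_mul]
    refine mul_le_mul_of_nonneg_left (Finset.sum_le_sum fun i _ => ?_) (by positivity)
    rw [hS, ← integral_const_mul]
    exact integral_mono (by simpa using hbound 0 i s le_rfl) (hInt.const_mul _) (hKle i s)
  have hsum : ∀ j, 0 ≤ ∑ i ∈ Finset.range (j + 1), K i * S := fun j =>
    Finset.sum_nonneg fun i _ => mul_nonneg (hK i) hS0
  refine ⟨2 ^ (N - 1) * (2 ^ 0 * ∑ i ∈ Finset.range (0 + 1), K i * S +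
    2 ^ N * ∑ i ∈ Finset.range (N + 1), K i * S), ?_, fun s η => ?_⟩
  · have := hsum 0
    have := hsum N
    positivity
  have hpos : 0 < (1 + ‖η‖) ^ N := by positivity
  rw [Real.rpow_neg (by positivity), Real.rpow_natCast, ← div_eq_mul_inv, le_div_iff₀ hpos]
  have h0 := hj 0 s η
  have hN := hj N s η
  have hadd := add_pow_le zero_le_one (norm_nonneg η) N
  calc ‖𝓕 (fun y => f (s, y)) η‖ * (1 + ‖η‖) ^ N
      ≤ ‖𝓕 (fun y => f (s, y)) η‖ * (2 ^ (N - 1) * (1 ^ N + ‖η‖ ^ N)) := by gcongr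
    _ = 2 ^ (N - 1) * (‖η‖ ^ 0 * ‖𝓕 (fun y => f (s, y)) η‖ +
          ‖η‖ ^ N * ‖𝓕 (fun y => f (s, y)) η‖) := by simp only [one_pow, pow_zero]; ring
    _ ≤ _ := by
      refine mul_le_mul_of_nonneg_left (add_le_add h0 hN) (by positivity)

theorem SchwartzMap.exists_admissibleForcing (f : SchwartzMap (ℝ × V) ℂ) {m δ : ℝ} (hm : 1 < m)
    (hδ : 0 < δ) : ∃ A B : V → ℝ, AdmissibleForcing m δ (fun s y => f (s, y)) A B := by
  obtain ⟨N, hN⟩ := exists_nat_gt (Module.finrank ℝ V + δ + m)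
  have hfin : (0 : ℝ) ≤ Module.finrank ℝ V := by positivity
  obtain ⟨K, hK, hKle⟩ := exists_norm_iteratedFDeriv_slice_le f N 0
  obtain ⟨L, hL, hLle⟩ := exists_norm_fourier_slice_le f N
  have hcont : ∀ r : ℝ, Continuous fun x : V => (1 + ‖x‖) ^ r := fun r =>
    (continuous_const.add continuous_norm).rpow_const fun x =>
      Or.inl (add_pos_of_pos_of_nonneg one_pos (norm_nonneg x)).ne'
  have hInt : Integrable fun x : V => (1 + ‖x‖) ^ (-(N : ℝ)) :=
    integrable_one_add_norm (by linarith)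
  refine ⟨fun x => K * (1 + ‖x‖) ^ (-(N : ℝ)), fun x => L * (1 + ‖x‖) ^ (-(N : ℝ)), ?_, ?_,
    hInt.const_mul K, ?_, hLle, hInt.const_mul L, ?_⟩
  · exact f.continuous
  · intro s x
    simpa using hKle s x
  · have hi : Integrable fun x : V => K ^ 2 * (1 + ‖x‖) ^ (-(2 * (N : ℝ) - 2 * δ)) :=
      (integrable_one_add_norm (by linarith)).const_mul _
    refine hi.mono' (((continuous_bracket_rpow δ).mul
      ((hcont _).const_mul K)).pow 2).aestronglyMeasurable (.of_forall fun x => ?_)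
    have hx : 0 < 1 + ‖x‖ := by positivity
    rw [Real.norm_of_nonneg (sq_nonneg _)]
    have hb : bracket x ^ δ ≤ (1 + ‖x‖) ^ δ :=
      Real.rpow_le_rpow (bracket_pos x).le (bracket_le_one_add_norm x) hδ.le
    have hb0 : 0 ≤ bracket x ^ δ := Real.rpow_nonneg (bracket_pos x).le _
    have heq : (1 + ‖x‖) ^ (-(2 * (N : ℝ) - 2 * δ)) =
        ((1 + ‖x‖) ^ δ * (1 + ‖x‖) ^ (-(N : ℝ))) ^ 2 := by
      rw [← Real.rpow_add hx, ← Real.rpow_natCast, ← Real.rpow_mul hx.le]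
      congr 1
      push_cast
      ring
    rw [heq, ← mul_pow]
    have h1 : bracket x ^ δ * (K * (1 + ‖x‖) ^ (-(N : ℝ))) ≤
        K * ((1 + ‖x‖) ^ δ * (1 + ‖x‖) ^ (-(N : ℝ))) := by
      have := mul_le_mul_of_nonneg_right hb
        (mul_nonneg hK (Real.rpow_nonneg hx.le (-(N : ℝ))))
      linarith
    exact pow_le_pow_left₀ (mul_nonneg hb0 (mul_nonneg hK (Real.rpow_nonneg hx.le _))) h1 2
  · have hi : Integrable fun x : V => L * (1 + ‖x‖) ^ (-((N : ℝ) - (m - 1))) :=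
      (integrable_one_add_norm (by linarith)).const_mul _
    refine hi.mono' ((continuous_norm.rpow_const fun x => Or.inr (by linarith)).mul
      ((hcont _).const_mul L)).aestronglyMeasurable (.of_forall fun x => ?_)
    have hx : 0 < 1 + ‖x‖ := by positivity
    rw [Real.norm_of_nonneg (by positivity), neg_sub, sub_eq_add_neg (m - 1),
      Real.rpow_add hx]
    have hb : ‖x‖ ^ (m - 1) ≤ (1 + ‖x‖) ^ (m - 1) :=
      Real.rpow_le_rpow (norm_nonneg x) (by linarith) (by linarith)
    have := mul_le_mul_of_nonneg_right hb (mul_nonneg hL (Real.rpow_nonneg hx.le (-(N : ℝ))))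
    linarith

theorem AdmissibleForcing.comp_neg {m δ : ℝ} {f : ℝ → V → ℂ} {A B : V → ℝ}
    (h : AdmissibleForcing m δ f A B) : AdmissibleForcing m δ (fun s => f (-s)) A B where
  cont := h.cont.comp ((continuous_fst.neg).prodMk continuous_snd)
  norm_le s := h.norm_le (-s)
  integrable := h.integrable
  weighted := h.weighted
  fourier_norm_le s := h.fourier_norm_le (-s)
  fourier_integrable := h.fourier_integrable
  fourier_weighted := h.fourier_weighted

end SchwartzForcing

section WholeLine

open Set FourierTransform

variable {V : Type*} [NormedAddCommGroup V] [InnerProductSpace ℝ V] [FiniteDimensional ℝ V]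
  [MeasurableSpace V] [BorelSpace V] {m δ : ℝ} {f : ℝ → V → ℂ} {A B : V → ℝ}

/-- The Duhamel integral of the propagator is the inverse Fourier transform of the pointwise
Duhamel integral on the frequency side. -/
theorem AdmissibleForcing.intervalIntegral_fourierInv (hf : AdmissibleForcing m δ f A B)
    {P : V → ℝ} (hP : Continuous P) (t : ℝ) (y : V) :
    (∫ s in (0 : ℝ)..t,
        𝓕⁻ (fun η => cexp (I * ((t - s : ℝ) : ℂ) * (P η : ℂ)) * 𝓕 (f s) η) y) =
      𝓕⁻ (fun η => duhamel (P η) (fun s => 𝓕 (f s) η) t) y := by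
  have hc := Real.continuous_fourierChar
  have h1 := hf.continuous_fourier
  simp only [Real.fourierInv_eq]
  rw [intervalIntegral_integral_swap]
  · refine integral_congr_ae (.of_forall fun η => ?_)
    change (∫ s in (0 : ℝ)..t, 𝐞 ⟪η, y⟫ •
      (cexp (I * ((t - s : ℝ) : ℂ) * (P η : ℂ)) * 𝓕 (f s) η)) = _
    simp only [duhamel, Circle.smul_def]
    exact intervalIntegral.integral_smul _ _
  · have hfin : IsFiniteMeasure (volume.restrict (uIoc 0 t)) := ⟨by simp [uIoc]⟩
    have hB : Integrable (fun p : ℝ × V => (1 : ℝ) * B p.2)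
        ((volume.restrict (uIoc 0 t)).prod volume) :=
      (integrable_const (1 : ℝ)).mul_prod hf.fourier_integrable
    refine hB.mono' (Continuous.aestronglyMeasurable ?_) (.of_forall fun p => ?_)
    · simp only [Function.uncurry_def, Circle.smul_def]
      fun_prop
    · simp only [Function.uncurry_def, Circle.norm_smul, norm_mul, one_mul]
      have : ‖cexp (I * ((t - p.1 : ℝ) : ℂ) * (P p.2 : ℂ))‖ = 1 := by
        rw [mul_assoc, ← ofReal_mul, mul_comm, norm_exp_ofReal_mul_I]
      rw [this, one_mul]
      exact hf.fourier_norm_le _ _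

/-- Applying `|D|^(m-1)` to the Duhamel integral never exceeds its frequency-side counterpart;
when the Duhamel integral fails to be integrable, its Fourier integral is zero by convention. -/
theorem AdmissibleForcing.norm_fourierInv_mul_fourier_le (hf : AdmissibleForcing m δ f A B)
    {P : V → ℝ} (hP : Continuous P) (t : ℝ) (x : V) :
    ‖𝓕⁻ (fun η => ((‖η‖ ^ (m - 1) : ℝ) : ℂ) *
        𝓕 (fun y => 𝓕⁻ (fun η => duhamel (P η) (fun s => 𝓕 (f s) η) t) y) η) x‖ ≤
      ‖𝓕⁻ (duhamelHat m P f t) x‖ := by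
  set k : V → ℂ := fun η => duhamel (P η) (fun s => 𝓕 (f s) η) t with hk
  have hkc : Continuous k :=
    (hf.continuous_duhamel hP).comp (by fun_prop : Continuous fun η : V => (t, η))
  have hki : Integrable k :=
    (hf.fourier_integrable.mul_const |t|).mono' hkc.aestronglyMeasurable
      (.of_forall fun η => norm_duhamel_le (fun s => hf.fourier_norm_le s η) t)
  change ‖𝓕⁻ (fun η => ((‖η‖ ^ (m - 1) : ℝ) : ℂ) * 𝓕 (𝓕⁻ k) η) x‖ ≤ _
  by_cases hi : Integrable (𝓕⁻ k)
  · have hi' : Integrable (𝓕 k) := by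
      have := hi.comp_neg
      refine this.congr (.of_forall fun η => ?_)
      change 𝓕⁻ k (-η) = 𝓕 k η
      rw [Real.fourierInv_eq_fourier_neg, neg_neg]
    rw [hkc.fourier_fourierInv_eq hki hi']
    rfl
  · have hz : ∀ η, 𝓕 (𝓕⁻ k) η = 0 := by
      intro η
      rw [Real.fourier_eq]
      refine integral_undef fun h => hi ?_
      exact (Real.fourierIntegral_convergent_iff η).1 h
    have hz' : 𝓕⁻ (fun η => ((‖η‖ ^ (m - 1) : ℝ) : ℂ) * 𝓕 (𝓕⁻ k) η) x = 0 := by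
      simp [hz, Real.fourierInv_eq]
    rw [hz', norm_zero]
    exact norm_nonneg _

theorem duhamel_neg_time (p : ℝ) (g : ℝ → ℂ) (t : ℝ) :
    duhamel p g (-t) = -duhamel (-p) (fun s => g (-s)) t := by
  have h := intervalIntegral.integral_comp_neg (a := 0) (b := t)
    (f := fun s => cexp (I * ((-t - s : ℝ) : ℂ) * (p : ℂ)) * g s)
  rw [duhamel, duhamel, intervalIntegral.integral_symm, ← neg_zero, ← h, neg_zero]
  congr 2
  ext s
  push_cast
  ring_nf

theorem norm_fourierInv_duhamelHat_neg_time (P : V → ℝ) (f : ℝ → V → ℂ) (t : ℝ) (x : V) :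
    ‖𝓕⁻ (duhamelHat m P f (-t)) x‖ =
      ‖𝓕⁻ (duhamelHat m (fun η => -P η) (fun s => f (-s)) t) x‖ := by
  have h : duhamelHat m P f (-t) = fun η =>
      -duhamelHat m (fun η => -P η) (fun s => f (-s)) t η := by
    ext η
    rw [duhamelHat, duhamelHat, duhamel_neg_time, mul_neg]
  rw [h, Real.fourierInv_eq, Real.fourierInv_eq, ← norm_neg, ← integral_neg]
  simp

theorem lintegral_eq_Ioi_add_comp_neg (F : ℝ → ENNReal) :
    ∫⁻ t, F t = (∫⁻ t in Ioi 0, F t) + ∫⁻ t in Ioi 0, F (-t) := by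
  have h1 : ∫⁻ t in Ioi (0 : ℝ), F (-t) = ∫⁻ t in Iio 0, F t := by
    have := (Measure.measurePreserving_neg (volume : Measure ℝ)).setLIntegral_comp_preimage_emb
      (MeasurableEquiv.neg ℝ).measurableEmbedding F (Iio 0)
    simpa using this
  rw [h1, ← lintegral_add_compl F (measurableSet_Ioi (a := (0 : ℝ))), compl_Ioi,
    setLIntegral_congr (Iio_ae_eq_Iic (a := (0 : ℝ)))]

theorem exists_lintegral_le {d : ℕ} {b : V → ℝ} (hd : 1 ≤ d) (hV : Module.finrank ℝ V = d + 1)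
    (hb : EllipticSymbol b) (hm : 1 < m) (hδ : 1 / 2 < δ) :
    ∃ C : ℝ, 0 ≤ C ∧ ∀ (f : ℝ → V → ℂ) (A B : V → ℝ), AdmissibleForcing m δ f A B →
      ∫⁻ t, ∫⁻ x, ENNReal.ofReal
          ((bracket x ^ (-δ) * ‖𝓕⁻ (duhamelHat m (fun η => b η ^ m) f t) x‖) ^ 2) ≤
        ENNReal.ofReal (C ^ 2) * ∫⁻ t, ∫⁻ x, ENNReal.ofReal ((bracket x ^ δ * ‖f t x‖) ^ 2) := by
  obtain ⟨C, hC, h⟩ := exists_lintegral_Ioi_le (V := V) hd hV hb hm hδ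
  refine ⟨C, hC, fun f A B hf => ?_⟩
  have hpos := h 1 (by norm_num) f A B hf
  have hneg := h (-1) (by norm_num) _ A B hf.comp_neg
  simp only [one_mul, neg_one_mul] at hpos hneg
  rw [lintegral_eq_Ioi_add_comp_neg,
    lintegral_eq_Ioi_add_comp_neg fun t => ∫⁻ x, ENNReal.ofReal ((bracket x ^ δ * ‖f t x‖) ^ 2),
    mul_add]
  refine add_le_add hpos ?_
  simpa only [norm_fourierInv_duhamelHat_neg_time] using hneg

end WholeLine

section Normalization

open FourierTransform

theorem FT_two_pi_smul (n : ℕ) (f : EuclideanSpace ℝ (Fin n) → ℂ) (η : EuclideanSpace ℝ (Fin n)) :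
    FT n f ((2 * π) • η) = ((2 * π) ^ (-(n : ℝ) / 2) : ℝ) • 𝓕 f η := by
  rw [FT, Real.fourier_eq']
  congr 2
  ext x
  rw [real_inner_smul_right, smul_eq_mul]
  congr 2
  push_cast
  ring

theorem IFT_eq_fourierInv (n : ℕ) (F : EuclideanSpace ℝ (Fin n) → ℂ)
    (x : EuclideanSpace ℝ (Fin n)) :
    IFT n F x = ((2 * π) ^ ((n : ℝ) / 2) : ℝ) • 𝓕⁻ (fun η => F ((2 * π) • η)) x := by
  have hpi : (0 : ℝ) < 2 * π := by positivity
  have h := Measure.integral_comp_smul (volume : Measure (EuclideanSpace ℝ (Fin n)))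
    (fun ξ => cexp (I * ((⟪x, ξ⟫ : ℝ) : ℂ)) * F ξ) (2 * π)
  rw [finrank_euclideanSpace_fin, abs_of_pos (by positivity)] at h
  have h2 : 𝓕⁻ (fun η => F ((2 * π) • η)) x =
      ∫ η, cexp (I * ((⟪x, (2 * π) • η⟫ : ℝ) : ℂ)) * F ((2 * π) • η) := by
    rw [Real.fourierInv_eq']
    congr 1
    ext η
    rw [real_inner_smul_right, real_inner_comm, smul_eq_mul]
    congr 2
    push_cast
    ring
  rw [h2, h, IFT, smul_smul]
  congr 1
  rw [← Real.rpow_natCast, ← Real.rpow_neg hpi.le, ← Real.rpow_add hpi]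
  congr 1
  ring

theorem mult_eq_fourierInv (n : ℕ) (q f : EuclideanSpace ℝ (Fin n) → ℂ)
    (x : EuclideanSpace ℝ (Fin n)) :
    mult n q f x = 𝓕⁻ (fun η => q ((2 * π) • η) * 𝓕 f η) x := by
  have hpi : (0 : ℝ) < 2 * π := by positivity
  have h : ∀ η, q ((2 * π) • η) * FT n f ((2 * π) • η) =
      ((2 * π) ^ (-(n : ℝ) / 2) : ℝ) • (q ((2 * π) • η) * 𝓕 f η) := fun η => by
    rw [FT_two_pi_smul, mul_smul_comm]
  rw [mult, IFT_eq_fourierInv]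
  simp only [h]
  rw [Real.fourierInv_eq, Real.fourierInv_eq, ← integral_smul]
  congr 1
  ext η
  rw [smul_comm (𝐞 _), smul_smul, ← Real.rpow_add hpi]
  ring_nf
  simp

end Normalization

section DuhamelMultiplier

open FourierTransform

variable {n : ℕ} {a : EuclideanSpace ℝ (Fin n) → ℝ}

theorem mult_norm_rpow_duhamel_le {m δ : ℝ} {A B : EuclideanSpace ℝ (Fin n) → ℝ}
    {f : ℝ → EuclideanSpace ℝ (Fin n) → ℂ} (ha : Continuous a) (hm : 1 < m)
    (hf : AdmissibleForcing m δ f A B) (t : ℝ) (x : EuclideanSpace ℝ (Fin n)) :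
    ‖mult n (fun ξ => ((‖ξ‖ ^ (m - 1) : ℝ) : ℂ))
        (fun y => ∫ s in (0 : ℝ)..t,
          mult n (fun ξ => cexp (I * ((t - s : ℝ) : ℂ) * ((a ξ ^ m : ℝ) : ℂ))) (f s) y) x‖ ≤
      (2 * π) ^ (m - 1) * ‖𝓕⁻ (duhamelHat m (fun η => a ((2 * π) • η) ^ m) f t) x‖ := by
  have hpi : (0 : ℝ) < 2 * π := by positivity
  have hP : Continuous fun η => a ((2 * π) • η) ^ m :=
    (ha.comp (continuous_const_smul _)).rpow_const fun _ => .inr (by linarith)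
  have hin : (fun y => ∫ s in (0 : ℝ)..t,
      mult n (fun ξ => cexp (I * ((t - s : ℝ) : ℂ) * ((a ξ ^ m : ℝ) : ℂ))) (f s) y) =
      fun y => 𝓕⁻ (fun η => duhamel (a ((2 * π) • η) ^ m) (fun s => 𝓕 (f s) η) t) y := by
    ext y
    simp only [mult_eq_fourierInv]
    exact hf.intervalIntegral_fourierInv hP t y
  rw [hin, mult_eq_fourierInv]
  have hnorm := hf.norm_fourierInv_mul_fourier_le hP t x
  refine le_trans (le_of_eq ?_) (mul_le_mul_of_nonneg_left hnorm (by positivity))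
  rw [← Real.norm_of_nonneg (by positivity : (0 : ℝ) ≤ (2 * π) ^ (m - 1)), ← norm_smul,
    Real.fourierInv_eq, Real.fourierInv_eq, ← integral_smul]
  congr 2
  ext η
  rw [norm_smul, Real.norm_of_nonneg hpi.le, Real.mul_rpow hpi.le (norm_nonneg _),
    smul_comm _ (𝐞 _), real_smul]
  push_cast
  ring_nf

end DuhamelMultiplier

open FourierTransform

theorem eLpNorm_two_eq_lintegral {V : Type*} [NormedAddCommGroup V] [InnerProductSpace ℝ V]
    [FiniteDimensional ℝ V] [MeasurableSpace V] [BorelSpace V] {g : ℝ × V → ℝ}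
    (hg : Measurable g) (hg0 : ∀ p, 0 ≤ g p) :
    eLpNorm g 2 volume = (∫⁻ t, ∫⁻ x, ENNReal.ofReal (g (t, x) ^ 2)) ^ (1 / 2 : ℝ) := by
  rw [eLpNorm_eq_lintegral_rpow_enorm_toReal (by norm_num) (by norm_num), Measure.volume_eq_prod,
    lintegral_prod _ (by fun_prop)]
  norm_num
  congr 1
  refine lintegral_congr fun t => lintegral_congr fun x => ?_
  rw [Real.enorm_of_nonneg (hg0 _), ENNReal.ofReal_pow (hg0 _)]

theorem smoothing_type_I_inhomogeneous (n : ℕ) (hn : 2 ≤ n) (m : ℝ) (hm : 1 < m)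
    (δ : ℝ) (hδ : 1 / 2 < δ)
    (a : EuclideanSpace ℝ (Fin n) → ℝ)
    (ha_cont : Continuous a)
    (ha_smooth : ContDiffOn ℝ (⊤ : ℕ∞) a {(0 : EuclideanSpace ℝ (Fin n))}ᶜ)
    (ha_hom : ∀ t : ℝ, 0 < t → ∀ ξ, a (t • ξ) = t * a ξ)
    (ha_pos : ∀ ξ : EuclideanSpace ℝ (Fin n), ξ ≠ 0 → 0 < a ξ) :
    ∃ C > 0, ∀ f : SchwartzMap (ℝ × EuclideanSpace ℝ (Fin n)) ℂ,
      eLpNorm (fun tx : ℝ × EuclideanSpace ℝ (Fin n) =>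
          ((Real.sqrt (1 + ‖tx.2‖ ^ 2) ^ (-δ) : ℝ) : ℂ) *
            mult n (fun ξ => ((‖ξ‖ ^ (m - 1) : ℝ) : ℂ))
              (fun y => ∫ s in (0 : ℝ)..tx.1,
                mult n (fun ξ => Complex.exp (Complex.I * ((tx.1 - s : ℝ) : ℂ) *
                    ((a ξ ^ m : ℝ) : ℂ)))
                  (fun y' => f (s, y')) y) tx.2) 2 volume
        ≤ ENNReal.ofReal C *
            eLpNorm (fun tx : ℝ × EuclideanSpace ℝ (Fin n) =>
              ((Real.sqrt (1 + ‖tx.2‖ ^ 2) ^ (δ) : ℝ) : ℂ) * f tx) 2 volume := by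
  have hpi : (0 : ℝ) < 2 * π := by positivity
  have hb : EllipticSymbol fun η => a ((2 * π) • η) :=
    ⟨ha_cont.comp (continuous_const_smul _),
      fun t ht η => by rw [smul_comm, ha_hom t ht],
      fun η hη => ha_pos _ (smul_ne_zero hpi.ne' hη)⟩
  obtain ⟨C, hC, h⟩ := exists_lintegral_le (d := n - 1) (by omega)
    (by rw [finrank_euclideanSpace_fin]; omega) hb hm hδ
  refine ⟨(2 * π) ^ (m - 1) * C + 1, by positivity, fun f => ?_⟩
  obtain ⟨A, B, hf⟩ := f.exists_admissibleForcing (m := m) (δ := δ) hm (by linarith)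
  have hP : Continuous fun η => a ((2 * π) • η) ^ m :=
    hb.cont.rpow_const fun _ => .inr (by linarith)
  set u : ℝ × EuclideanSpace ℝ (Fin n) → ℝ := fun p =>
    bracket p.2 ^ (-δ) * ‖𝓕⁻ (duhamelHat m (fun η => a ((2 * π) • η) ^ m)
      (fun s y => f (s, y)) p.1) p.2‖ with hu
  set w : ℝ × EuclideanSpace ℝ (Fin n) → ℝ := fun p => bracket p.2 ^ δ * ‖f p‖ with hw
  have hbr : ∀ (r : ℝ) (x : EuclideanSpace ℝ (Fin n)), 0 ≤ bracket x ^ r := fun r x =>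
    Real.rpow_nonneg (bracket_pos x).le r
  have hum : Measurable u :=
    ((continuous_bracket_rpow (-δ)).measurable.comp measurable_snd).mul
      (stronglyMeasurable_fourierInv_param
        (hf.continuous_duhamelHat hm hP).stronglyMeasurable).measurable.norm
  have hwm : Measurable w :=
    ((continuous_bracket_rpow δ).measurable.comp measurable_snd).mul f.continuous.measurable.norm
  have huw : eLpNorm u 2 volume ≤ ENNReal.ofReal C * eLpNorm w 2 volume := by
    rw [eLpNorm_two_eq_lintegral hum fun p => mul_nonneg (hbr _ _) (norm_nonneg _),
      eLpNorm_two_eq_lintegral hwm fun p => mul_nonneg (hbr _ _) (norm_nonneg _)]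
    refine (ENNReal.rpow_le_rpow (h _ A B hf) (by norm_num)).trans (le_of_eq ?_)
    rw [ENNReal.mul_rpow_of_nonneg _ _ (by norm_num : (0 : ℝ) ≤ 1 / 2),
      ENNReal.ofReal_rpow_of_nonneg (sq_nonneg C) (by norm_num), ← Real.sqrt_eq_rpow,
      Real.sqrt_sq hC]
  have hright : eLpNorm (fun tx : ℝ × EuclideanSpace ℝ (Fin n) =>
      ((Real.sqrt (1 + ‖tx.2‖ ^ 2) ^ (δ) : ℝ) : ℂ) * f tx) 2 volume = eLpNorm w 2 volume := by
    refine eLpNorm_congr_norm_ae (.of_forall fun p => ?_)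
    rw [norm_mul, norm_real,
      Real.norm_of_nonneg (show 0 ≤ √(1 + ‖p.2‖ ^ 2) ^ δ from hbr δ p.2), hw,
      Real.norm_of_nonneg (mul_nonneg (hbr δ p.2) (norm_nonneg _))]
    rfl
  rw [hright]
  refine (eLpNorm_le_mul_eLpNorm_of_ae_le_mul (g := u) (c := (2 * π) ^ (m - 1))
    (.of_forall fun p => ?_) 2).trans ?_
  · rw [norm_mul, norm_real,
      Real.norm_of_nonneg (show 0 ≤ √(1 + ‖p.2‖ ^ 2) ^ (-δ) from hbr (-δ) p.2), hu,
      Real.norm_of_nonneg (mul_nonneg (hbr (-δ) p.2) (norm_nonneg _))]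
    have := mul_le_mul_of_nonneg_left
      (mult_norm_rpow_duhamel_le ha_cont hm hf p.1 p.2) (hbr (-δ) p.2)
    refine this.trans (le_of_eq (by ring))
  · refine (mul_le_mul_right huw _).trans ?_
    rw [← mul_assoc, ← ENNReal.ofReal_mul (by positivity)]
    gcongr
    linarith
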